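/- Let n → ∞ through odd integers, let d = d(n) be even with 4 ≤ d ≤ (log n)², let k = ⌊d/4⌋, and fix ε ∈ (0,1). Then with high probability, the d-regular graph L underlying G''(n-1,d) has the following property: for at least (1-ε)n vertices r of L, there are at least (1-ε)·(nd/2)^{d/2}/(d/2)! induced d-matchings M of L such that L admits k strong independent spanning trees rooted at r with respect to M. -/

import Mathlib

/-- `M` is an ordered `d`-tuple of pairwise edge-disjoint perfect matchings of `K_n`
(each matching being viewed as a 1-regular simple graph on `[n]`). -/
def IsPMTuple {n d : ℕ} (M : Fin d → SimpleGraph (Fin n)) : Prop :=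
  (∀ i, ∀ v, Nat.card ((M i).neighborSet v) = 1) ∧
  ∀ i j, i ≠ j → Disjoint (M i) (M j)

open Classical in
/-- Probability that `G''(n,d)`, the uniformly random ordered `d`-tuple of pairwise
edge-disjoint perfect matchings of `K_n`, satisfies the property `A`. -/
noncomputable def tupleProb (n d : ℕ) (A : (Fin d → SimpleGraph (Fin n)) → Prop) : ℝ :=
  ((Finset.univ.filter (fun M : Fin d → SimpleGraph (Fin n) =>
      IsPMTuple M ∧ A M)).card : ℝ) /
  ((Finset.univ.filter (fun M : Fin d → SimpleGraph (Fin n) => IsPMTuple M)).card : ℝ)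

open Filter

/-- The spanning trees `T 0, …, T (t-1)` of `G` are independent spanning trees rooted at `r`:
each `T i` is a spanning tree of `G` (a tree on the whole vertex set, all of whose edges lie
in `G`), and for every vertex `v ≠ r`, the paths from `v` to `r` in any two distinct trees
share only the vertices `v` and `r`. -/
def IsIST {n : ℕ} (G : SimpleGraph (Fin n)) (r : Fin n) {t : ℕ}
    (T : Fin t → SimpleGraph (Fin n)) : Prop :=
  (∀ i, T i ≤ G ∧ (T i).IsTree) ∧
  ∀ v : Fin n, v ≠ r → ∀ i j : Fin t, i ≠ j →
    ∀ p : (T i).Walk v r, ∀ q : (T j).Walk v r, p.IsPath → q.IsPath →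
      ∀ x : Fin n, x ∈ p.support → x ∈ q.support → x = v ∨ x = r

/-- `G` contains (at least) `t` independent spanning trees rooted at `r`. -/
def HasISTs {n : ℕ} (G : SimpleGraph (Fin n)) (r : Fin n) (t : ℕ) : Prop :=
  ∃ T : Fin t → SimpleGraph (Fin n), IsIST G r T


/-- `M` is an induced `d`-matching of `L`: a subgraph of `L` in which every vertex has at
most one neighbour, consisting of `d/2` edges (hence spanning `d` vertices), and such
that the subgraph of `L` induced on the spanned vertices consists exactly of these
edges. -/
def IsInducedMatching {n : ℕ} (L M : SimpleGraph (Fin n)) (d : ℕ) : Prop :=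
  M ≤ L ∧
  (∀ v w x : Fin n, M.Adj v w → M.Adj v x → w = x) ∧
  Nat.card M.edgeSet = d / 2 ∧
  (∀ u v : Fin n, u ∈ M.support → v ∈ M.support → L.Adj u v → M.Adj u v)

/-- `L` admits `t` strong independent spanning trees rooted at `r` with respect to the
induced matching `M`: there are ISTs `T_1,…,T_t` of `L` rooted at `r` such that (P1) no
edge of any `T_i` lies in `M`, and (P2) for all distinct `i, j` and all `u, v ∈ V(M)`,
the paths from `u` to `r` in `T_i` and from `v` to `r` in `T_j` intersect exactly in
`{u, r}` if `u = v`, and exactly in `{r}` if `u ≠ v`. -/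
def HasStrongISTs {n : ℕ} (L M : SimpleGraph (Fin n)) (r : Fin n) (t : ℕ) : Prop :=
  ∃ T : Fin t → SimpleGraph (Fin n),
    IsIST L r T ∧
    (∀ i, Disjoint (T i) M) ∧
    (∀ i j : Fin t, i ≠ j → ∀ u v : Fin n, u ∈ M.support → v ∈ M.support →
      ∀ p : (T i).Walk u r, ∀ q : (T j).Walk v r, p.IsPath → q.IsPath →
        {x : Fin n | x ∈ p.support ∧ x ∈ q.support} =
          (if u = v then ({u, r} : Set (Fin n)) else {r}))



namespace STI
open List

section Words
variable {α : Type*} [DecidableEq α] {V : Type*}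

/-- Act by a word; the head of the list is the last step. -/
def act (φ : α → V → V) (w : List α) (x : V) : V := w.foldr φ x

def push (a : α) (s : List α) : List α := if s.head? = some a then s.tail else a :: s

def red (w : List α) : List α := w.foldr push []

abbrev Rd (w : List α) : Prop := w.IsChain (· ≠ ·)

@[simp] lemma act_nil (φ : α → V → V) (x : V) : act φ [] x = x := rfl
@[simp] lemma act_cons (φ : α → V → V) (a : α) (w : List α) (x : V) :
    act φ (a :: w) x = φ a (act φ w x) := rfl
lemma act_append (φ : α → V → V) (w w' : List α) (x : V) :
    act φ (w ++ w') x = act φ w (act φ w' x) := by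
  simp [act]

lemma act_reverse_act (φ : α → V → V) (hφ : ∀ a x, φ a (φ a x) = x) (w : List α) (x : V) :
    act φ w.reverse (act φ w x) = x := by
  induction w with
  | nil => rfl
  | cons a w ih => rw [List.reverse_cons, act_append]; simp [hφ, ih]

@[simp] lemma red_nil : red ([] : List α) = [] := rfl
@[simp] lemma red_cons (a : α) (w : List α) : red (a :: w) = push a (red w) := rfl

lemma push_cons_self (a : α) (s : List α) : push a (a :: s) = s := by simp [push]
lemma push_ne (a : α) (s : List α) (h : s.head? ≠ some a) : push a s = a :: s := by simp [push, h]

lemma head_some {a : α} {s : List α} (h : s.head? = some a) : s = a :: s.tail := by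
  cases s with
  | nil => simp at h
  | cons b t => simp at h; simp [h]

lemma Rd.tail' {w : List α} (h : Rd w) : Rd w.tail := List.IsChain.tail h

lemma rd_cons {a : α} {s : List α} : Rd (a :: s) ↔ s.head? ≠ some a ∧ Rd s := by
  unfold Rd
  rw [List.isChain_cons]
  constructor
  · rintro ⟨h1, h2⟩
    refine ⟨fun h => h1 a (by simp [h]) rfl, h2⟩
  · rintro ⟨h1, h2⟩
    refine ⟨fun y hy he => h1 (by rw [he]; simpa using hy), h2⟩

lemma rd_push {a : α} {s : List α} (h : Rd s) : Rd (push a s) := by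
  unfold push
  split_ifs with h1
  · exact h.tail'
  · exact rd_cons.2 ⟨h1, h⟩

lemma rd_red (w : List α) : Rd (red w) := by
  induction w with
  | nil => simp [Rd]
  | cons a w ih => exact rd_push ih

lemma push_push {a : α} {s : List α} (h : Rd s) : push a (push a s) = s := by
  by_cases h1 : s.head? = some a
  · have h2 := head_some h1
    rw [h2] at h ⊢
    rw [push_cons_self, push_ne _ _ (rd_cons.1 h).1]
  · rw [push_ne _ _ h1, push_cons_self]

lemma red_of_rd {w : List α} (h : Rd w) : red w = w := by
  induction w with
  | nil => rfl
  | cons a w ih =>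
    have := rd_cons.1 h
    rw [red_cons, ih this.2, push_ne _ _ this.1]

lemma length_push_le (a : α) (s : List α) : (push a s).length ≤ s.length + 1 := by
  unfold push
  split_ifs
  · simp; omega
  · simp

lemma length_red_le (w : List α) : (red w).length ≤ w.length := by
  induction w with
  | nil => simp
  | cons a w ih => have := length_push_le a (red w); simp; omega

lemma act_push (φ : α → V → V) (hφ : ∀ a x, φ a (φ a x) = x) (a : α) (s : List α) (x : V) :
    act φ (push a s) x = φ a (act φ s x) := by
  by_cases h1 : s.head? = some a
  · have h2 := head_some h1
    rw [h2, push_cons_self]; simp [hφ]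
  · rw [push_ne _ _ h1]; rfl

lemma act_red (φ : α → V → V) (hφ : ∀ a x, φ a (φ a x) = x) (w : List α) (x : V) :
    act φ (red w) x = act φ w x := by
  induction w with
  | nil => rfl
  | cons a w ih => rw [red_cons, act_push φ hφ, ih]; rfl

/-- pushing on reduced stacks -/
def pushS (a : α) (s : {s : List α // Rd s}) : {s : List α // Rd s} := ⟨push a s.1, rd_push s.2⟩

lemma pushS_inv (a : α) (s : {s : List α // Rd s}) : pushS a (pushS a s) = s :=
  Subtype.ext (push_push s.2)

lemma act_pushS (w : List α) (s : {s : List α // Rd s}) :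
    (act pushS w s).1 = red (w ++ s.1) := by
  induction w with
  | nil => simp [red_of_rd s.2]
  | cons a w ih => simp [pushS, ih]

lemma red_append_red_right (w u : List α) : red (w ++ red u) = red (w ++ u) := by
  induction w with
  | nil => simp [red_of_rd (rd_red u)]
  | cons a w ih => simp [ih]

lemma red_append_red_left (w u : List α) : red (red w ++ u) = red (w ++ u) := by
  have h1 := act_pushS (red w) ⟨red u, rd_red u⟩
  have h2 := act_pushS w ⟨red u, rd_red u⟩
  rw [act_red pushS pushS_inv, h2] at h1
  simp only [red_append_red_right] at h1
  exact h1.symm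

lemma red_reverse_append (w u : List α) : red (w.reverse ++ (w ++ u)) = red u := by
  have h := act_reverse_act pushS pushS_inv w ⟨red u, rd_red u⟩
  rw [← act_append] at h
  have h2 := act_pushS (w.reverse ++ w) ⟨red u, rd_red u⟩
  rw [h] at h2
  simp only [red_append_red_right] at h2
  rw [← List.append_assoc]; exact h2.symm

lemma red_append_reverse (w u : List α) : red (w ++ (w.reverse ++ u)) = red u := by
  have := red_reverse_append w.reverse u
  simpa using this

lemma red_eq_of_cancel {τ u : List α} (h : red (τ.reverse ++ u) = []) : red u = red τ := by
  have h1 := red_append_reverse τ u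
  rw [← h1, ← red_append_red_right, h]; simp

lemma red_conj {ρ w : List α} (h : red (ρ.reverse ++ (w ++ ρ)) = []) : red w = [] := by
  have h1 : red (w ++ ρ) = red ρ := red_eq_of_cancel h
  have h2 : red (w ++ (ρ ++ ρ.reverse)) = red w := by
    have := red_append_reverse ρ []
    simp only [List.append_nil] at this
    rw [← red_append_red_right, this]; simp
  rw [← List.append_assoc, ← red_append_red_left, h1, red_append_red_left] at h2
  have := red_append_reverse ρ []
  simp only [List.append_nil] at this
  rw [← h2, this]; rfl

lemma red_map {β : Type*} [DecidableEq β] (f : α → β) (hf : Function.Injective f) (w : List α) :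
    red (w.map f) = (red w).map f := by
  induction w with
  | nil => rfl
  | cons a w ih =>
    simp only [List.map_cons, red_cons, ih]
    unfold push
    by_cases h : (red w).head? = some a
    · simp [h]
    · have : ((red w).map f).head? ≠ some (f a) := by
        simp only [List.head?_map]
        intro h2
        obtain ⟨b, hb, hb2⟩ := Option.map_eq_some_iff.1 h2
        exact h (by rw [hb, hf hb2])
      rw [if_neg this, if_neg h]; rfl

lemma act_map {β : Type*} (f : α → β) (φ : β → V → V) (w : List α) (x : V) :
    act φ (w.map f) x = act (fun a => φ (f a)) w x := by
  induction w with
  | nil => rfl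
  | cons a w ih => simp [ih]

/-- all steps of the word satisfy P -/
def St (φ : α → V → V) (P : α → V → Prop) : List α → V → Prop
  | [], _ => True
  | a :: w, x => St φ P w x ∧ P a (act φ w x)

lemma St_append (φ : α → V → V) (P : α → V → Prop) (w w' : List α) (x : V) :
    St φ P (w ++ w') x ↔ St φ P w' x ∧ St φ P w (act φ w' x) := by
  induction w with
  | nil => simp [St]
  | cons a w ih => simp [St, ih, act_append, and_assoc]

lemma St_mono {φ : α → V → V} {P Q : α → V → Prop} (h : ∀ a x, P a x → Q a x) {w : List α} {x : V}
    (hw : St φ P w x) : St φ Q w x := by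
  induction w with
  | nil => trivial
  | cons a w ih => exact ⟨ih hw.1, h _ _ hw.2⟩

lemma St_red {φ : α → V → V} {P : α → V → Prop} {w : List α} {x : V}
    (hφ : ∀ a x, φ a (φ a x) = x)
    (hw : St φ P w x) : St φ P (red w) x := by
  induction w with
  | nil => trivial
  | cons a w ih =>
    have h := ih hw.1
    rw [red_cons]
    by_cases h1 : (red w).head? = some a
    · have h2 := head_some h1
      rw [h2] at h ⊢
      rw [push_cons_self]; exact h.1
    · rw [push_ne _ _ h1]
      exact ⟨h, by rw [act_red φ hφ]; exact hw.2⟩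

lemma St_reverse {φ : α → V → V} {P : α → V → Prop} {w : List α} {x : V}
    (hφ : ∀ a x, φ a (φ a x) = x) (hP : ∀ a x, P a x → P a (φ a x))
    (hw : St φ P w x) : St φ P w.reverse (act φ w x) := by
  induction w with
  | nil => trivial
  | cons a w ih =>
    rw [List.reverse_cons, St_append]
    refine ⟨⟨trivial, hP _ _ hw.2⟩, ?_⟩
    simp only [act_cons, act_nil, hφ]
    exact ih hw.1

lemma rd_append_left {w u : List α} (h : Rd (w ++ u)) : Rd w := (List.isChain_append.1 h).1
lemma rd_append_right {w u : List α} (h : Rd (w ++ u)) : Rd u := (List.isChain_append.1 h).2.1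

lemma rd_reverse {w : List α} (h : Rd w) : Rd w.reverse := by
  unfold Rd at *
  rw [List.isChain_reverse]
  exact h.imp (fun a b h => h.symm)

end Words
end STI


namespace STI
open Finset

section Prob
open Classical
variable {d N : ℕ}

/-- d pairwise disjoint fixed point free involutions -/
def IsInv (ψ : Fin d → Fin N → Fin N) : Prop :=
  (∀ c x, ψ c (ψ c x) = x) ∧ (∀ c x, ψ c x ≠ x) ∧ ∀ c c' x, ψ c x = ψ c' x → c = c'

noncomputable def Om (d N : ℕ) : Finset (Fin d → Fin N → Fin N) := univ.filter IsInv

noncomputable def ev (E : (Fin d → Fin N → Fin N) → Prop) : Finset (Fin d → Fin N → Fin N) :=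
  @Finset.filter _ E (Classical.decPred E) (Om d N)

lemma mem_ev {E : (Fin d → Fin N → Fin N) → Prop} {ψ : Fin d → Fin N → Fin N} :
    ψ ∈ ev E ↔ IsInv ψ ∧ E ψ := by
  unfold ev Om
  simp

/-- probability -/
noncomputable def pr (E : (Fin d → Fin N → Fin N) → Prop) : ℝ :=
  ((ev E).card : ℝ) / ((Om d N).card : ℝ)

lemma pr_nonneg (E : (Fin d → Fin N → Fin N) → Prop) : 0 ≤ pr E := by unfold pr; positivity

lemma pr_le_one (E : (Fin d → Fin N → Fin N) → Prop) : pr E ≤ 1 := by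
  unfold pr
  apply div_le_one_of_le₀ _ (by positivity)
  exact_mod_cast card_filter_le _ _

lemma pr_mono' {E E' : (Fin d → Fin N → Fin N) → Prop} (h : ∀ ψ, IsInv ψ → E ψ → E' ψ) :
    pr E ≤ pr E' := by
  unfold pr
  gcongr
  intro ψ
  rw [mem_ev, mem_ev]
  rintro ⟨h1, h2⟩
  exact ⟨h1, h ψ h1 h2⟩

lemma pr_false {E : (Fin d → Fin N → Fin N) → Prop} (h : ∀ ψ, IsInv ψ → ¬ E ψ) : pr E = 0 := by
  unfold pr
  have : ev E = ∅ := by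
    apply eq_empty_of_forall_notMem
    intro ψ hψ
    rw [mem_ev] at hψ
    exact h ψ hψ.1 hψ.2
  rw [this]; simp

lemma pr_or (E E' : (Fin d → Fin N → Fin N) → Prop) : pr (fun ψ => E ψ ∨ E' ψ) ≤ pr E + pr E' := by
  unfold pr
  rw [← add_div]
  gcongr
  have : ev (fun ψ => E ψ ∨ E' ψ) ⊆ ev E ∪ ev E' := by
    intro ψ
    simp only [mem_union, mem_ev]
    tauto
  exact_mod_cast (card_le_card this).trans (card_union_le _ _)

lemma pr_exists {ι : Type*} (s : Finset ι) (E : ι → (Fin d → Fin N → Fin N) → Prop) :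
    pr (fun ψ => ∃ i ∈ s, E i ψ) ≤ ∑ i ∈ s, pr (E i) := by
  unfold pr
  rw [← Finset.sum_div]
  gcongr
  have : ev (fun ψ => ∃ i ∈ s, E i ψ) ⊆ s.biUnion (fun i => ev (E i)) := by
    intro ψ
    simp only [mem_ev, mem_biUnion]
    rintro ⟨h, i, hi, h2⟩
    exact ⟨i, hi, h, h2⟩
  exact_mod_cast (card_le_card this).trans card_biUnion_le

/-- total probability for a function-valued statistic -/
lemma pr_fiber {ι : Type*} [Fintype ι] (f : (Fin d → Fin N → Fin N) → ι)
    (E : (Fin d → Fin N → Fin N) → Prop) :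
    ∑ i, pr (fun ψ => E ψ ∧ f ψ = i) = pr E := by
  unfold pr
  rw [← Finset.sum_div]
  congr 1
  have := Finset.card_eq_sum_card_fiberwise (f := f) (s := ev E) (t := univ) (by intro x _; simp)
  rw [this]
  push_cast
  apply sum_congr rfl
  intro i _
  congr 2
  ext ψ
  simp only [mem_ev, mem_filter, and_assoc]

/-- switching -/
noncomputable def sw (ψ : Fin d → Fin N → Fin N) (c : Fin d) (y u : Fin N) : Fin d → Fin N → Fin N :=
  Function.update ψ c (fun z => Equiv.swap y u (ψ c (Equiv.swap y u z)))

lemma sw_isInv {ψ : Fin d → Fin N → Fin N} (h : IsInv ψ) {c : Fin d} {x y u : Fin N}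
    (hxy : ψ c x = y) (hux : u ≠ x) (huy : u ≠ y)
    (h1 : ∀ c', ψ c' x ≠ u) (h2 : ∀ c', ψ c' y ≠ ψ c u) : IsInv (sw ψ c y u) := by
  obtain ⟨i1, i2, i3⟩ := h
  have hyx : ψ c y = x := by rw [← hxy, i1]
  have hne : x ≠ y := by rw [← hxy]; exact (i2 c x).symm
  have huy' : ψ c u ≠ y := by
    intro h
    apply hux; rw [← hyx, ← h, i1]
  have key : ∀ c', c' ≠ c → ∀ z, ψ c' z ≠ Equiv.swap y u (ψ c (Equiv.swap y u z)) := by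
    intro c' hc' z
    by_cases hz1 : z = y
    · rw [hz1, Equiv.swap_apply_left, Equiv.swap_apply_of_ne_of_ne huy' (i2 c u)]
      exact h2 c'
    by_cases hz2 : z = u
    · rw [hz2, Equiv.swap_apply_right, hyx, Equiv.swap_apply_of_ne_of_ne hne hux.symm]
      intro h
      apply h1 c'
      rw [← h, i1]
    rw [Equiv.swap_apply_of_ne_of_ne hz1 hz2]
    by_cases hz3 : ψ c z = y
    · rw [hz3, Equiv.swap_apply_left]
      have : z = x := by rw [← hyx, ← hz3, i1]
      rw [this]; exact h1 c'
    by_cases hz4 : ψ c z = u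
    · rw [hz4, Equiv.swap_apply_right]
      intro h
      apply h2 c'
      rw [← hz4, i1, ← h, i1]
    rw [Equiv.swap_apply_of_ne_of_ne hz3 hz4]
    intro h
    exact hc' (i3 _ _ _ h)
  refine ⟨?_, ?_, ?_⟩
  · intro c' z
    unfold sw
    by_cases hc : c' = c
    · subst hc
      simp [i1]
    · simp [hc, i1]
  · intro c' z
    unfold sw
    by_cases hc : c' = c
    · subst hc
      simp only [Function.update_self]
      intro h
      have := congrArg (Equiv.swap y u) h
      simp only [Equiv.swap_apply_self] at this
      exact i2 _ _ this
    · simp [hc, i2]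
  · intro c1 c2 z
    unfold sw
    by_cases hc1 : c1 = c <;> by_cases hc2 : c2 = c
    · intro _; rw [hc1, hc2]
    · subst hc1
      simp only [Function.update_self, Function.update_of_ne hc2]
      intro h; exact absurd h.symm (key _ hc2 z)
    · subst hc2
      simp only [Function.update_self, Function.update_of_ne hc1]
      intro h; exact absurd h (key _ hc1 z)
    · simp only [Function.update_of_ne hc1, Function.update_of_ne hc2]
      exact i3 c1 c2 z

lemma sw_sw (ψ : Fin d → Fin N → Fin N) (c : Fin d) (y u : Fin N) : sw (sw ψ c y u) c y u = ψ := by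
  funext c' z
  unfold sw
  by_cases hc : c' = c
  · subst hc; simp
  · simp [hc]

/-- The switching estimate. -/
lemma switching (E : (Fin d → Fin N → Fin N) → Prop) (c : Fin d) (U : Finset (Fin N)) (x y : Fin N)
    (hx : x ∉ U) (hy : y ∉ U)
    (hE : ∀ ψ ψ', IsInv ψ → IsInv ψ' → (∀ c', c' ≠ c → ψ' c' = ψ c') → (∀ z ∈ U, ψ' c z = ψ c z) →
      E ψ → E ψ')
    (hU : ∀ ψ, IsInv ψ → E ψ → ∀ z ∈ U, ψ c z ∈ U) (D : ℝ)
    (hD : D ≤ N - 2 * d - U.card - 2) :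
    pr (fun ψ => E ψ ∧ ψ c x = y) * D ≤ pr E := by
  by_cases hD0 : D ≤ 0
  · exact le_trans (mul_nonpos_of_nonneg_of_nonpos (pr_nonneg _) hD0) (pr_nonneg _)
  unfold pr
  rw [div_mul_eq_mul_div]
  gcongr
  set A := ev (fun ψ => E ψ ∧ ψ c x = y) with hA
  -- allowed switches
  let al : (Fin d → Fin N → Fin N) → Finset (Fin N) := fun ψ =>
    univ \ (U ∪ {x, y} ∪ univ.image (fun c' => ψ c' x) ∪ univ.image (fun c' => ψ c (ψ c' y)))
  have hal : ∀ ψ, D ≤ ((al ψ).card : ℝ) := by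
    intro ψ
    have h1 : N ≤ (al ψ).card + (U.card + 2 + d + d) := by
      have h2 := Finset.le_card_sdiff (U ∪ {x, y} ∪ univ.image (fun c' => ψ c' x) ∪ univ.image (fun c' => ψ c (ψ c' y))) (univ : Finset (Fin N))
      have h3 : (U ∪ {x, y} ∪ univ.image (fun c' => ψ c' x) ∪ univ.image (fun c' => ψ c (ψ c' y))).card ≤ U.card + 2 + d + d := by
        refine (card_union_le _ _).trans (add_le_add ((card_union_le _ _).trans (add_le_add ((card_union_le _ _).trans (add_le_add le_rfl Finset.card_le_two)) ?_)) ?_)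
        · exact card_image_le.trans (by simp)
        · exact card_image_le.trans (by simp)
      simp only [card_univ, Fintype.card_fin] at h2
      change N - _ ≤ (al ψ).card at h2
      omega
    have : (N : ℝ) ≤ (al ψ).card + (U.card + 2 + d + d) := by exact_mod_cast h1
    linarith
  have hcard : (A.sigma al).card ≤ (ev E).card := by
    apply Finset.card_le_card_of_injOn (fun p => sw p.1 c y p.2)
    · rintro ⟨ψ, u⟩ hp
      simp only [coe_sigma, Set.mem_sigma_iff, mem_coe, hA, mem_ev, mem_univ, true_and, al, Finset.mem_sdiff, mem_union, mem_insert, mem_singleton, mem_image, not_or, not_exists] at hp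
      obtain ⟨⟨hψ, hEψ, hxy⟩, ⟨⟨⟨hu1, hu2, hu3⟩, hu4⟩, hu5⟩⟩ := hp
      have hinv : IsInv (sw ψ c y u) := by
        apply sw_isInv hψ hxy hu2 hu3 hu4
        intro c' h
        apply hu5 c'
        rw [h, hψ.1]
      simp only [mem_coe, mem_ev]
      refine ⟨hinv, hE ψ _ hψ hinv ?_ ?_ hEψ⟩
      · intro c' hc'; simp [sw, hc']
      · intro z hz
        simp only [sw, Function.update_self]
        have hzy : z ≠ y := by rintro rfl; exact hy hz
        have hzu : z ≠ u := by rintro rfl; exact hu1 hz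
        have h2 := hU ψ hψ hEψ z hz
        rw [Equiv.swap_apply_of_ne_of_ne hzy hzu, Equiv.swap_apply_of_ne_of_ne]
        · rintro h; rw [h] at h2; exact hy h2
        · rintro h; rw [h] at h2; exact hu1 h2
    · rintro ⟨ψ, u⟩ hp ⟨ψ', u'⟩ hp' heq
      simp only [coe_sigma, Set.mem_sigma_iff, mem_coe, hA, mem_ev, mem_univ, true_and, al, Finset.mem_sdiff, mem_union, mem_insert, mem_singleton, mem_image, not_or, not_exists] at hp hp'
      obtain ⟨⟨hψ, hEψ, hxy⟩, ⟨⟨⟨hu1, hu2, hu3⟩, hu4⟩, hu5⟩⟩ := hp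
      obtain ⟨⟨hψ', hEψ', hxy'⟩, ⟨⟨⟨hu1', hu2', hu3'⟩, hu4'⟩, hu5'⟩⟩ := hp'
      have hne : x ≠ y := by rw [← hxy]; exact (hψ.2.1 c x).symm
      have e : u = u' := by
        have h := congrFun (congrFun heq c) x
        simp only [sw, Function.update_self] at h
        rwa [Equiv.swap_apply_of_ne_of_ne hne (Ne.symm hu2), Equiv.swap_apply_of_ne_of_ne hne (Ne.symm hu2'), hxy, hxy', Equiv.swap_apply_left, Equiv.swap_apply_left] at h
      subst e
      have := congrArg (fun q => sw q c y u) heq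
      simp only [sw_sw] at this
      rw [this]
  calc (A.card : ℝ) * D = ∑ ψ ∈ A, D := by simp
    _ ≤ ∑ ψ ∈ A, ((al ψ).card : ℝ) := sum_le_sum (fun ψ _ => hal ψ)
    _ = ((A.sigma al).card : ℝ) := by rw [card_sigma]; push_cast; rfl
    _ ≤ _ := by exact_mod_cast hcard

/-- cylinder events -/
def cyl (B : Finset (Fin d × Sym2 (Fin N))) (ψ : Fin d → Fin N → Fin N) : Prop :=
  ∀ p ∈ B, ∀ x ∈ p.2, s(x, ψ p.1 x) = p.2

/-- saturated vertices -/
noncomputable def sat (c : Fin d) (B : Finset (Fin d × Sym2 (Fin N))) : Finset (Fin N) :=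
  (B.filter (fun p => p.1 = c)).biUnion (fun p => univ.filter (fun x => x ∈ p.2))

lemma mem_sat {c : Fin d} {B : Finset (Fin d × Sym2 (Fin N))} {x : Fin N} :
    x ∈ sat c B ↔ ∃ e, (c, e) ∈ B ∧ x ∈ e := by
  simp only [sat, mem_biUnion, mem_filter, mem_univ, true_and]
  constructor
  · rintro ⟨⟨c', e⟩, ⟨h1, h2⟩, h3⟩
    simp only at h2; subst h2
    exact ⟨e, h1, h3⟩
  · rintro ⟨e, h1, h2⟩
    exact ⟨(c, e), ⟨h1, rfl⟩, h2⟩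

lemma card_sat_le (c : Fin d) (B : Finset (Fin d × Sym2 (Fin N))) : (sat c B).card ≤ 2 * B.card := by
  unfold sat
  refine (card_biUnion_le_card_mul _ _ 2 ?_).trans ?_
  · rintro ⟨c', e⟩ _
    induction e with
    | h a b =>
      refine (card_le_card (t := {a, b}) ?_).trans card_le_two
      intro x; simp
  · rw [mul_comm]
    gcongr
    exact filter_subset _ _

lemma cyl_insert {c : Fin d} {x y : Fin N} {B : Finset (Fin d × Sym2 (Fin N))} {ψ : Fin d → Fin N → Fin N}
    (hψ : IsInv ψ) : cyl (insert (c, s(x, y)) B) ψ ↔ cyl B ψ ∧ ψ c x = y := by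
  unfold cyl
  simp only [mem_insert, forall_eq_or_imp]
  constructor
  · rintro ⟨h1, h2⟩
    refine ⟨h2, ?_⟩
    have := h1 x (by simp)
    simp only [Sym2.eq_iff, true_and] at this
    rcases this with h | h
    · exact h
    · exact absurd h.2 (hψ.2.1 c x)
  · rintro ⟨h1, h2⟩
    refine ⟨?_, h1⟩
    intro z hz
    simp only [Sym2.mem_iff] at hz
    rcases hz with rfl | rfl
    · rw [h2]
    · rw [← h2, hψ.1]; exact Sym2.eq_swap

lemma cyl_sat {c : Fin d} {z : Fin N} {B : Finset (Fin d × Sym2 (Fin N))} {ψ : Fin d → Fin N → Fin N}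
    (h : cyl B ψ) (hz : z ∈ sat c B) : ψ c z ∈ sat c B := by
  rw [mem_sat] at *
  obtain ⟨e, h1, h2⟩ := hz
  refine ⟨e, h1, ?_⟩
  have := h _ h1 z h2
  simp only at this
  rw [← this]; simp

/-- E depends only on colours other than c -/
def IndepOf (c : Fin d) (E : (Fin d → Fin N → Fin N) → Prop) : Prop :=
  ∀ ψ ψ', (∀ c', c' ≠ c → ψ' c' = ψ c') → E ψ → E ψ'

lemma cyl_step (E : (Fin d → Fin N → Fin N) → Prop) (c : Fin d) (hE : IndepOf c E)
    (B : Finset (Fin d × Sym2 (Fin N))) (x y : Fin N) (hx : x ∉ sat c B) (hy : y ∉ sat c B) (D : ℝ)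
    (hD : D ≤ N - 2 * d - 2 * B.card - 2) :
    pr (fun ψ => E ψ ∧ cyl (insert (c, s(x, y)) B) ψ) * D ≤ pr (fun ψ => E ψ ∧ cyl B ψ) := by
  by_cases hD0 : D ≤ 0
  · exact le_trans (mul_nonpos_of_nonneg_of_nonpos (pr_nonneg _) hD0) (pr_nonneg _)
  push Not at hD0
  have h0 : pr (fun ψ => E ψ ∧ cyl (insert (c, s(x, y)) B) ψ) ≤ pr (fun ψ => (E ψ ∧ cyl B ψ) ∧ ψ c x = y) := by
    apply pr_mono'
    rintro ψ hψ ⟨h1, h2⟩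
    rw [cyl_insert hψ] at h2
    exact ⟨⟨h1, h2.1⟩, h2.2⟩
  refine (mul_le_mul_of_nonneg_right h0 hD0.le).trans ?_
  apply switching (fun ψ => E ψ ∧ cyl B ψ) c (sat c B) x y hx hy
  · rintro ψ ψ' hψ hψ' h1 h2 ⟨h3, h4⟩
    refine ⟨hE ψ ψ' h1 h3, ?_⟩
    rintro ⟨c', e⟩ hp z hz
    simp only at hz ⊢
    by_cases hc : c' = c
    · subst hc
      rw [h2 z (mem_sat.2 ⟨e, hp, hz⟩)]
      exact h4 _ hp z hz
    · rw [h1 c' hc]; exact h4 _ hp z hz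
  · rintro ψ hψ ⟨h1, h2⟩ z hz
    exact cyl_sat h2 hz
  · have := card_sat_le c B
    have : ((sat c B).card : ℝ) ≤ 2 * B.card := by exact_mod_cast this
    linarith

lemma cyl_insert_sat {c : Fin d} {x y : Fin N} {B : Finset (Fin d × Sym2 (Fin N))} {ψ : Fin d → Fin N → Fin N}
    (hψ : IsInv ψ) (hc : cyl (insert (c, s(x, y)) B) ψ) (hx : x ∉ sat c B) : y ∉ sat c B ∧ y ≠ x := by
  rw [cyl_insert hψ] at hc
  constructor
  · intro hy
    have := cyl_sat hc.1 hy
    rw [← hc.2, hψ.1] at this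
    exact hx this
  · rw [← hc.2]; exact hψ.2.1 c x

/-- version without the hypothesis on y -/
lemma cyl_step' (E : (Fin d → Fin N → Fin N) → Prop) (c : Fin d) (hE : IndepOf c E)
    (B : Finset (Fin d × Sym2 (Fin N))) (x y : Fin N) (hx : x ∉ sat c B) (D : ℝ)
    (hD : D ≤ N - 2 * d - 2 * B.card - 2) :
    pr (fun ψ => E ψ ∧ cyl (insert (c, s(x, y)) B) ψ) * D ≤ pr (fun ψ => E ψ ∧ cyl B ψ) := by
  by_cases hy : y ∈ sat c B
  · rw [pr_false]
    · rw [zero_mul]; exact pr_nonneg _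
    · rintro ψ hψ ⟨_, h⟩
      exact (cyl_insert_sat hψ h hx).1 hy
  · exact cyl_step E c hE B x y hx hy D hD

/-- E2 basic estimate -/
lemma pr_cyl_le (B : Finset (Fin d × Sym2 (Fin N))) (D : ℝ) (hD0 : 0 < D)
    (hD : D ≤ N - 2 * d - 2 * B.card - 2) : pr (cyl B) ≤ (1 / D) ^ B.card := by
  induction B using Finset.induction_on with
  | empty => simpa using pr_le_one _
  | insert p B hp ih =>
    obtain ⟨c, e⟩ := p
    induction e with
    | h x y =>
      rw [card_insert_of_notMem hp] at hD ⊢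
      push_cast at hD
      have ih' := ih (by linarith)
      by_cases hx : x ∈ sat c B
      · rw [pr_false]
        · positivity
        · intro ψ hψ h
          rw [cyl_insert hψ] at h
          obtain ⟨e, h1, h2⟩ := mem_sat.1 hx
          have := h.1 _ h1 x h2
          simp only [h.2] at this
          rw [this] at hp
          exact hp h1
      · have := cyl_step' (fun _ => True) c (fun _ _ _ h => h) B x y hx D (by linarith)
        simp only [true_and] at this
        rw [pow_succ]
        calc pr (cyl (insert (c, s(x, y)) B)) ≤ pr (cyl B) / D := by rwa [le_div_iff₀ hD0]
          _ ≤ (1 / D) ^ B.card / D := by gcongr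
          _ = _ := by ring
end Prob
end STI


namespace STI
open Finset

section Prob2
open Classical
variable {d N : ℕ}

def hit (ψ : Fin d → Fin N → Fin N) : List (Fin d) → Finset (Fin N) → Fin N → Prop
  | [], _, _ => False
  | c :: l, U, x => ψ c x ∈ U ∨ hit ψ l (insert (ψ c x) U) (ψ c x)

lemma hit_of_trav (ψ : Fin d → Fin N → Fin N) (l : List (Fin d)) (U : Finset (Fin N)) (x r : Fin N)
    (hr : r ∈ U) (hl : l ≠ []) (h : l.foldl (fun z c => ψ c z) x = r) : hit ψ l U x := by
  induction l generalizing U x with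
  | nil => exact absurd rfl hl
  | cons c l ih =>
    by_cases hl' : l = []
    · subst hl'
      left
      simp only [List.foldl_cons, List.foldl_nil] at h
      rw [h]; exact hr
    · right
      exact ih _ _ (mem_insert_of_mem hr) hl' h

lemma pr_hit (l : List (Fin d)) (hl : Rd l) (B : Finset (Fin d × Sym2 (Fin N))) (U : Finset (Fin N))
    (x : Fin N) (hx : x ∈ U) (hB : ∀ p ∈ B, ∀ z ∈ p.2, z ∈ U)
    (hxB : ∀ c ∈ l.head?, x ∉ sat c B) (D : ℝ)
    (hD : D ≤ N - 2 * d - 2 * (B.card + l.length) - 2) :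
    pr (fun ψ => cyl B ψ ∧ hit ψ l U x) * D ≤ l.length * (U.card + l.length) * pr (cyl B) := by
  by_cases hD0 : D ≤ 0
  · exact le_trans (mul_nonpos_of_nonneg_of_nonpos (pr_nonneg _) hD0)
      (mul_nonneg (by positivity) (pr_nonneg _))
  push Not at hD0
  induction l generalizing B U x with
  | nil =>
    rw [pr_false]
    · simp
    · rintro ψ _ ⟨_, h⟩; exact h
  | cons c l ih =>
    have hx' : x ∉ sat c B := hxB c (by simp)
    have hc := rd_cons.1 hl
    rw [← pr_fiber (fun ψ => ψ c x) (fun ψ => cyl B ψ ∧ hit ψ (c :: l) U x), sum_mul]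
    have hsum : ∑ y, pr (fun ψ => cyl B ψ ∧ ψ c x = y) = pr (cyl B) := pr_fiber (fun ψ => ψ c x) (cyl B)
    simp only [List.length_cons, Nat.cast_add, Nat.cast_one] at hD ⊢
    have hins : ∀ y, pr (cyl (insert (c, s(x, y)) B)) = pr (fun ψ => cyl B ψ ∧ ψ c x = y) := by
      intro y
      apply le_antisymm
      · apply pr_mono'; intro ψ hψ h; exact (cyl_insert hψ).1 h
      · apply pr_mono'; intro ψ hψ h; exact (cyl_insert hψ).2 h
    have hy : ∀ y, pr (fun ψ => (cyl B ψ ∧ hit ψ (c :: l) U x) ∧ ψ c x = y) * D ≤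
        (if y ∈ U then pr (cyl B) else 0) + l.length * (U.card + (l.length + 1)) * pr (fun ψ => cyl B ψ ∧ ψ c x = y) := by
      intro y
      by_cases hyU : y ∈ U
      · rw [if_pos hyU]
        have h1 := cyl_step' (fun _ => True) c (fun _ _ _ h => h) B x y hx' D (by
          have : (0 : ℝ) ≤ l.length := by positivity
          linarith)
        simp only [true_and] at h1
        have h2 : pr (fun ψ => (cyl B ψ ∧ hit ψ (c :: l) U x) ∧ ψ c x = y) ≤ pr (cyl (insert (c, s(x, y)) B)) := by
          apply pr_mono'; rintro ψ hψ ⟨⟨h, _⟩, h'⟩; exact (cyl_insert hψ).2 ⟨h, h'⟩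
        have h3 : 0 ≤ l.length * (U.card + (l.length + 1)) * pr (fun ψ => cyl B ψ ∧ ψ c x = y) :=
          mul_nonneg (by positivity) (pr_nonneg _)
        nlinarith [mul_le_mul_of_nonneg_right h2 hD0.le]
      · rw [if_neg hyU, zero_add]
        have h1 := ih hc.2 (insert (c, s(x, y)) B) (insert y U) y (mem_insert_self _ _) (by
          intro p hp z hz
          rw [mem_insert] at hp
          rcases hp with rfl | hp
          · simp only [Sym2.mem_iff] at hz
            rcases hz with rfl | rfl
            · exact mem_insert_of_mem hx
            · exact mem_insert_self _ _
          · exact mem_insert_of_mem (hB p hp z hz)) (by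
          intro c' hc' hs
          obtain ⟨e, h1, h2⟩ := mem_sat.1 hs
          rw [mem_insert] at h1
          rcases h1 with h1 | h1
          · have : c' = c := congrArg Prod.fst h1
            subst this
            exact hc.1 (by simpa using hc')
          · exact hyU (hB _ h1 _ h2)) (by
          have := card_insert_le (c, s(x, y)) B
          have : ((insert (c, s(x, y)) B).card : ℝ) ≤ B.card + 1 := by exact_mod_cast this
          linarith)
        rw [card_insert_of_notMem hyU, hins] at h1
        push_cast at h1
        have h2 : pr (fun ψ => (cyl B ψ ∧ hit ψ (c :: l) U x) ∧ ψ c x = y) ≤ pr (fun ψ => cyl (insert (c, s(x, y)) B) ψ ∧ hit ψ l (insert y U) y) := by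
          apply pr_mono'
          rintro ψ hψ ⟨⟨h, h0⟩, h'⟩
          refine ⟨(cyl_insert hψ).2 ⟨h, h'⟩, ?_⟩
          simp only [hit, h'] at h0
          exact h0.resolve_left hyU
        calc _ ≤ _ := mul_le_mul_of_nonneg_right h2 hD0.le
          _ ≤ _ := h1
          _ = _ := by ring
    calc _ ≤ ∑ y, ((if y ∈ U then pr (cyl B) else 0) + l.length * (U.card + (l.length + 1)) * pr (fun ψ => cyl B ψ ∧ ψ c x = y)) := sum_le_sum (fun y _ => hy y)
      _ = U.card * pr (cyl B) + l.length * (U.card + (l.length + 1)) * pr (cyl B) := by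
        rw [sum_add_distrib, ← mul_sum, hsum]
        congr 1
        rw [← sum_filter]; simp
      _ ≤ _ := by
        have := pr_nonneg (cyl B)
        have h2 : (0 : ℝ) ≤ l.length := by positivity
        nlinarith

lemma act_eq_foldl (ψ : Fin d → Fin N → Fin N) (w : List (Fin d)) (x : Fin N) :
    w.reverse.foldl (fun z c => ψ c z) x = act ψ w x := by
  rw [List.foldl_reverse]; rfl

/-- Word lemma. -/
lemma pr_word (w : List (Fin d)) (hw : red w ≠ []) (r : Fin N) (D : ℝ) (hD0 : 0 < D)
    (hD : D ≤ N - 2 * d - 2 * w.length - 2) :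
    pr (fun ψ => act ψ w r = r) ≤ w.length * (w.length + 1) / D := by
  have hlen := length_red_le w
  have hlen' : ((red w).length : ℝ) ≤ w.length := by exact_mod_cast hlen
  rw [le_div_iff₀ hD0]
  have h := pr_hit (red w).reverse (rd_reverse (rd_red w)) ∅ {r} r (by simp) (by simp) (by
    intro c _ h; rw [mem_sat] at h; simp at h) D (by simp; linarith)
  have h2 : pr (fun ψ => act ψ w r = r) ≤ pr (fun ψ => cyl ∅ ψ ∧ hit ψ (red w).reverse {r} r) := by
    apply pr_mono'
    intro ψ hψ h
    refine ⟨by intro p hp; simp at hp, ?_⟩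
    apply hit_of_trav _ _ _ _ r (by simp) (by simpa using hw)
    rw [act_eq_foldl, act_red ψ hψ.1, h]
  have h3 := pr_le_one (d := d) (N := N) (cyl ∅)
  have h4 := pr_nonneg (d := d) (N := N) (cyl ∅)
  simp only [List.length_reverse, card_singleton, Nat.cast_one] at h
  have h5 := mul_le_mul_of_nonneg_right h2 hD0.le
  refine h5.trans (h.trans ?_)
  have h6 : (0:ℝ) ≤ (red w).length := by positivity
  calc ((red w).length : ℝ) * (1 + (red w).length) * pr (cyl (∅ : Finset (Fin d × Sym2 (Fin N))))
      ≤ ((red w).length : ℝ) * (1 + (red w).length) * 1 := by gcongr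
    _ ≤ _ := by nlinarith

/-- Link lemma for fixed sets -/
lemma pr_link_fixed (E : (Fin d → Fin N → Fin N) → Prop) (c : Fin d) (hE : IndepOf c E)
    (Y : Finset (Fin N)) (q : ℕ) (B : Finset (Fin d × Sym2 (Fin N))) (X : Finset (Fin N))
    (hX : 2 * q ≤ X.card) (hXB : ∀ x ∈ X, x ∉ sat c B) (D : ℝ) (hD0 : 0 < D)
    (hD : D ≤ N - 2 * d - 2 * (B.card + q) - 2) :
    pr (fun ψ => E ψ ∧ cyl B ψ ∧ ∀ x ∈ X, ψ c x ∉ Y) ≤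
      (((N : ℝ) - Y.card) / D) ^ q * pr (fun ψ => E ψ ∧ cyl B ψ) := by
  have hYN : (Y.card : ℝ) ≤ N := by
    have := card_le_univ Y
    simp only [Fintype.card_fin] at this
    exact_mod_cast this
  have hθ : 0 ≤ ((N : ℝ) - Y.card) / D := div_nonneg (by linarith) hD0.le
  induction q generalizing B X with
  | zero =>
    simp only [pow_zero, one_mul]
    apply pr_mono'
    rintro ψ _ ⟨h1, h2, _⟩; exact ⟨h1, h2⟩
  | succ q ih =>
    push_cast at hD
    have hne : X.Nonempty := by rw [← card_pos]; omega
    obtain ⟨x, hx⟩ := hne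
    have hx' := hXB x hx
    rw [← pr_fiber (fun ψ => ψ c x) (fun ψ => E ψ ∧ cyl B ψ ∧ ∀ x ∈ X, ψ c x ∉ Y)]
    have hy : ∀ y, pr (fun ψ => (E ψ ∧ cyl B ψ ∧ ∀ x ∈ X, ψ c x ∉ Y) ∧ ψ c x = y) ≤
        if y ∈ Y then 0 else (((N : ℝ) - Y.card) / D) ^ q * (pr (fun ψ => E ψ ∧ cyl B ψ) / D) := by
      intro y
      by_cases hyY : y ∈ Y
      · rw [if_pos hyY, pr_false]
        rintro ψ _ ⟨⟨_, _, h⟩, h'⟩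
        exact h x hx (h' ▸ hyY)
      rw [if_neg hyY]
      by_cases hys : y ∈ sat c B
      · rw [pr_false]
        · have := pr_nonneg (fun ψ => E ψ ∧ cyl B ψ)
          positivity
        · rintro ψ hψ ⟨⟨_, h, _⟩, h'⟩
          exact (cyl_insert_sat hψ ((cyl_insert hψ).2 ⟨h, h'⟩) hx').1 hys
      have h1 := ih (insert (c, s(x, y)) B) ((X.erase x).erase y) (by
        have h1 := card_erase_of_mem hx
        have h2 := pred_card_le_card_erase (s := X.erase x) (a := y)
        omega) (by
        intro z hz hs
        simp only [mem_erase] at hz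
        obtain ⟨e, h1, h2⟩ := mem_sat.1 hs
        rw [mem_insert] at h1
        rcases h1 with h1 | h1
        · have : e = s(x, y) := congrArg Prod.snd h1
          subst this
          simp only [Sym2.mem_iff] at h2
          tauto
        · exact hXB z hz.2.2 (mem_sat.2 ⟨e, h1, h2⟩)) (by
        have := card_insert_le (c, s(x, y)) B
        have : ((insert (c, s(x, y)) B).card : ℝ) ≤ B.card + 1 := by exact_mod_cast this
        linarith)
      have h2 := cyl_step' E c hE B x y hx' D (by
        have : (0 : ℝ) ≤ q := by positivity
        linarith)
      calc _ ≤ pr (fun ψ => E ψ ∧ cyl (insert (c, s(x, y)) B) ψ ∧ ∀ x_1 ∈ (X.erase x).erase y, ψ c x_1 ∉ Y) := by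
            apply pr_mono'
            rintro ψ hψ ⟨⟨h1, h2, h3⟩, h4⟩
            refine ⟨h1, (cyl_insert hψ).2 ⟨h2, h4⟩, fun z hz => h3 z ?_⟩
            simp only [mem_erase] at hz
            exact hz.2.2
        _ ≤ _ := h1
        _ ≤ _ := by
          gcongr
          rwa [le_div_iff₀ hD0]
    calc _ ≤ ∑ y, (if y ∈ Y then 0 else (((N : ℝ) - Y.card) / D) ^ q * (pr (fun ψ => E ψ ∧ cyl B ψ) / D)) := sum_le_sum (fun y _ => hy y)
      _ = ((N : ℝ) - Y.card) * ((((N : ℝ) - Y.card) / D) ^ q * (pr (fun ψ => E ψ ∧ cyl B ψ) / D)) := by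
        rw [sum_ite, sum_const_zero, zero_add, sum_const, nsmul_eq_mul]
        congr 1
        have : (univ.filter (fun y => y ∉ Y)) = univ \ Y := by ext; simp
        rw [this, card_sdiff_of_subset (subset_univ _), Nat.cast_sub (card_le_card (subset_univ _))]
        simp
      _ = _ := by rw [pow_succ]; ring

/-- Link lemma -/
lemma pr_link (X Y : (Fin d → Fin N → Fin N) → Finset (Fin N)) (c : Fin d)
    (hX : ∀ ψ ψ', (∀ c', c' ≠ c → ψ' c' = ψ c') → X ψ' = X ψ)
    (hY : ∀ ψ ψ', (∀ c', c' ≠ c → ψ' c' = ψ c') → Y ψ' = Y ψ) (q y0 : ℕ) (hy0N : y0 ≤ N) (D : ℝ) (hD0 : 0 < D)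
    (hD : D ≤ N - 2 * d - 2 * q - 2) :
    pr (fun ψ => 2 * q ≤ (X ψ).card ∧ y0 ≤ (Y ψ).card ∧ ∀ x ∈ X ψ, ψ c x ∉ Y ψ) ≤
      (((N : ℝ) - y0) / D) ^ q := by
  rw [← pr_fiber (fun ψ => (X ψ, Y ψ))]
  have key : ∀ p : Finset (Fin N) × Finset (Fin N),
      pr (fun ψ => (2 * q ≤ (X ψ).card ∧ y0 ≤ (Y ψ).card ∧ ∀ x ∈ X ψ, ψ c x ∉ Y ψ) ∧ (X ψ, Y ψ) = p) ≤
      (((N : ℝ) - y0) / D) ^ q * pr (fun ψ => (2 * q ≤ (X ψ).card ∧ y0 ≤ (Y ψ).card) ∧ (X ψ, Y ψ) = p) := by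
    rintro ⟨X0, Y0⟩
    by_cases h : 2 * q ≤ X0.card ∧ y0 ≤ Y0.card
    · have h1 := pr_link_fixed (fun ψ => X ψ = X0 ∧ Y ψ = Y0) c (by
        rintro ψ ψ' h ⟨h1, h2⟩
        exact ⟨(hX ψ ψ' h).trans h1, (hY ψ ψ' h).trans h2⟩) Y0 q ∅ X0 h.1 (by
        intro x _ h; rw [mem_sat] at h; simp at h) D hD0 (by simp; linarith)
      have hYN : (Y0.card : ℝ) ≤ N := by
        have := card_le_univ Y0
        simp only [Fintype.card_fin] at this
        exact_mod_cast this
      have hy0 : (y0 : ℝ) ≤ Y0.card := by exact_mod_cast h.2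
      calc _ ≤ pr (fun ψ => (X ψ = X0 ∧ Y ψ = Y0) ∧ cyl ∅ ψ ∧ ∀ x ∈ X0, ψ c x ∉ Y0) := by
            apply pr_mono'
            rintro ψ _ ⟨⟨_, _, h3⟩, h4⟩
            simp only [Prod.mk.injEq] at h4
            rw [h4.1, h4.2] at h3
            exact ⟨h4, by intro p hp; simp at hp, h3⟩
        _ ≤ _ := h1
        _ ≤ (((N : ℝ) - y0) / D) ^ q * pr (fun ψ => (X ψ = X0 ∧ Y ψ = Y0) ∧ cyl ∅ ψ) := by
            have := pr_nonneg (fun ψ => (X ψ = X0 ∧ Y ψ = Y0) ∧ cyl ∅ ψ)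
            have : 0 ≤ ((N : ℝ) - Y0.card) / D := div_nonneg (by linarith) hD0.le
            gcongr
        _ ≤ _ := by
            have : 0 ≤ ((N : ℝ) - y0) / D := div_nonneg (by linarith) hD0.le
            gcongr
            apply pr_mono'
            rintro ψ _ ⟨⟨h1, h2⟩, _⟩
            rw [h1, h2]; exact ⟨h, rfl⟩
    · rw [pr_false, pr_false]
      · simp
      · rintro ψ _ ⟨h1, h2⟩
        simp only [Prod.mk.injEq] at h2
        rw [h2.1, h2.2] at h1; exact h h1
      · rintro ψ _ ⟨⟨h1, h3, _⟩, h2⟩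
        simp only [Prod.mk.injEq] at h2
        rw [h2.1] at h1; rw [h2.2] at h3; exact h ⟨h1, h3⟩
  refine (sum_le_sum (fun p _ => key p)).trans ?_
  rw [← mul_sum, pr_fiber]
  have hp : 0 ≤ ((N : ℝ) - y0) / D := by
    have : (y0 : ℝ) ≤ N := by exact_mod_cast hy0N
    exact div_nonneg (by linarith) hD0.le
  exact mul_le_of_le_one_right (pow_nonneg hp _) (pr_le_one _)

/-- existence of a small dense vertex set -/
def Dense (H : ℕ) (ψ : Fin d → Fin N → Fin N) : Prop :=
  ∃ w ∈ range (H + 1), ∃ W ∈ powersetCard w (univ : Finset (Fin N)),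
    ∃ B ∈ powersetCard (w + 1) ((univ : Finset (Fin d)) ×ˢ W.sym2), cyl B ψ

lemma pr_dense (H : ℕ) (hN : 0 < N) (hNH : 4 * d + 4 * (H + 1) + 4 ≤ N) :
    pr (Dense H (d := d) (N := N)) ≤ (H + 1) * (2 * d * (H + 1) ^ 2) ^ (H + 1) / N := by
  have hN' : (0 : ℝ) < N := by exact_mod_cast hN
  by_cases hd0 : d = 0
  · have : pr (Dense H (d := d) (N := N)) = 0 := by
      apply pr_false
      rintro ψ _ ⟨w, _, W, _, B, hB, _⟩
      rw [mem_powersetCard] at hB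
      subst hd0
      have : B.card ≤ 0 := by
        refine (card_le_card hB.1).trans ?_
        simp
      omega
    rw [this]; positivity
  have hd1 : 1 ≤ d := by omega
  have hNH' : (4 * d + 4 * (H + 1) + 4 : ℝ) ≤ N := by exact_mod_cast hNH
  refine (pr_exists _ _).trans ?_
  have key : ∀ w ∈ range (H + 1), pr (fun ψ : Fin d → Fin N → Fin N => ∃ W ∈ powersetCard w (univ : Finset (Fin N)),
    ∃ B ∈ powersetCard (w + 1) ((univ : Finset (Fin d)) ×ˢ W.sym2), cyl B ψ) ≤ (2 * d * (H + 1) ^ 2) ^ (H + 1) / N := by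
    intro w hw
    have hwH : w ≤ H := by rw [mem_range] at hw; omega
    have hwH' : (w : ℝ) ≤ H := by exact_mod_cast hwH
    refine (pr_exists _ _).trans ?_
    have k2 : ∀ W ∈ powersetCard w (univ : Finset (Fin N)), pr (fun ψ : Fin d → Fin N → Fin N => ∃ B ∈ powersetCard (w + 1) ((univ : Finset (Fin d)) ×ˢ W.sym2), cyl B ψ) ≤ (2 * d * (H + 1) ^ 2) ^ (w + 1) / N ^ (w + 1) := by
      intro W hW
      rw [mem_powersetCard] at hW
      refine (pr_exists _ _).trans ?_
      have k3 : ∀ B ∈ powersetCard (w + 1) ((univ : Finset (Fin d)) ×ˢ W.sym2), pr (cyl B) ≤ (2 / (N : ℝ)) ^ (w + 1) := by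
        intro B hB
        rw [mem_powersetCard] at hB
        have := pr_cyl_le B ((N : ℝ) / 2) (by positivity) (by rw [hB.2]; push_cast; linarith)
        rw [hB.2] at this
        simpa using this
      refine (sum_le_card_nsmul _ _ _ k3).trans ?_
      rw [card_powersetCard, nsmul_eq_mul, card_product, card_sym2, hW.2, card_univ, Fintype.card_fin]
      have k4 : ((d * (w + 1).choose 2).choose (w + 1) : ℝ) ≤ (d * (H + 1) ^ 2) ^ (w + 1) := by
        have h1 : (d * (w + 1).choose 2).choose (w + 1) ≤ (d * (w + 1).choose 2) ^ (w + 1) := Nat.choose_le_pow _ _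
        have h2 : (w + 1).choose 2 ≤ (w + 1) ^ 2 := Nat.choose_le_pow _ _
        have h3 : (d * (w + 1).choose 2).choose (w + 1) ≤ (d * (H + 1) ^ 2) ^ (w + 1) := h1.trans (by gcongr; exact h2.trans (by gcongr))
        exact_mod_cast h3
      calc _ ≤ (d * (H + 1) ^ 2 : ℝ) ^ (w + 1) * (2 / (N : ℝ)) ^ (w + 1) := by gcongr
        _ = _ := by rw [div_pow, mul_div_assoc', ← mul_pow]; ring
    refine (sum_le_card_nsmul _ _ _ k2).trans ?_
    rw [card_powersetCard, nsmul_eq_mul, card_univ, Fintype.card_fin]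
    have k5 : (N.choose w : ℝ) ≤ (N : ℝ) ^ w := by exact_mod_cast Nat.choose_le_pow _ _
    have k6 : (1 : ℝ) ≤ 2 * d * (H + 1) ^ 2 := by
      have : (1 : ℝ) ≤ d := by exact_mod_cast hd1
      have h2 : (1 : ℝ) ≤ (H + 1 : ℝ) ^ 2 := one_le_pow₀ (by linarith [(Nat.cast_nonneg H : (0 : ℝ) ≤ H)])
      nlinarith
    calc _ ≤ (N : ℝ) ^ w * ((2 * d * (H + 1) ^ 2) ^ (w + 1) / N ^ (w + 1)) := by gcongr
      _ = (2 * d * (H + 1) ^ 2) ^ (w + 1) / N := by field_simp; ring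
      _ ≤ _ := by
        gcongr
  refine (sum_le_card_nsmul _ _ _ key).trans ?_
  rw [card_range, nsmul_eq_mul]
  push_cast
  rw [mul_div_assoc]

/-- the tuple of graphs attached to involutions -/
def gr (ψ : Fin d → Fin N → Fin N) (hψ : IsInv ψ) : Fin d → SimpleGraph (Fin N) := fun c =>
  { Adj := fun x y => ψ c x = y
    symm := ⟨fun x y h => by rw [← h, hψ.1]⟩
    loopless := ⟨fun x h => hψ.2.1 c x h⟩ }

lemma gr_isPM (ψ : Fin d → Fin N → Fin N) (hψ : IsInv ψ) : IsPMTuple (gr ψ hψ) := by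
  constructor
  · intro c v
    have : (gr ψ hψ c).neighborSet v = {ψ c v} := by
      ext y; simp [gr, SimpleGraph.neighborSet, eq_comm]
    rw [this]; simp
  · intro i j hij
    rw [SimpleGraph.disjoint_left]
    intro x y h1 h2
    exact hij (hψ.2.2 i j x ((show ψ i x = y from h1).trans (show ψ j x = y from h2).symm))

lemma gr_surj (M : Fin d → SimpleGraph (Fin N)) (hM : IsPMTuple M) : ∃ ψ, ∃ hψ : IsInv ψ, gr ψ hψ = M := by
  have h1 : ∀ c v, ∃ y, ∀ z, (M c).Adj v z ↔ z = y := by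
    intro c v
    have := hM.1 c v
    rw [Nat.card_eq_one_iff_exists] at this
    obtain ⟨⟨y, hy⟩, h⟩ := this
    refine ⟨y, fun z => ⟨fun hz => ?_, fun hz => ?_⟩⟩
    · have := h ⟨z, hz⟩
      exact congrArg Subtype.val this
    · rw [hz]; exact hy
  choose ψ hψ using h1
  have hinv : IsInv ψ := by
    refine ⟨?_, ?_, ?_⟩
    · intro c x
      have : (M c).Adj x (ψ c x) := (hψ c x _).2 rfl
      exact ((hψ c _ _).1 this.symm).symm
    · intro c x h
      have : (M c).Adj x (ψ c x) := (hψ c x _).2 rfl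
      rw [h] at this
      exact (M c).loopless.irrefl x this
    · intro c c' x h
      by_contra hne
      have h3 := hM.2 c c' hne
      rw [SimpleGraph.disjoint_left] at h3
      exact h3 x (ψ c x) ((hψ c x _).2 rfl) ((hψ c' x _).2 h)
  refine ⟨ψ, hinv, ?_⟩
  funext c
  ext x y
  rw [hψ c x y]
  exact eq_comm

lemma tupleProb_eq (A : (Fin d → SimpleGraph (Fin N)) → Prop) :
    tupleProb N d A = pr (fun ψ => ∃ hψ : IsInv ψ, A (gr ψ hψ)) := by
  have key : ∀ A : (Fin d → SimpleGraph (Fin N)) → Prop,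
     (Finset.univ.filter (fun M : Fin d → SimpleGraph (Fin N) => IsPMTuple M ∧ A M)).card =
       (ev (fun ψ : Fin d → Fin N → Fin N => ∃ hψ : IsInv ψ, A (gr ψ hψ))).card := by
    intro A
    symm
    refine Finset.card_bij (fun ψ hψ => gr ψ (mem_ev.1 hψ).1) ?_ ?_ ?_
    · intro ψ hψ
      obtain ⟨h1, h2, h3⟩ := mem_ev.1 hψ
      simp only [mem_filter, mem_univ, true_and]
      exact ⟨gr_isPM _ _, h3⟩
    · intro ψ hψ ψ' hψ' h
      funext c x
      have h1 : (gr ψ (mem_ev.1 hψ).1 c).Adj x (ψ c x) := rfl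
      rw [h] at h1
      exact (show ψ' c x = ψ c x from h1).symm
    · intro M hM
      simp only [mem_filter, mem_univ, true_and] at hM
      obtain ⟨ψ, hψ, h⟩ := gr_surj M hM.1
      refine ⟨ψ, mem_ev.2 ⟨hψ, hψ, ?_⟩, h⟩
      rw [h]; exact hM.2
  unfold tupleProb pr
  rw [key A]
  congr 2
  have := key (fun _ => True)
  simp only [and_true] at this
  rw [this]
  congr 1
  ext ψ
  rw [mem_ev]
  simp [Om]

lemma pr_not (E : (Fin d → Fin N → Fin N) → Prop) (h : ∃ ψ : Fin d → Fin N → Fin N, IsInv ψ) :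
    pr E = 1 - pr (fun ψ => ¬ E ψ) := by
  unfold pr
  have h0 : (0 : ℝ) < (Om d N).card := by
    obtain ⟨ψ, hψ⟩ := h
    have : 0 < (Om d N).card := card_pos.2 ⟨ψ, by simp [Om, hψ]⟩
    exact_mod_cast this
  rw [eq_sub_iff_add_eq, ← add_div, div_eq_one_iff_eq h0.ne']
  have : Disjoint (ev E) (ev (fun ψ => ¬ E ψ)) := by
    rw [Finset.disjoint_left]
    intro ψ h1 h2
    exact (mem_ev.1 h2).2 (mem_ev.1 h1).2
  have h2 : Om d N = ev E ∪ ev (fun ψ => ¬ E ψ) := by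
    ext ψ
    rw [mem_union, mem_ev, mem_ev]
    simp only [Om, mem_filter, mem_univ, true_and]
    tauto
  rw [h2, card_union_of_disjoint this]
  push_cast; rfl

lemma exists_isInv (m : ℕ) (hm : 0 < m) (hdm : d ≤ m) : ∃ ψ : Fin d → Fin (m + m) → Fin (m + m), IsInv ψ := by
  haveI : NeZero m := ⟨hm.ne'⟩
  let e : Fin (m + m) ≃ (Fin m ⊕ Fin m) := finSumFinEquiv.symm
  let f : Fin d → Fin m := fun c => Fin.castLE hdm c
  let g : Fin d → (Fin m ⊕ Fin m) → (Fin m ⊕ Fin m) := fun c s =>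
    Sum.elim (fun a => Sum.inr (a + f c)) (fun a => Sum.inl (a - f c)) s
  refine ⟨fun c x => e.symm (g c (e x)), ?_, ?_, ?_⟩
  · intro c x
    simp only [Equiv.apply_symm_apply]
    have : g c (g c (e x)) = e x := by
      rcases e x with a | a <;> simp [g]
    rw [this]; simp
  · intro c x h
    have h' : g c (e x) = e x := e.symm_apply_eq.1 h
    rcases h2 : e x with a | a <;> rw [h2] at h' <;> simp [g] at h'
  · intro c c' x h
    have h' : g c (e x) = g c' (e x) := e.symm.injective h
    have : f c = f c' := by
      rcases h2 : e x with a | a <;> rw [h2] at h' <;> simpa [g] using h'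
    exact Fin.castLE_injective hdm this
end Prob2
end STI


namespace STI
open Finset

section Girth
open Classical
variable {α : Type*} {V : Type*} [DecidableEq α] [DecidableEq V]

/-- coloured edge of a step -/
def ed (φ : α → V → V) (a : α) (x : V) : α × Sym2 V := (a, s(x, φ a x))

lemma ed_symm (φ : α → V → V) (hφ : ∀ a x, φ a (φ a x) = x) (a : α) (x : V) : ed φ a (φ a x) = ed φ a x := by
  simp [ed, hφ, Sym2.eq_swap]

def FS (φ : α → V → V) (F : Set (α × Sym2 V)) (a : α) (x : V) : Prop := ed φ a x ∈ F

lemma FS_symm {φ : α → V → V} (hφ : ∀ a x, φ a (φ a x) = x) {F : Set (α × Sym2 V)} {a : α} {x : V}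
    (h : FS φ F a x) : FS φ F a (φ a x) := by
  unfold FS at *; rwa [ed_symm φ hφ]

def Girth (φ : α → V → V) (h : ℕ) (F : Set (α × Sym2 V)) : Prop :=
  ∀ w x, Rd w → w ≠ [] → w.length ≤ 2 * h → St φ (FS φ F) w x → act φ w x ≠ x

def Tame (φ : α → V → V) (l : ℕ) (x : V) : Prop :=
  ∀ w, w.length ≤ l → act φ w x = x → red w = []

lemma tame_move {φ : α → V → V} (hφ : ∀ a x, φ a (φ a x) = x) {l l' : ℕ} {x : V} (ρ : List α)
    (h : Tame φ l x) (hl : l' + 2 * ρ.length ≤ l) : Tame φ l' (act φ ρ x) := by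
  intro w hw h1
  apply red_conj (ρ := ρ)
  apply h
  · simp; omega
  · rw [act_append, act_append, h1, act_reverse_act φ hφ]

lemma exists_maxF [Finite α] [Finite V] (φ : α → V → V) (h : ℕ) : ∃ F : Set (α × Sym2 V),
    Girth φ h F ∧ ∀ e ∉ F, ¬ Girth φ h (insert e F) := by
  have h0 : Girth φ h ∅ := by
    intro w x _ hw _ hs
    cases w with
    | nil => exact absurd rfl hw
    | cons a w => exact absurd hs.2 (by simp [FS])
  haveI : Finite (Set (α × Sym2 V)) := by
    haveI : Finite (Sym2 V) := Quot.finite _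
    infer_instance
  obtain ⟨F, _, hF⟩ := Set.Finite.exists_le_maximal (Set.toFinite {F | Girth φ h F}) h0
  refine ⟨F, hF.prop, ?_⟩
  intro e he hg
  have := hF.le_of_ge hg (Set.subset_insert e F)
  exact he (this (Set.mem_insert e F))

noncomputable def maxF [Finite α] [Finite V] (φ : α → V → V) (h : ℕ) : Set (α × Sym2 V) := (exists_maxF φ h).choose
lemma maxF_girth [Finite α] [Finite V] (φ : α → V → V) (h : ℕ) : Girth φ h (maxF φ h) :=
  (exists_maxF φ h).choose_spec.1
lemma maxF_max [Finite α] [Finite V] (φ : α → V → V) (h : ℕ) : ∀ e ∉ maxF φ h, ¬ Girth φ h (insert e (maxF φ h)) :=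
  (exists_maxF φ h).choose_spec.2

/-- uniqueness of short F-paths -/
lemma LA {φ : α → V → V} (hφ : ∀ a x, φ a (φ a x) = x) {h : ℕ} {F : Set (α × Sym2 V)} (hF : Girth φ h F)
    {w w' : List α} {x : V} (hw : Rd w) (hw' : Rd w') (hs : St φ (FS φ F) w x) (hs' : St φ (FS φ F) w' x)
    (hl : w.length + w'.length ≤ 2 * h) (he : act φ w x = act φ w' x) : w = w' := by
  have h1 : St φ (FS φ F) (w'.reverse ++ w) x := by
    rw [St_append]
    refine ⟨hs, ?_⟩
    rw [he]
    exact St_reverse hφ (fun a x => FS_symm hφ) hs'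
  have h2 : act φ (w'.reverse ++ w) x = x := by
    rw [act_append, he, act_reverse_act φ hφ]
  have h3 : red (w'.reverse ++ w) = [] := by
    by_contra hne
    refine hF _ x (rd_red _) hne ?_ (St_red hφ h1) (by rw [act_red φ hφ, h2])
    refine (length_red_le _).trans ?_
    simp; omega
  have := red_eq_of_cancel h3
  rwa [red_of_rd hw, red_of_rd hw'] at this

/-- first use of the extra edge -/
lemma first_use {φ : α → V → V} {F : Set (α × Sym2 V)} {e : α × Sym2 V} (w : List α) (x : V)
    (hs : St φ (FS φ (insert e F)) w x) : St φ (FS φ F) w x ∨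
    ∃ w2 c w1, w = w2 ++ c :: w1 ∧ St φ (FS φ F) w1 x ∧ ed φ c (act φ w1 x) = e := by
  induction w with
  | nil => left; trivial
  | cons a w ih =>
    rcases ih hs.1 with h | ⟨w2, c, w1, h1, h2, h3⟩
    · by_cases he : ed φ a (act φ w x) = e
      · right; exact ⟨[], a, w, rfl, h, he⟩
      · left
        exact ⟨h, hs.2.resolve_left he⟩
    · right; exact ⟨a :: w2, c, w1, by rw [h1]; rfl, h2, h3⟩

lemma ed_eq {φ : α → V → V} {a c : α} {x z : V} (h : ed φ c z = ed φ a x) : c = a ∧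
    (z = x ∨ z = φ a x) := by
  unfold ed at h
  simp only [Prod.mk.injEq, Sym2.eq_iff] at h
  exact ⟨h.1, by tauto⟩

/-- a removed edge closes a short F-path -/
lemma removed_path {φ : α → V → V} (hφ : ∀ a x, φ a (φ a x) = x) {h : ℕ} {F : Set (α × Sym2 V)}
    (hF : Girth φ h F) (hm : ∀ e ∉ F, ¬ Girth φ h (insert e F)) {a : α} {x : V} (hx : ed φ a x ∉ F) :
    ∃ w, w.length + 1 ≤ 2 * h ∧ Rd w ∧ St φ (FS φ F) w (φ a x) ∧ act φ w (φ a x) = x := by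
  suffices hh : ∃ w z, w.length + 1 ≤ 2 * h ∧ St φ (FS φ F) w (φ a z) ∧ act φ w (φ a z) = z ∧ (z = x ∨ z = φ a x) by
    obtain ⟨w, z, h1, h2, h3, h4⟩ := hh
    rcases h4 with rfl | rfl
    · exact ⟨red w, by have := length_red_le w; omega, rd_red _, St_red hφ h2, by rw [act_red φ hφ, h3]⟩
    · rw [hφ] at h2 h3
      refine ⟨red w.reverse, ?_, rd_red _, ?_, ?_⟩
      · have := length_red_le w.reverse
        simp at this; omega
      · have := St_reverse hφ (fun a x => FS_symm hφ) h2
        rw [h3] at this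
        exact St_red hφ this
      · rw [act_red φ hφ]
        have := act_reverse_act φ hφ w x
        rwa [h3] at this
  have := hm _ hx
  unfold Girth at this
  push Not at this
  obtain ⟨w, y, hr, hne, hl, hs, hc⟩ := this
  rcases first_use w y hs with h1 | ⟨w2, c, w1, h1, h2, h3⟩
  · exact absurd hc (hF w y hr hne hl h1)
  obtain ⟨rfl, h4⟩ := ed_eq h3
  have hs2 : St φ (FS φ (insert (ed φ c x) F)) w2 (φ c (act φ w1 y)) := by
    rw [h1, St_append] at hs
    exact hs.2
  have hc2 : act φ w2 (φ c (act φ w1 y)) = y := by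
    rw [h1, act_append] at hc; exact hc
  have hlen : w.length = w2.length + w1.length + 1 := by rw [h1]; simp; omega
  set z := act φ w1 y with hz
  rcases first_use w2 _ hs2 with h5 | ⟨w4, c', w3, h5, h6, h7⟩
  · refine ⟨w1 ++ w2, z, by simp; omega, ?_, ?_, h4⟩
    · rw [St_append]; refine ⟨h5, ?_⟩; rw [hc2]; exact h2
    · rw [act_append, hc2]
  obtain ⟨rfl, h8⟩ := ed_eq h7
  have hlen2 : w2.length = w4.length + w3.length + 1 := by rw [h5]; simp; omega
  have h9 : act φ w3 (φ c' z) = z ∨ act φ w3 (φ c' z) = φ c' z := by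
    rcases h4 with h4 | h4 <;> rcases h8 with h8 | h8
    · left; rw [h8, h4]
    · right; rw [h8, h4]
    · right; rw [h8, h4, hφ]
    · left; rw [h8, h4]
  rcases h9 with h9 | h9
  · exact ⟨w3, z, by omega, h6, h9, h4⟩
  · exfalso
    have hr3 : Rd (w3 ++ c' :: w1) := by
      rw [h1, h5] at hr
      have : w4 ++ c' :: w3 ++ c' :: w1 = (w4 ++ [c']) ++ (w3 ++ c' :: w1) := by simp
      rw [this] at hr
      exact rd_append_right hr
    have h10 : w3 = [] := by
      by_contra hne3
      exact hF w3 _ (rd_append_left hr3) hne3 (by omega) h6 h9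
    rw [h1, h5, h10] at hr
    have : w4 ++ c' :: [] ++ c' :: w1 = w4 ++ (c' :: c' :: w1) := by simp
    rw [this] at hr
    have := (rd_cons.1 (rd_append_right hr)).1
    simp at this

lemma removed_untame {φ : α → V → V} (hφ : ∀ a x, φ a (φ a x) = x) {h : ℕ} {F : Set (α × Sym2 V)}
    (hF : Girth φ h F) (hm : ∀ e ∉ F, ¬ Girth φ h (insert e F)) {a : α} {x : V} (hx : ed φ a x ∉ F) :
    ¬ Tame φ (2 * h) x := by
  obtain ⟨w, h1, h2, h3, h4⟩ := removed_path hφ hF hm hx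
  intro ht
  have h5 : red (w ++ [a]) = [] := by
    apply ht
    · simp; omega
    · rw [act_append]; exact h4
  have h6 : red [a] = red w.reverse := by
    apply red_eq_of_cancel
    rw [List.reverse_reverse]; exact h5
  rw [red_of_rd (rd_reverse h2)] at h6
  have h7 : w = [a] := by
    have := congrArg List.reverse h6
    simpa [push] using this.symm
  subst h7
  apply hx
  have := h3.2
  unfold FS at this
  simp only [act_nil] at this
  rwa [ed_symm φ hφ] at this

/-- visited vertices and edges -/
noncomputable def vis (φ : α → V → V) : List α → V → Finset V
  | [], x => {x}
  | a :: w, x => insert (φ a (act φ w x)) (vis φ w x)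
noncomputable def es (φ : α → V → V) : List α → V → Finset (α × Sym2 V)
  | [], _ => ∅
  | a :: w, x => insert (ed φ a (act φ w x)) (es φ w x)

lemma act_mem_vis (φ : α → V → V) (w : List α) (x : V) : act φ w x ∈ vis φ w x := by
  cases w with
  | nil => simp [vis]
  | cons a w => simp [vis]

lemma es_sub (φ : α → V → V) (w : List α) (x : V) : ∀ p ∈ es φ w x, p.2 ∈ (vis φ w x).sym2 := by
  induction w with
  | nil => simp [es]
  | cons a w ih =>
    intro p hp
    simp only [es, mem_insert] at hp
    rcases hp with rfl | hp
    · simp only [ed, mk_mem_sym2_iff, vis]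
      exact ⟨mem_insert_of_mem (act_mem_vis φ w x), mem_insert_self _ _⟩
    · exact sym2_mono (subset_insert _ _) (ih p hp)

lemma card_vis_le (φ : α → V → V) (w : List α) (x : V) : (vis φ w x).card ≤ (es φ w x).card + 1 := by
  induction w with
  | nil => simp [vis, es]
  | cons a w ih =>
    simp only [vis, es]
    by_cases h : φ a (act φ w x) ∈ vis φ w x
    · rw [insert_eq_of_mem h]
      exact ih.trans (Nat.succ_le_succ (card_le_card (subset_insert _ _)))
    · rw [card_insert_of_notMem h, card_insert_of_notMem]
      · omega
      · intro h2
        have := es_sub φ w x _ h2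
        simp only [ed, mk_mem_sym2_iff] at this
        exact h this.2

lemma card_vis_le' (φ : α → V → V) (w : List α) (x : V) : (vis φ w x).card ≤ w.length + 1 := by
  induction w with
  | nil => simp [vis]
  | cons a w ih =>
    simp only [vis, List.length_cons]
    exact (card_insert_le _ _).trans (by omega)

lemma es_mem (φ : α → V → V) (P : Set (α × Sym2 V)) (w : List α) (x : V) (hs : St φ (FS φ P) w x) :
    ∀ p ∈ es φ w x, p ∈ P := by
  induction w with
  | nil => simp [es]
  | cons a w ih =>
    intro p hp
    simp only [es, mem_insert] at hp
    rcases hp with rfl | hp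
    · exact hs.2
    · exact ih hs.1 p hp

lemma es_edge (φ : α → V → V) (w : List α) (x : V) : ∀ p ∈ es φ w x, ∃ a z, p = ed φ a z := by
  induction w with
  | nil => simp [es]
  | cons a w ih =>
    intro p hp
    simp only [es, mem_insert] at hp
    rcases hp with rfl | hp
    · exact ⟨_, _, rfl⟩
    · exact ih p hp

lemma vis_append (φ : α → V → V) (w w' : List α) (x : V) :
    vis φ w' x ⊆ vis φ (w ++ w') x := by
  induction w with
  | nil => simp
  | cons a w ih => exact ih.trans (subset_insert _ _)

lemma start_mem_vis (φ : α → V → V) (w : List α) (x : V) : x ∈ vis φ w x := by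
  have := vis_append φ w [] x
  simp only [List.append_nil] at this
  exact this (by simp [vis])

/-- generic version of a small dense set -/
def DenseA (φ : α → V → V) (H : ℕ) : Prop :=
  ∃ W : Finset V, ∃ B : Finset (α × Sym2 V), W.card ≤ H ∧ B.card = W.card + 1 ∧
    (∀ p ∈ B, p.2 ∈ W.sym2) ∧ ∀ p ∈ B, ∃ a z, p = ed φ a z

lemma two_removed {φ : α → V → V} (hφ : ∀ a x, φ a (φ a x) = x) {h : ℕ} {F : Set (α × Sym2 V)}
    (hF : Girth φ h F) (hm : ∀ e ∉ F, ¬ Girth φ h (insert e F)) {a a' : α} {x x' : V}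
    (hx : ed φ a x ∉ F) (hx' : ed φ a' x' ∉ F) (hne : ed φ a x ≠ ed φ a' x')
    (hxx : x' = x ∨ ∃ c, x' = φ c x ∧ FS φ F c x) : DenseA φ (4 * h) := by
  obtain ⟨w, h1, h2, h3, h4⟩ := removed_path hφ hF hm hx
  obtain ⟨w', h1', h2', h3', h4'⟩ := removed_path hφ hF hm hx'
  have hcon : ∃ v, v.length ≤ 1 ∧ St φ (FS φ F) v x ∧ act φ v x = x' := by
    rcases hxx with rfl | ⟨c, rfl, hc⟩
    · exact ⟨[], by simp, trivial, rfl⟩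
    · exact ⟨[c], by simp, ⟨trivial, hc⟩, rfl⟩
  obtain ⟨v, hv1, hv2, hv3⟩ := hcon
  set u := w'.reverse ++ (v ++ w) with hu
  have hrev := St_reverse hφ (fun a x => FS_symm hφ) h3'
  rw [h4'] at hrev
  have hus : St φ (FS φ F) u (φ a x) := by
    rw [hu, St_append, St_append, act_append, h4, hv3]
    exact ⟨⟨h3, hv2⟩, hrev⟩
  have hul : u.length + 1 ≤ 4 * h := by simp [hu]; omega
  set W := vis φ u (φ a x) with hW
  have m1 : φ a x ∈ W := start_mem_vis φ u _
  have m2 : x ∈ W := by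
    have : x ∈ vis φ w (φ a x) := by
      have := act_mem_vis φ w (φ a x)
      rwa [h4] at this
    rw [hW, hu, ← List.append_assoc]
    exact vis_append φ _ _ _ this
  have m3 : x' ∈ W := by
    have : x' ∈ vis φ (v ++ w) (φ a x) := by
      have := act_mem_vis φ (v ++ w) (φ a x)
      rwa [act_append, h4, hv3] at this
    exact vis_append φ _ _ _ this
  have m4 : φ a' x' ∈ W := by
    have := act_mem_vis φ u (φ a x)
    rw [hu, act_append, act_append, h4, hv3] at this
    have h5 := act_reverse_act φ hφ w' (φ a' x')
    rw [h4'] at h5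
    rwa [h5] at this
  set B0 := insert (ed φ a x) (insert (ed φ a' x') (es φ u (φ a x))) with hB0
  have hBc : W.card + 1 ≤ B0.card := by
    have e1 : ed φ a' x' ∉ es φ u (φ a x) := fun h => hx' (es_mem φ F u _ hus _ h)
    have e2 : ed φ a x ∉ insert (ed φ a' x') (es φ u (φ a x)) := by
      rw [mem_insert]
      rintro (h | h)
      · exact hne h
      · exact hx (es_mem φ F u _ hus _ h)
    rw [hB0, card_insert_of_notMem e2, card_insert_of_notMem e1]
    have := card_vis_le φ u (φ a x)
    rw [← hW] at this
    omega
  obtain ⟨B, hB1, hB2⟩ := exists_subset_card_eq hBc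
  refine ⟨W, B, ?_, hB2, ?_, ?_⟩
  · have := card_vis_le' φ u (φ a x); rw [← hW] at this; omega
  · intro p hp
    have := hB1 hp
    rw [hB0, mem_insert, mem_insert] at this
    rcases this with rfl | rfl | h
    · simp only [ed, mk_mem_sym2_iff]; exact ⟨m2, m1⟩
    · simp only [ed, mk_mem_sym2_iff]; exact ⟨m3, m4⟩
    · exact es_sub φ u _ p h
  · intro p hp
    have := hB1 hp
    rw [hB0, mem_insert, mem_insert] at this
    rcases this with rfl | rfl | h
    · exact ⟨_, _, rfl⟩
    · exact ⟨_, _, rfl⟩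
    · exact es_edge φ u _ p h

end Girth
end STI


namespace STI
open Finset

section Core

def enc3 : List Bool → List (Fin 3)
  | [] => []
  | b :: bs => ((enc3 bs).headD 0 + (if b then 1 else 2)) :: enc3 bs

lemma enc3_length (bs : List Bool) : (enc3 bs).length = bs.length := by
  induction bs with
  | nil => rfl
  | cons b bs ih => simp [enc3, ih]

lemma enc3_inj (bs bs' : List Bool) (h : enc3 bs = enc3 bs') : bs = bs' := by
  induction bs generalizing bs' with
  | nil =>
    cases bs' with
    | nil => rfl
    | cons b bs' => simp [enc3] at h
  | cons b bs ih =>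
    cases bs' with
    | nil => simp [enc3] at h
    | cons b' bs' =>
      simp only [enc3, List.cons.injEq] at h
      have h2 := ih bs' h.2
      subst h2
      have h1 := add_left_cancel h.1
      congr 1
      cases b <;> cases b' <;> simp at h1 ⊢

lemma enc3_rd (bs : List Bool) : Rd (enc3 bs) := by
  induction bs with
  | nil => simp [enc3, Rd]
  | cons b bs ih =>
    rw [enc3, rd_cons]
    refine ⟨?_, ih⟩
    have key : ∀ (z : Fin 3) (b : Bool), z ≠ z + (if b then 1 else 2) := by decide
    cases enc3 bs with
    | nil => simp
    | cons z t =>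
      simp only [List.head?_cons, List.headD_cons, ne_eq, Option.some.injEq]
      exact key z b

variable {k : ℕ}
def enc (j : Fin k) (bs : List Bool) : List (Fin k × Fin 3) := (enc3 bs).map (fun t => (j, t))

lemma enc_length (j : Fin k) (bs : List Bool) : (enc j bs).length = bs.length := by
  simp [enc, enc3_length]

lemma enc_inj {j : Fin k} {bs bs' : List Bool} (h : enc j bs = enc j bs') : bs = bs' := by
  apply enc3_inj
  exact List.map_injective_iff.2 (fun a b h => (Prod.mk.inj h).2) h

lemma enc_rd (j : Fin k) (bs : List Bool) : Rd (enc j bs) := by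
  unfold enc Rd
  rw [List.isChain_map]
  exact (enc3_rd bs).imp (fun a b h h2 => h (Prod.mk.inj h2).2)

lemma enc_nil (j : Fin k) : enc j [] = [] := rfl

lemma enc_cons (j : Fin k) (b : Bool) (bs : List Bool) : ∃ t, enc j (b :: bs) = (j, t) :: enc j bs := by
  exact ⟨_, rfl⟩

lemma enc_eq_nil {j : Fin k} {bs : List Bool} (h : enc j bs = []) : bs = [] := by
  have := congrArg List.length h
  rw [enc_length] at this
  exact List.length_eq_zero_iff.1 this

lemma enc_fst {j : Fin k} {bs : List Bool} {a : Fin k × Fin 3} (h : a ∈ enc j bs) : a.1 = j := by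
  unfold enc at h
  rw [List.mem_map] at h
  obtain ⟨t, _, rfl⟩ := h
  rfl

lemma enc_suffix {j : Fin k} {bs : List Bool} {σ : List (Fin k × Fin 3)} (h : σ <:+ enc j bs) :
    ∃ bs', bs' <:+ bs ∧ σ = enc j bs' := by
  induction bs with
  | nil =>
    rw [enc_nil, List.suffix_nil] at h
    exact ⟨[], List.suffix_rfl, h⟩
  | cons b bs ih =>
    obtain ⟨t, ht⟩ := enc_cons j b bs
    rw [ht, List.suffix_cons_iff] at h
    rcases h with h | h
    · exact ⟨b :: bs, List.suffix_rfl, h.trans ht.symm⟩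
    · obtain ⟨bs', h1, h2⟩ := ih h
      exact ⟨bs', h1.trans (List.suffix_cons _ _), h2⟩

variable {V : Type*}

/-- a bad prefix word -/
def bad (φ : Fin k × Fin 3 → V → V) (R l1 : ℕ) (r : V) (σ : List (Fin k × Fin 3)) : Prop :=
  (∃ ρ : List (Fin k × Fin 3), ρ.length ≤ 3 ∧ ∃ j' bs', List.length bs' ≤ R ∧
    red ((enc j' bs').reverse ++ (ρ ++ σ)) ≠ [] ∧ act φ ((enc j' bs').reverse ++ (ρ ++ σ)) r = r) ∨
  (∃ κ : List (Fin k × Fin 3), κ.length ≤ l1 ∧ red (σ.reverse ++ (κ ++ σ)) ≠ [] ∧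
    act φ (σ.reverse ++ (κ ++ σ)) r = r)

def gd (φ : Fin k × Fin 3 → V → V) (R l1 : ℕ) (r : V) (j : Fin k) (bs : List Bool) : Prop :=
  bs.length ≤ R ∧ ∀ bs', bs' <:+ bs → ¬ bad φ R l1 r (enc j bs')

def Core (φ : Fin k × Fin 3 → V → V) (R l1 : ℕ) (r : V) (j : Fin k) : Set V :=
  {x | ∃ bs, bs ≠ [] ∧ gd φ R l1 r j bs ∧ x = act φ (enc j bs) r}

def CR (φ : Fin k × Fin 3 → V → V) (R l1 : ℕ) (r : V) : Set V :=
  {x | ∃ j bs, gd φ R l1 r j bs ∧ x = act φ (enc j bs) r}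

variable {φ : Fin k × Fin 3 → V → V} {R l1 : ℕ} {r : V}

lemma gd_suffix {j : Fin k} {bs bs' : List Bool} (h : gd φ R l1 r j bs) (hs : bs' <:+ bs) : gd φ R l1 r j bs' :=
  ⟨hs.length_le.trans h.1, fun b hb => h.2 b (hb.trans hs)⟩

lemma Core_sub_CR {j : Fin k} {x : V} (h : x ∈ Core φ R l1 r j) : x ∈ CR φ R l1 r := by
  obtain ⟨bs, _, h1, h2⟩ := h
  exact ⟨j, bs, h1, h2⟩

lemma CR_cases {x : V} (h : x ∈ CR φ R l1 r) : x = r ∨ ∃ j, x ∈ Core φ R l1 r j := by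
  obtain ⟨j, bs, h1, h2⟩ := h
  by_cases hb : bs = []
  · subst hb; left; exact h2
  · right; exact ⟨j, bs, hb, h1, h2⟩

lemma core_uniq (hφ : ∀ a x, φ a (φ a x) = x) {j j' : Fin k} {bs bs' : List Bool}
    (h : gd φ R l1 r j bs) (h' : gd φ R l1 r j' bs') {ρ : List (Fin k × Fin 3)} (hρ : ρ.length ≤ 3)
    (he : act φ (ρ ++ enc j bs) r = act φ (enc j' bs') r) : red (ρ ++ enc j bs) = enc j' bs' := by
  have h1 := h.2 bs List.suffix_rfl
  have h2 : red ((enc j' bs').reverse ++ (ρ ++ enc j bs)) = [] := by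
    by_contra hne
    apply h1
    left
    refine ⟨ρ, hρ, j', bs', h'.1, hne, ?_⟩
    rw [act_append, he, act_reverse_act φ hφ]
  rw [red_eq_of_cancel h2, red_of_rd (enc_rd _ _)]

lemma core_disj (hφ : ∀ a x, φ a (φ a x) = x) {i j : Fin k} {x : V} (h : x ∈ Core φ R l1 r i)
    (h' : x ∈ Core φ R l1 r j) : i = j := by
  obtain ⟨bs, h1, h2, h3⟩ := h
  obtain ⟨bs', h1', h2', h3'⟩ := h'
  have := core_uniq hφ h2 h2' (ρ := []) (by simp) (by simpa [h3] using h3')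
  rw [List.nil_append, red_of_rd (enc_rd _ _)] at this
  cases bs with
  | nil => exact absurd rfl h1
  | cons b bs =>
    obtain ⟨t, ht⟩ := enc_cons i b bs
    have hm : (i, t) ∈ enc j bs' := by rw [← this, ht]; simp
    exact enc_fst hm

lemma core_ne_r (hφ : ∀ a x, φ a (φ a x) = x) {i : Fin k} : r ∉ Core φ R l1 r i := by
  rintro ⟨bs, h1, h2, h3⟩
  have := core_uniq hφ h2 (gd_suffix h2 (List.nil_suffix)) (ρ := []) (by simp) (by simpa [enc_nil] using h3.symm)
  rw [List.nil_append, red_of_rd (enc_rd _ _)] at this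
  exact h1 (enc_inj this)

lemma CR_tame (hφ : ∀ a x, φ a (φ a x) = x) {x : V} (h : x ∈ CR φ R l1 r) : Tame φ l1 x := by
  obtain ⟨j, bs, h1, rfl⟩ := h
  intro w hw he
  apply red_conj (ρ := enc j bs)
  by_contra hne
  apply h1.2 bs List.suffix_rfl
  right
  refine ⟨w, hw, hne, ?_⟩
  rw [act_append, act_append, he, act_reverse_act φ hφ]

lemma r_mem_CR {j : Fin k} {x : V} (h : x ∈ Core φ R l1 r j) : r ∈ CR φ R l1 r := by
  obtain ⟨bs, h1, h2, h3⟩ := h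
  exact ⟨j, [], gd_suffix h2 List.nil_suffix, rfl⟩

/-- the ear property -/
lemma core_ear (hφ : ∀ a x, φ a (φ a x) = x) {x : V} (hx : x ∈ CR φ R l1 r) {ρ : List (Fin k × Fin 3)}
    {c : Fin k × Fin 3} (hρ : Rd (ρ ++ [c])) (h1 : 1 ≤ ρ.length) (h2 : ρ.length ≤ 2)
    (hy : act φ (ρ ++ [c]) x ∈ CR φ R l1 r) : φ c x ∈ CR φ R l1 r := by
  obtain ⟨j, bs, g1, rfl⟩ := hx
  obtain ⟨j', bs', g2, e2⟩ := hy
  rw [← act_append] at e2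
  have hu := core_uniq hφ g1 g2 (by simp; omega) e2
  by_cases hc : (enc j bs).head? = some c
  · have h3 := head_some hc
    obtain ⟨bs0, h4, h5⟩ := enc_suffix (List.tail_suffix (enc j bs))
    refine ⟨j, bs0, gd_suffix g1 h4, ?_⟩
    rw [← h5]
    conv_lhs => rw [h3]
    simp [hφ]
  · have hrd : Rd (ρ ++ [c] ++ enc j bs) := by
      have hcs : Rd (c :: enc j bs) := rd_cons.2 ⟨hc, enc_rd _ _⟩
      rw [List.append_assoc, List.singleton_append]
      unfold Rd at hρ hcs ⊢
      rw [List.isChain_append] at hρ ⊢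
      refine ⟨hρ.1, hcs, ?_⟩
      intro z hz y hy
      exact hρ.2.2 z hz y (by simpa using hy)
    rw [red_of_rd hrd] at hu
    have hs : (c :: enc j bs) <:+ enc j' bs' := ⟨ρ, by rw [← hu]; simp⟩
    obtain ⟨bs'', h3, h4⟩ := enc_suffix hs
    refine ⟨j', bs'', gd_suffix g2 h3, ?_⟩
    rw [← h4]; rfl

lemma core_other (hφ : ∀ a x, φ a (φ a x) = x) {i j : Fin k} (hij : i ≠ j) {x : V} (hx : x ∈ Core φ R l1 r j)
    (t : Fin 3) : φ (i, t) x ∉ CR φ R l1 r := by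
  rintro ⟨j', bs', g2, e2⟩
  obtain ⟨bs, hne, g1, rfl⟩ := hx
  have hu := core_uniq hφ g1 g2 (ρ := [(i, t)]) (by simp) e2
  cases bs with
  | nil => exact hne rfl
  | cons b bs =>
    obtain ⟨t', ht⟩ := enc_cons j b bs
    have hrd : Rd ([(i, t)] ++ enc j (b :: bs)) := by
      rw [List.singleton_append, rd_cons]
      refine ⟨?_, enc_rd _ _⟩
      rw [ht]
      simp only [List.head?_cons, ne_eq, Option.some.injEq, Prod.mk.injEq, not_and]
      intro h; exact absurd h.symm hij
    rw [red_of_rd hrd, ht] at hu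
    have h1 : (i, t) ∈ enc j' bs' := by rw [← hu]; simp
    have h2 : (j, t') ∈ enc j' bs' := by rw [← hu]; simp
    exact hij ((enc_fst h1).trans (enc_fst h2).symm)

lemma core_parent (hφ : ∀ a x, φ a (φ a x) = x) (i : Fin k) : ∃ dep : V → ℕ, ∀ x ∈ Core φ R l1 r i,
    dep x ≤ R ∧ ∃ a, (φ a x = r ∨ (φ a x ∈ Core φ R l1 r i ∧ dep (φ a x) < dep x)) := by
  classical
  let dep : V → ℕ := fun x => if h : x ∈ Core φ R l1 r i then h.choose.length else 0
  have hdep : ∀ bs, bs ≠ [] → gd φ R l1 r i bs → dep (act φ (enc i bs) r) = bs.length := by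
    intro bs h1 h2
    have hm : act φ (enc i bs) r ∈ Core φ R l1 r i := ⟨bs, h1, h2, rfl⟩
    have hs := hm.choose_spec
    have hu := core_uniq hφ h2 hs.2.1 (ρ := []) (by simp) (by simpa using hs.2.2)
    rw [List.nil_append, red_of_rd (enc_rd _ _)] at hu
    simp only [dep, dif_pos hm]
    rw [← enc_inj hu]
  refine ⟨dep, ?_⟩
  rintro x ⟨bs, h1, h2, rfl⟩
  rw [hdep bs h1 h2]
  refine ⟨h2.1, ?_⟩
  cases bs with
  | nil => exact absurd rfl h1
  | cons b bs =>
    obtain ⟨t, ht⟩ := enc_cons i b bs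
    refine ⟨(i, t), ?_⟩
    have h3 : φ (i, t) (act φ (enc i (b :: bs)) r) = act φ (enc i bs) r := by rw [ht]; simp [hφ]
    rw [h3]
    by_cases hb : bs = []
    · subst hb; left; rfl
    · right
      have g := gd_suffix h2 (List.suffix_cons b bs)
      refine ⟨⟨bs, hb, g, rfl⟩, ?_⟩
      rw [hdep bs hb g]; simp

end Core
end STI


namespace STI
open Finset

section Growth
variable {k : ℕ} {V : Type*} [DecidableEq V] [Fintype V]

/-- allowed steps -/
def AL (φ : Fin k × Fin 3 → V → V) (F : Set ((Fin k × Fin 3) × Sym2 V)) (i : Fin k) (Γ : Set V)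
    (a : Fin k × Fin 3) (x : V) : Prop := a.1 = i ∧ FS φ F a x ∧ φ a x ∉ Γ

open Classical in
noncomputable def XX (φ : Fin k × Fin 3 → V → V) (F : Set ((Fin k × Fin 3) × Sym2 V)) (i : Fin k) (Γ : Set V)
    (m : ℕ) (v : V) : Finset V :=
  univ.filter (fun x => ∃ w, w.length = m ∧ St φ (AL φ F i Γ) w v ∧ act φ w v = x)

variable {φ : Fin k × Fin 3 → V → V} {F : Set ((Fin k × Fin 3) × Sym2 V)} {i : Fin k} {Γ : Set V}

lemma grow_two
    (H1 : ∀ x, x ∉ Γ → ∀ t t', ¬ AL φ F i Γ (i, t) x → ¬ AL φ F i Γ (i, t') x → t = t')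
    (H2 : ∀ x, x ∉ Γ → ∀ s t t', t ≠ s → t' ≠ s → AL φ F i Γ (i, s) x → ¬ AL φ F i Γ (i, t) x →
      ¬ AL φ F i Γ (i, t') (φ (i, s) x) → False)
    (x : V) (hx : x ∉ Γ) (s : Fin 3) : ∃ t1 u1 t2 u2 : Fin 3, (u1, t1) ≠ (u2, t2) ∧
      (t1 ≠ s ∧ u1 ≠ t1 ∧ AL φ F i Γ (i, t1) x ∧ AL φ F i Γ (i, u1) (φ (i, t1) x)) ∧
      (t2 ≠ s ∧ u2 ≠ t2 ∧ AL φ F i Γ (i, t2) x ∧ AL φ F i Γ (i, u2) (φ (i, t2) x)) := by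
  have key : ∀ s : Fin 3, ∃ t1 t2 : Fin 3, t1 ≠ s ∧ t2 ≠ s ∧ t1 ≠ t2 := by decide
  have one : ∀ y, y ∉ Γ → ∀ t, ∃ u, u ≠ t ∧ AL φ F i Γ (i, u) y := by
    intro y hy t
    obtain ⟨u1, u2, h1, h2, h3⟩ := key t
    by_cases h : AL φ F i Γ (i, u1) y
    · exact ⟨u1, h1, h⟩
    · by_cases h' : AL φ F i Γ (i, u2) y
      · exact ⟨u2, h2, h'⟩
      · exact absurd (H1 y hy _ _ h h') h3
  have two : ∀ t1 t2 : Fin 3, t1 ≠ s → t2 ≠ s → t1 ≠ t2 → ¬ AL φ F i Γ (i, t1) x → ∃ t1 u1 t2 u2 : Fin 3, (u1, t1) ≠ (u2, t2) ∧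
      (t1 ≠ s ∧ u1 ≠ t1 ∧ AL φ F i Γ (i, t1) x ∧ AL φ F i Γ (i, u1) (φ (i, t1) x)) ∧
      (t2 ≠ s ∧ u2 ≠ t2 ∧ AL φ F i Γ (i, t2) x ∧ AL φ F i Γ (i, u2) (φ (i, t2) x)) := by
    intro t1 t2 h1 h2 h3 hb
    have ha : AL φ F i Γ (i, t2) x := by
      by_contra h; exact h3 (H1 x hx _ _ hb h)
    obtain ⟨u1, u2, g1, g2, g3⟩ := key t2
    refine ⟨t2, u1, t2, u2, fun h => g3 (Prod.mk.inj h).1, ⟨h2, g1, ha, ?_⟩, ⟨h2, g2, ha, ?_⟩⟩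
    · by_contra h; exact H2 x hx t2 t1 u1 h3 g1 ha hb h
    · by_contra h; exact H2 x hx t2 t1 u2 h3 g2 ha hb h
  obtain ⟨t1, t2, h1, h2, h3⟩ := key s
  by_cases a1 : AL φ F i Γ (i, t1) x
  · by_cases a2 : AL φ F i Γ (i, t2) x
    · obtain ⟨u1, g1, g1'⟩ := one _ a1.2.2 t1
      obtain ⟨u2, g2, g2'⟩ := one _ a2.2.2 t2
      exact ⟨t1, u1, t2, u2, fun h => h3 (Prod.mk.inj h).2, ⟨h1, g1, a1, g1'⟩, ⟨h2, g2, a2, g2'⟩⟩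
    · exact two t2 t1 h2 h1 h3.symm a2
  · exact two t1 t2 h1 h2 h3 a1

lemma grow_words
    (H1 : ∀ x, x ∉ Γ → ∀ t t', ¬ AL φ F i Γ (i, t) x → ¬ AL φ F i Γ (i, t') x → t = t')
    (H2 : ∀ x, x ∉ Γ → ∀ s t t', t ≠ s → t' ≠ s → AL φ F i Γ (i, s) x → ¬ AL φ F i Γ (i, t) x →
      ¬ AL φ F i Γ (i, t') (φ (i, s) x) → False) (b : ℕ) :
    ∀ x, x ∉ Γ → ∀ s, ∃ WS : Finset (List (Fin k × Fin 3)), WS.card = 2 ^ b ∧ ∀ w ∈ WS,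
      w.length = 2 * b ∧ St φ (AL φ F i Γ) w x ∧ Rd (w ++ [(i, s)]) := by
  induction b with
  | zero =>
    intro x hx s
    refine ⟨{[]}, by simp, ?_⟩
    intro w hw
    rw [mem_singleton] at hw
    subst hw
    exact ⟨rfl, trivial, by simp [Rd]⟩
  | succ b ih =>
    intro x hx s
    obtain ⟨t1, u1, t2, u2, hne, ⟨h1, h2, h3, h4⟩, ⟨g1, g2, g3, g4⟩⟩ := grow_two H1 H2 x hx s
    obtain ⟨W1, c1, p1⟩ := ih _ h4.2.2 u1
    obtain ⟨W2, c2, p2⟩ := ih _ g4.2.2 u2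
    refine ⟨W1.image (fun w => w ++ [(i, u1), (i, t1)]) ∪ W2.image (fun w => w ++ [(i, u2), (i, t2)]), ?_, ?_⟩
    · rw [card_union_of_disjoint, card_image_of_injective _ (List.append_left_injective _),
        card_image_of_injective _ (List.append_left_injective _), c1, c2]
      · ring
      · rw [Finset.disjoint_left]
        intro w hw1 hw2
        rw [mem_image] at hw1 hw2
        obtain ⟨v1, _, rfl⟩ := hw1
        obtain ⟨v2, _, e⟩ := hw2
        have := (List.append_inj' e rfl).2
        simp only [List.cons.injEq, Prod.mk.injEq, true_and, and_true] at this
        exact hne (by rw [this.1, this.2])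
    · have build : ∀ (t u : Fin 3) (w : List (Fin k × Fin 3)), t ≠ s → u ≠ t → AL φ F i Γ (i, t) x →
          AL φ F i Γ (i, u) (φ (i, t) x) → (w.length = 2 * b ∧ St φ (AL φ F i Γ) w (φ (i, u) (φ (i, t) x)) ∧
          Rd (w ++ [(i, u)])) → ((w ++ [(i, u), (i, t)]).length = 2 * (b + 1) ∧
          St φ (AL φ F i Γ) (w ++ [(i, u), (i, t)]) x ∧ Rd (w ++ [(i, u), (i, t)] ++ [(i, s)])) := by
        rintro t u w k1 k2 k3 k4 ⟨q1, q2, q3⟩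
        refine ⟨by simp [q1]; ring, ?_, ?_⟩
        · rw [St_append]
          exact ⟨⟨⟨trivial, k3⟩, k4⟩, q2⟩
        · unfold Rd at q3 ⊢
          rw [List.isChain_append] at q3
          rw [List.append_assoc, List.isChain_append]
          refine ⟨q3.1, ?_, ?_⟩
          · simp [k1, k2]
          · intro z hz y hy
            exact q3.2.2 z hz y (by simpa using hy)
      intro w hw
      rw [mem_union, mem_image, mem_image] at hw
      rcases hw with ⟨v, hv, rfl⟩ | ⟨v, hv, rfl⟩
      · exact build t1 u1 v h1 h2 h3 h4 (p1 v hv)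
      · exact build t2 u2 v g1 g2 g3 g4 (p2 v hv)

lemma grow_card (hφ : ∀ a x, φ a (φ a x) = x) {b : ℕ} (hF : Girth φ (2 * b + 1) F)
    (H1 : ∀ x, x ∉ Γ → ∀ t t', ¬ AL φ F i Γ (i, t) x → ¬ AL φ F i Γ (i, t') x → t = t')
    (H2 : ∀ x, x ∉ Γ → ∀ s t t', t ≠ s → t' ≠ s → AL φ F i Γ (i, s) x → ¬ AL φ F i Γ (i, t) x →
      ¬ AL φ F i Γ (i, t') (φ (i, s) x) → False)
    (v : V) (s : Fin 3) (hs : AL φ F i Γ (i, s) v) : 2 ^ b ≤ (XX φ F i Γ (2 * b + 1) v).card := by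
  obtain ⟨WS, c1, p1⟩ := grow_words H1 H2 b _ hs.2.2 s
  rw [← c1]
  apply card_le_card_of_injOn (fun w => act φ (w ++ [(i, s)]) v)
  · intro w hw
    obtain ⟨q1, q2, q3⟩ := p1 w hw
    simp only [XX, coe_filter, mem_univ, true_and, Set.mem_setOf_eq]
    refine ⟨w ++ [(i, s)], by simp [q1], ?_, rfl⟩
    rw [St_append]
    exact ⟨⟨trivial, hs⟩, q2⟩
  · intro w hw w' hw' he
    obtain ⟨q1, q2, q3⟩ := p1 w hw
    obtain ⟨q1', q2', q3'⟩ := p1 w' hw'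
    have hst : ∀ u, St φ (AL φ F i Γ) u (φ (i, s) v) → St φ (FS φ F) (u ++ [(i, s)]) v := by
      intro u hu
      rw [St_append]
      exact ⟨⟨trivial, hs.2.1⟩, St_mono (fun a x h => h.2.1) hu⟩
    have := LA hφ hF q3 q3' (hst w q2) (hst w' q2') (by simp [q1, q1']; omega) he
    exact List.append_cancel_right this

variable {R l1 h : ℕ} {r : V} {S : Set V}

/-- The three hang conditions. -/
lemma hang_H1 (hφ : ∀ a x, φ a (φ a x) = x)
    (hl : 2 * h + 4 ≤ l1) (hF : Girth φ h F) (hm : ∀ e ∉ F, ¬ Girth φ h (insert e F))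
    (hden : ¬ DenseA φ (4 * h))
    (S0 : ∀ y ∈ S, Tame φ l1 y) (S1 : ∀ y ∈ S, ∀ ρ : List (Fin k × Fin 3), ρ.length ≤ 3 → act φ ρ y ∉ CR φ R l1 r)
    (S2 : ∀ y ∈ S, ∀ ρ, Rd ρ → 2 ≤ ρ.length → ρ.length ≤ 3 → act φ ρ y ∉ S) (i : Fin k) :
    ∀ x, x ∉ CR φ R l1 r ∪ S → ∀ t t', ¬ AL φ F i (CR φ R l1 r ∪ S) (i, t) x →
      ¬ AL φ F i (CR φ R l1 r ∪ S) (i, t') x → t = t' := by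
  have tame : ∀ y ∈ CR φ R l1 r ∪ S, Tame φ l1 y := by
    rintro y (hy | hy)
    · exact CR_tame hφ hy
    · exact S0 y hy
  have mixed : ∀ x a a', ¬ FS φ F a x → φ a' x ∈ CR φ R l1 r ∪ S → False := by
    intro x a a' h1 h2
    apply removed_untame hφ hF hm h1
    have := tame_move hφ [a'] (l' := 2 * h) (tame _ h2) (by simp; omega)
    simpa [hφ] using this
  intro x hx t t' hb hb'
  by_contra hne
  have hne' : (i, t) ≠ (i, t') := fun h => hne (Prod.mk.inj h).2
  have e1 : ¬ FS φ F (i, t) x ∨ φ (i, t) x ∈ CR φ R l1 r ∪ S := by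
    by_contra hh; push Not at hh; exact hb ⟨rfl, hh.1, hh.2⟩
  have e2 : ¬ FS φ F (i, t') x ∨ φ (i, t') x ∈ CR φ R l1 r ∪ S := by
    by_contra hh; push Not at hh; exact hb' ⟨rfl, hh.1, hh.2⟩
  rcases e1 with e1 | e1 <;> rcases e2 with e2 | e2
  · exact hden (two_removed hφ hF hm e1 e2 (fun h => hne' (congrArg Prod.fst h)) (Or.inl rfl))
  · exact mixed _ _ _ e1 e2
  · exact mixed _ _ _ e2 e1
  · have w1 : act φ [(i, t'), (i, t)] (φ (i, t) x) = φ (i, t') x := by simp [hφ]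
    have w2 : act φ [(i, t), (i, t')] (φ (i, t') x) = φ (i, t) x := by simp [hφ]
    have rd1 : Rd [(i, t'), (i, t)] := by
      unfold Rd
      simp only [List.isChain_cons_cons, ne_eq, List.isChain_singleton, and_true]
      exact fun h => hne' h.symm
    rcases e1 with e1 | e1
    · rcases e2 with e2 | e2
      · have := core_ear hφ e1 (ρ := [(i, t')]) (c := (i, t)) rd1 (by simp) (by simp) (by
          have := w1; simp only [act_cons, act_nil] at this; simpa [hφ] using e2)
        rw [hφ] at this
        exact hx (Or.inl this)
      · exact S1 _ e2 [(i, t), (i, t')] (by simp) (by rw [w2]; exact e1)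
    · rcases e2 with e2 | e2
      · exact S1 _ e1 [(i, t'), (i, t)] (by simp) (by rw [w1]; exact e2)
      · exact S2 _ e1 [(i, t'), (i, t)] rd1 (by simp) (by simp) (by rw [w1]; exact e2)

lemma hang_H2 (hφ : ∀ a x, φ a (φ a x) = x) (hφ2 : ∀ a x, φ a x ≠ x) (hφ3 : ∀ a b x, φ a x = φ b x → a = b)
    (hl : 2 * h + 4 ≤ l1) (hF : Girth φ h F) (hm : ∀ e ∉ F, ¬ Girth φ h (insert e F))
    (hden : ¬ DenseA φ (4 * h))
    (S0 : ∀ y ∈ S, Tame φ l1 y) (S1 : ∀ y ∈ S, ∀ ρ : List (Fin k × Fin 3), ρ.length ≤ 3 → act φ ρ y ∉ CR φ R l1 r)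
    (S2 : ∀ y ∈ S, ∀ ρ, Rd ρ → 2 ≤ ρ.length → ρ.length ≤ 3 → act φ ρ y ∉ S) (i : Fin k) :
    ∀ x, x ∉ CR φ R l1 r ∪ S → ∀ s t t', t ≠ s → t' ≠ s → AL φ F i (CR φ R l1 r ∪ S) (i, s) x →
      ¬ AL φ F i (CR φ R l1 r ∪ S) (i, t) x →
      ¬ AL φ F i (CR φ R l1 r ∪ S) (i, t') (φ (i, s) x) → False := by
  have tame : ∀ y ∈ CR φ R l1 r ∪ S, Tame φ l1 y := by
    rintro y (hy | hy)
    · exact CR_tame hφ hy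
    · exact S0 y hy
  have mixed : ∀ x a c a', ¬ FS φ F a x → φ a' (φ c x) ∈ CR φ R l1 r ∪ S → False := by
    intro x a c a' h1 h2
    apply removed_untame hφ hF hm h1
    have := tame_move hφ [c, a'] (l' := 2 * h) (tame _ h2) (by simp; omega)
    simpa [hφ] using this
  intro x hx s t t' hts hts' hs hb hb'
  set c : Fin k × Fin 3 := (i, s) with hc
  set a : Fin k × Fin 3 := (i, t) with ha
  set a' : Fin k × Fin 3 := (i, t') with ha'
  have hac : a ≠ c := fun h => hts (Prod.mk.inj h).2
  have hac' : a' ≠ c := fun h => hts' (Prod.mk.inj h).2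
  have e1 : ¬ FS φ F a x ∨ φ a x ∈ CR φ R l1 r ∪ S := by
    by_contra hh; push Not at hh; exact hb ⟨rfl, hh.1, hh.2⟩
  have e2 : ¬ FS φ F a' (φ c x) ∨ φ a' (φ c x) ∈ CR φ R l1 r ∪ S := by
    by_contra hh; push Not at hh; exact hb' ⟨rfl, hh.1, hh.2⟩
  rcases e1 with e1 | e1 <;> rcases e2 with e2 | e2
  · refine hden (two_removed hφ hF hm e1 e2 ?_ (Or.inr ⟨c, rfl, hs.2.1⟩))
    intro h
    obtain ⟨h1, h2⟩ := ed_eq h.symm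
    rcases h2 with h2 | h2
    · exact hφ2 _ _ h2
    · exact hac (hφ3 _ _ _ h2).symm
  · exact mixed _ _ _ _ e1 e2
  · exact mixed (φ c x) a' c a e2 (by rwa [hφ])
  · have w1 : act φ [a', c, a] (φ a x) = φ a' (φ c x) := by simp [hφ]
    have w2 : act φ [a, c, a'] (φ a' (φ c x)) = φ a x := by simp [hφ]
    have rd1 : Rd [a', c, a] := by
      unfold Rd
      simp only [List.isChain_cons_cons, ne_eq, List.isChain_singleton, and_true]
      exact ⟨hac', fun h => hac h.symm⟩
    rcases e1 with e1 | e1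
    · rcases e2 with e2 | e2
      · have := core_ear hφ e1 (ρ := [a', c]) (c := a) rd1 (by simp) (by simp) (by
          simpa [hφ] using e2)
        rw [hφ] at this
        exact hx (Or.inl this)
      · exact S1 _ e2 [a, c, a'] (by simp) (by rw [w2]; exact e1)
    · rcases e2 with e2 | e2
      · exact S1 _ e1 [a', c, a] (by simp) (by rw [w1]; exact e2)
      · exact S2 _ e1 [a', c, a] rd1 (by simp) (by simp) (by rw [w1]; exact e2)

lemma hang_H3 (hφ : ∀ a x, φ a (φ a x) = x)
    (hl : 2 * h + 4 ≤ l1) (hF : Girth φ h F) (hm : ∀ e ∉ F, ¬ Girth φ h (insert e F))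
    (hden : ¬ DenseA φ (4 * h))
    (S0 : ∀ y ∈ S, Tame φ l1 y) (S1 : ∀ y ∈ S, ∀ ρ : List (Fin k × Fin 3), ρ.length ≤ 3 → act φ ρ y ∉ CR φ R l1 r)
    (S2 : ∀ y ∈ S, ∀ ρ, Rd ρ → 2 ≤ ρ.length → ρ.length ≤ 3 → act φ ρ y ∉ S) (i : Fin k)
    (v : V) (hv : v ∉ Core φ R l1 r i) (hvr : v ≠ r) : ∃ s, AL φ F i (CR φ R l1 r ∪ S) (i, s) v := by
  have fs : ∀ y, Tame φ l1 y → ∀ a, FS φ F a y := by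
    intro y hy a
    by_contra hh
    apply removed_untame hφ hF hm hh
    intro w hw; exact hy w (by omega)
  by_cases hvΓ : v ∈ CR φ R l1 r ∪ S
  · rcases hvΓ with hvc | hvs
    · rcases CR_cases hvc with h | ⟨j, hj⟩
      · exact absurd h hvr
      · have hij : i ≠ j := by rintro rfl; exact hv hj
        refine ⟨0, rfl, fs _ (CR_tame hφ hvc) _, ?_⟩
        rintro (h | h)
        · exact core_other hφ hij hj 0 h
        · exact S1 _ h [(i, 0)] (by simp) (by simpa [hφ] using hvc)
    · have nc : ∀ t, φ (i, t) v ∉ CR φ R l1 r := fun t => S1 v hvs [(i, t)] (by simp)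
      by_cases h0 : φ (i, 0) v ∈ S
      · refine ⟨1, rfl, fs _ (S0 v hvs) _, ?_⟩
        rintro (h | h)
        · exact nc _ h
        · refine S2 _ h0 [(i, 1), (i, 0)] ?_ (by simp) (by simp) (by simpa [hφ] using h)
          unfold Rd; simp
      · refine ⟨0, rfl, fs _ (S0 v hvs) _, ?_⟩
        rintro (h | h)
        · exact nc _ h
        · exact h0 h
  · by_contra hh
    push Not at hh
    have := hang_H1 hφ hl hF hm hden S0 S1 S2 i v hvΓ 0 1 (hh 0) (hh 1)
    exact absurd this (by decide)

end Growth
end STI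


namespace STI
open Finset

section Tree
variable {N : ℕ}

def Reach (r : Fin N) (par : Fin N → Fin N) : Fin N → Fin N → Prop :=
  Relation.ReflTransGen (fun a b => a ≠ r ∧ b = par a)

def TR (r : Fin N) (par : Fin N → Fin N) : SimpleGraph (Fin N) :=
  SimpleGraph.fromRel (fun x y => x ≠ r ∧ y = par x)

variable {r : Fin N} {par : Fin N → Fin N} {rank : Fin N → ℕ}

lemma TR_adj (h1 : ∀ x, x ≠ r → rank (par x) < rank x) {x : Fin N} (hx : x ≠ r) : (TR r par).Adj x (par x) := by
  rw [TR, SimpleGraph.fromRel_adj]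
  refine ⟨?_, Or.inl ⟨hx, rfl⟩⟩
  intro h
  have := h1 x hx
  rw [← h] at this
  exact lt_irrefl _ this

lemma TR_walk (h1 : ∀ x, x ≠ r → rank (par x) < rank x) : ∀ n v, rank v = n → ∃ p : (TR r par).Walk v r,
    ∀ x ∈ p.support, Reach r par v x := by
  intro n
  induction n using Nat.strong_induction_on with
  | _ n ih =>
    intro v hv
    by_cases hvr : v = r
    · subst hvr
      refine ⟨SimpleGraph.Walk.nil, ?_⟩
      intro x hx
      simp at hx
      subst hx
      exact Relation.ReflTransGen.refl
    · obtain ⟨p, hp⟩ := ih _ (hv ▸ h1 v hvr) (par v) rfl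
      refine ⟨SimpleGraph.Walk.cons (TR_adj h1 hvr) p, ?_⟩
      intro x hx
      rw [SimpleGraph.Walk.support_cons, List.mem_cons] at hx
      rcases hx with rfl | hx
      · exact Relation.ReflTransGen.refl
      · exact Relation.ReflTransGen.head ⟨hvr, rfl⟩ (hp x hx)

lemma TR_tree (h1 : ∀ x, x ≠ r → rank (par x) < rank x) : (TR r par).IsTree := by
  classical
  have hc : (TR r par).Connected := by
    haveI : Nonempty (Fin N) := ⟨r⟩
    refine SimpleGraph.Connected.mk ?_
    intro u v
    obtain ⟨p, _⟩ := TR_walk h1 _ u rfl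
    obtain ⟨q, _⟩ := TR_walk h1 _ v rfl
    exact p.reachable.trans q.reachable.symm
  rw [SimpleGraph.isTree_iff_connected_and_card]
  refine ⟨hc, ?_⟩
  have h2 := hc.card_vert_le_card_edgeSet_add_one
  have h3 : Nat.card (TR r par).edgeSet ≤ N - 1 := by
    have hsub : (TR r par).edgeSet ⊆ ((univ.erase r).image (fun x => s(x, par x)) : Finset (Sym2 (Fin N))) := by
      intro e he
      induction e using Sym2.ind with
      | _ x y =>
        rw [SimpleGraph.mem_edgeSet, TR, SimpleGraph.fromRel_adj] at he
        rw [mem_coe, mem_image]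
        rcases he.2 with ⟨h, h'⟩ | ⟨h, h'⟩
        · exact ⟨x, by simp [h], by rw [h']⟩
        · exact ⟨y, by simp [h], by rw [h', Sym2.eq_swap]⟩
    calc Nat.card (TR r par).edgeSet = (TR r par).edgeSet.ncard := rfl
      _ ≤ _ := Set.ncard_le_ncard hsub (Finset.finite_toSet _)
      _ = _ := Set.ncard_coe_finset _
      _ ≤ (univ.erase r).card := card_image_le
      _ = N - 1 := by simp
  have : 0 < N := Fin.pos r
  simp only [Nat.card_eq_fintype_card, Fintype.card_fin] at h2 h3 ⊢
  omega

lemma TR_path (h1 : ∀ x, x ≠ r → rank (par x) < rank x) {v : Fin N} (p : (TR r par).Walk v r) (hp : p.IsPath)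
    {x : Fin N} (hx : x ∈ p.support) : Reach r par v x := by
  classical
  obtain ⟨q, hq⟩ := TR_walk h1 _ v rfl
  have := (TR_tree h1).2.path_unique ⟨p, hp⟩ ⟨q.bypass, q.bypass_isPath⟩
  have h2 : p = q.bypass := congrArg Subtype.val this
  rw [h2] at hx
  exact hq x (q.support_bypass_subset hx)

theorem strong_trees (L M : SimpleGraph (Fin N)) (r : Fin N) {t : ℕ} (par : Fin t → Fin N → Fin N)
    (rank : Fin t → Fin N → ℕ) (h1 : ∀ i x, x ≠ r → rank i (par i x) < rank i x)
    (hL : ∀ i x, x ≠ r → L.Adj x (par i x))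
    (hM : ∀ i x, x ≠ r → par i x ∉ M.support) (hr : r ∉ M.support)
    (hd : ∀ i j, i ≠ j → ∀ v x, v ≠ r → Reach r (par i) v x → Reach r (par j) v x → x = v ∨ x = r)
    (hS : ∀ i j, i ≠ j → ∀ u v x, u ∈ M.support → v ∈ M.support → u ≠ v → Reach r (par i) u x →
      Reach r (par j) v x → x = r) : HasStrongISTs L M r t := by
  refine ⟨fun i => TR r (par i), ⟨?_, ?_⟩, ?_, ?_⟩
  · intro i
    refine ⟨?_, TR_tree (h1 i)⟩
    intro x y hxy
    have hxy := (SimpleGraph.fromRel_adj _ _ _).1 hxy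
    rcases hxy.2 with ⟨h, h'⟩ | ⟨h, h'⟩
    · rw [h']; exact hL i x h
    · rw [h']; exact (hL i y h).symm
  · intro v hv i j hij p q hp hq x hx hx'
    exact hd i j hij v x hv (TR_path (h1 i) p hp hx) (TR_path (h1 j) q hq hx')
  · intro i
    rw [SimpleGraph.disjoint_left]
    intro x y hxy hM'
    have hxy := (SimpleGraph.fromRel_adj _ _ _).1 hxy
    rcases hxy.2 with ⟨h, h'⟩ | ⟨h, h'⟩
    · exact hM i x h (h' ▸ ⟨x, hM'.symm⟩)
    · exact hM i y h (h' ▸ ⟨y, hM'⟩)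
  · intro i j hij u v hu hv p q hp hq
    ext x
    simp only [Set.mem_setOf_eq]
    split_ifs with huv
    · subst huv
      simp only [Set.mem_insert_iff, Set.mem_singleton_iff]
      constructor
      · rintro ⟨hx, hx'⟩
        exact hd i j hij u x (fun h => hr (h ▸ hu)) (TR_path (h1 i) p hp hx) (TR_path (h1 j) q hq hx')
      · rintro (rfl | rfl)
        · simp
        · simp
    · simp only [Set.mem_singleton_iff]
      constructor
      · rintro ⟨hx, hx'⟩
        exact hS i j hij u v x hu hv huv (TR_path (h1 i) p hp hx) (TR_path (h1 j) q hq hx')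
      · rintro rfl
        simp
end Tree

section Par
variable {k N : ℕ} {φ : Fin k × Fin 3 → Fin N → Fin N} {F : Set ((Fin k × Fin 3) × Sym2 (Fin N))}
  {R l1 h : ℕ} {r : Fin N} {S : Set (Fin N)} {ν : Fin k → Fin N → Fin N}

lemma par_exists (hφ : ∀ a x, φ a (φ a x) = x) (hr : r ∈ CR φ R l1 r) (i : Fin k)
    (HL : ∀ v, v ∉ Core φ R l1 r i → v ≠ r → ∃ w, w.length ≤ h ∧ St φ (AL φ F i (CR φ R l1 r ∪ S)) w v ∧
      ν i (act φ w v) ∈ Core φ R l1 r i) :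
    ∃ (par : Fin N → Fin N) (rank : Fin N → ℕ), (∀ x, x ≠ r → rank (par x) < rank x ∧
      (par x ∈ Core φ R l1 r i ∨ par x = r ∨ par x ∉ CR φ R l1 r ∪ S) ∧
      (par x = ν i x ∨ ∃ a, par x = φ a x)) ∧
      ∀ v x, Reach r par v x → x = v ∨ x = r ∨ x ∈ Core φ R l1 r i ∨
        ∃ w, w ≠ [] ∧ Rd w ∧ w.length ≤ h ∧ St φ (AL φ F i (CR φ R l1 r ∪ S)) w v ∧ act φ w v = x := by
  classical
  set Γ := CR φ R l1 r ∪ S with hΓ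
  set Co := Core φ R l1 r i with hCo
  obtain ⟨dep, hdep⟩ := core_parent (R := R) (l1 := l1) (r := r) hφ i
  have hne : ∀ v, v ∉ Co → v ≠ r → ∃ m, ∃ w : List (Fin k × Fin 3), w.length = m ∧ St φ (AL φ F i Γ) w v ∧ ν i (act φ w v) ∈ Co := by
    intro v h1 h2
    obtain ⟨w, h3, h4⟩ := HL v h1 h2
    exact ⟨_, w, rfl, h4⟩
  let δ : Fin N → ℕ := fun v => if hv : v ∉ Co ∧ v ≠ r then Nat.find (hne v hv.1 hv.2) else 0
  have hδmin : ∀ v, v ∉ Co → v ≠ r → ∀ w : List (Fin k × Fin 3), St φ (AL φ F i Γ) w v → ν i (act φ w v) ∈ Co → δ v ≤ w.length := by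
    intro v h1 h2 w h3 h4
    have : δ v = Nat.find (hne v h1 h2) := dif_pos ⟨h1, h2⟩
    rw [this]
    exact Nat.find_min' _ ⟨w, rfl, h3, h4⟩
  have hδex : ∀ v, v ∉ Co → v ≠ r → ∃ w : List (Fin k × Fin 3), w.length = δ v ∧ St φ (AL φ F i Γ) w v ∧ ν i (act φ w v) ∈ Co := by
    intro v h1 h2
    have : δ v = Nat.find (hne v h1 h2) := dif_pos ⟨h1, h2⟩
    rw [this]
    exact Nat.find_spec (hne v h1 h2)
  have hδh : ∀ v, δ v ≤ h := by
    intro v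
    by_cases hv : v ∉ Co ∧ v ≠ r
    · obtain ⟨w, h3, h4, h5⟩ := HL v hv.1 hv.2
      exact (hδmin v hv.1 hv.2 w h4 h5).trans h3
    · have : δ v = 0 := dif_neg hv
      omega
  have hrC : r ∉ Co := core_ne_r hφ
  let rank : Fin N → ℕ := fun x => if x = r then 0 else if x ∈ Co then dep x + 1 else R + 2 + δ x
  have rank_r : rank r = 0 := if_pos rfl
  have rank_C : ∀ x ∈ Co, rank x = dep x + 1 := by
    intro x hx
    have : x ≠ r := by rintro rfl; exact hrC hx
    simp only [rank, if_neg this, if_pos hx]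
  have rank_o : ∀ x, x ∉ Co → x ≠ r → rank x = R + 2 + δ x := by
    intro x h1 h2
    simp only [rank, if_neg h1, if_neg h2]
  have key : ∀ x, ∃ y, x ≠ r → rank y < rank x ∧ (y ∈ Co ∨ y = r ∨ y ∉ Γ) ∧ (y = ν i x ∨ ∃ a, y = φ a x) ∧
      (y ∈ Co ∨ y = r ∨ (x ∉ Co ∧ (∃ a, AL φ F i Γ a x ∧ y = φ a x) ∧ δ y + 1 ≤ δ x)) := by
    intro x
    by_cases hxr : x = r
    · exact ⟨x, fun h => absurd hxr h⟩
    by_cases hx : x ∈ Co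
    · obtain ⟨h1, a, h2⟩ := hdep x hx
      refine ⟨φ a x, fun _ => ?_⟩
      rcases h2 with h2 | ⟨h2, h3⟩
      · refine ⟨?_, Or.inr (Or.inl h2), Or.inr ⟨a, rfl⟩, Or.inr (Or.inl h2)⟩
        rw [h2, rank_r, rank_C x hx]; omega
      · refine ⟨?_, Or.inl h2, Or.inr ⟨a, rfl⟩, Or.inl h2⟩
        rw [rank_C _ h2, rank_C x hx]; omega
    · obtain ⟨w, h1, h2, h3⟩ := hδex x hx hxr
      by_cases hw : w = []
      · subst hw
        rw [act_nil] at h3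
        refine ⟨ν i x, fun _ => ⟨?_, Or.inl h3, Or.inl rfl, Or.inl h3⟩⟩
        rw [rank_o x hx hxr, rank_C _ h3]
        have := (hdep _ h3).1
        omega
      · obtain ⟨w', a, rfl⟩ := List.eq_nil_or_concat w |>.resolve_left hw
        rw [List.concat_eq_append] at *
        rw [St_append] at h2
        rw [act_append] at h3
        have h4 : AL φ F i Γ a x := h2.1.2
        have h5 : φ a x ∉ Co := fun hh => h4.2.2 (Or.inl (Core_sub_CR hh))
        have h6 : φ a x ≠ r := fun hh => h4.2.2 (Or.inl (hh ▸ hr))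
        have h7 : δ (φ a x) ≤ w'.length := hδmin _ h5 h6 w' h2.2 h3
        simp only [List.length_append, List.length_singleton] at h1
        refine ⟨φ a x, fun _ => ⟨?_, Or.inr (Or.inr h4.2.2), Or.inr ⟨a, rfl⟩, Or.inr (Or.inr ⟨hx, ⟨a, h4, rfl⟩, by omega⟩)⟩⟩
        rw [rank_o x hx hxr, rank_o _ h5 h6]; omega
  choose par hpar using key
  refine ⟨par, rank, fun x hx => ⟨(hpar x hx).1, (hpar x hx).2.1, (hpar x hx).2.2.1⟩, ?_⟩
  intro v x hvx
  have inv : x = r ∨ x ∈ Co ∨ ∃ w : List (Fin k × Fin 3), w.length + δ x ≤ δ v ∧ St φ (AL φ F i Γ) w v ∧ act φ w v = x := by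
    induction hvx with
    | refl => exact Or.inr (Or.inr ⟨[], by simp, trivial, rfl⟩)
    | tail hab hbc ih =>
      obtain ⟨h1, rfl⟩ := hbc
      obtain ⟨-, -, -, h2⟩ := hpar _ h1
      rcases h2 with h2 | h2 | ⟨h2, ⟨a, h3, h4⟩, h5⟩
      · exact Or.inr (Or.inl h2)
      · exact Or.inl h2
      · rcases ih with ih | ih | ⟨w, i1, i2, i3⟩
        · exact absurd ih h1
        · exact absurd ih h2
        · refine Or.inr (Or.inr ⟨a :: w, ?_, ⟨i2, ?_⟩, ?_⟩)
          · simp; omega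
          · rw [i3]; exact h3
          · rw [act_cons, i3, h4]
  rcases inv with h | h | ⟨w, h1, h2, h3⟩
  · exact Or.inr (Or.inl h)
  · exact Or.inr (Or.inr (Or.inl h))
  · by_cases hw : red w = []
    · left
      rw [← h3, ← act_red φ hφ w, hw, act_nil]
    · refine Or.inr (Or.inr (Or.inr ⟨red w, hw, rd_red w, ?_, St_red hφ h2, ?_⟩))
      · have := length_red_le w
        have := hδh v
        omega
      · rw [act_red φ hφ, h3]

lemma St_last {P : Fin k × Fin 3 → Fin N → Prop} {w : List (Fin k × Fin 3)} {v : Fin N} (hw : w ≠ [])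
    (h : St φ P w v) : ∃ a z, P a z ∧ act φ w v = φ a z := by
  cases w with
  | nil => exact absurd rfl hw
  | cons a w => exact ⟨a, _, h.2, rfl⟩

theorem strong_of_HL (hφ : ∀ a x, φ a (φ a x) = x) (hr : r ∈ CR φ R l1 r) (hF : Girth φ h F)
    (HL : ∀ i v, v ∉ Core φ R l1 r i → v ≠ r → ∃ w, w.length ≤ h ∧ St φ (AL φ F i (CR φ R l1 r ∪ S)) w v ∧
      ν i (act φ w v) ∈ Core φ R l1 r i) (L M : SimpleGraph (Fin N)) (hS : M.support = S)
    (hL1 : ∀ i x, L.Adj x (ν i x)) (hL2 : ∀ a x, L.Adj x (φ a x)) (hSC : ∀ y ∈ S, y ∉ CR φ R l1 r)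
    (HP : ∀ i j, i ≠ j → ∀ u ∈ S, ∀ v ∈ S, u ≠ v → ∀ w w', w ≠ [] → w' ≠ [] → Rd w → Rd w' → w.length ≤ h →
      w'.length ≤ h → St φ (AL φ F i (CR φ R l1 r ∪ S)) w u → St φ (AL φ F j (CR φ R l1 r ∪ S)) w' v →
      act φ w u ≠ act φ w' v) : HasStrongISTs L M r k := by
  choose par rank hp1 hp2 using fun i => par_exists (F := F) (S := S) (ν := ν) (h := h) hφ hr i (HL i)
  have avoid : ∀ i (w : List (Fin k × Fin 3)) v, w ≠ [] → St φ (AL φ F i (CR φ R l1 r ∪ S)) w v → act φ w v ∉ CR φ R l1 r ∪ S := by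
    intro i w v h1 h2
    obtain ⟨a, z, h3, h4⟩ := St_last h1 h2
    rw [h4]; exact h3.2.2
  apply strong_trees L M r par rank
  · intro i x hx; exact (hp1 i x hx).1
  · intro i x hx
    rcases (hp1 i x hx).2.2 with h | ⟨a, h⟩
    · rw [h]; exact hL1 i x
    · rw [h]; exact hL2 a x
  · intro i x hx hm
    rw [hS] at hm
    rcases (hp1 i x hx).2.1 with h | h | h
    · exact hSC _ hm (Core_sub_CR h)
    · exact hSC _ hm (h ▸ hr)
    · exact h (Or.inr hm)
  · intro hm
    rw [hS] at hm
    exact hSC _ hm hr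
  · intro i j hij v x hv h1 h2
    rcases hp2 i v x h1 with h | h | h | ⟨w, w1, w2, w3, w4, w5⟩
    · exact Or.inl h
    · exact Or.inr h
    · rcases hp2 j v x h2 with h' | h' | h' | ⟨w', w1', w2', w3', w4', w5'⟩
      · exact Or.inl h'
      · exact Or.inr h'
      · exact absurd (core_disj hφ h h') hij
      · exact absurd (Or.inl (Core_sub_CR h)) (w5' ▸ avoid j w' v w1' w4')
    · rcases hp2 j v x h2 with h' | h' | h' | ⟨w', w1', w2', w3', w4', w5'⟩
      · exact Or.inl h'
      · exact Or.inr h'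
      · exact absurd (Or.inl (Core_sub_CR h')) (w5 ▸ avoid i w v w1 w4)
      · exfalso
        have := LA hφ hF w2 w2' (St_mono (fun a x h => h.2.1) w4) (St_mono (fun a x h => h.2.1) w4') (by omega)
          (w5.trans w5'.symm)
        subst this
        cases w with
        | nil => exact w1 rfl
        | cons a w => exact hij (w4.2.1.symm.trans w4'.2.1)
  · intro i j hij u v x hu hv huv h1 h2
    rw [hS] at hu hv
    rcases hp2 i u x h1 with h | h | h | ⟨w, w1, w2, w3, w4, w5⟩
    · subst h
      rcases hp2 j v x h2 with h' | h' | h' | ⟨w', w1', w2', w3', w4', w5'⟩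
      · exact absurd h' huv
      · exact h'
      · exact absurd (Core_sub_CR h') (hSC _ hu)
      · exact absurd (Or.inr hu) (w5' ▸ avoid j w' v w1' w4')
    · exact h
    · rcases hp2 j v x h2 with h' | h' | h' | ⟨w', w1', w2', w3', w4', w5'⟩
      · exact absurd (Core_sub_CR h) (h' ▸ hSC _ hv)
      · exact h'
      · exact absurd (core_disj hφ h h') hij
      · exact absurd (Or.inl (Core_sub_CR h)) (w5' ▸ avoid j w' v w1' w4')
    · rcases hp2 j v x h2 with h' | h' | h' | ⟨w', w1', w2', w3', w4', w5'⟩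
      · subst h'
        exact absurd (Or.inr hv) (w5 ▸ avoid i w u w1 w4)
      · exact h'
      · exact absurd (Or.inl (Core_sub_CR h')) (w5 ▸ avoid i w u w1 w4)
      · exact absurd (w5.trans w5'.symm) (HP i j hij u hu v hv huv w w' w1 w1' w2 w2' w3 w3' w4 w4')
end Par
end STI


namespace STI
open Finset

section HL
variable {k N : ℕ} 

/-- link condition -/
def Link (φ : Fin k × Fin 3 → Fin N → Fin N) (ν : Fin k → Fin N → Fin N) (b R l1 : ℕ) (r : Fin N) : Prop :=
  ∀ i v y1 y2, 2 ^ b ≤ (XX φ (maxF φ (2 * b + 1)) i (CR φ R l1 r ∪ {y1, y2}) (2 * b + 1) v).card →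
    ∃ x ∈ XX φ (maxF φ (2 * b + 1)) i (CR φ R l1 r ∪ {y1, y2}) (2 * b + 1) v, ν i x ∈ Core φ R l1 r i

variable {φ : Fin k × Fin 3 → Fin N → Fin N} {R l1 h : ℕ} {r : Fin N} {S : Set (Fin N)} {ν : Fin k → Fin N → Fin N}

lemma St_upgrade {F : Set ((Fin k × Fin 3) × Sym2 (Fin N))} {i : Fin k} {Γ : Set (Fin N)} {v : Fin N}
    (w : List (Fin k × Fin 3)) (hw : w.length ≤ h)
    (hs : St φ (AL φ F i (Γ ∪ {y | y ∈ S ∧ ∃ u : List (Fin k × Fin 3), u.length ≤ h ∧ act φ u v = y})) w v) :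
    St φ (AL φ F i (Γ ∪ S)) w v := by
  induction w with
  | nil => trivial
  | cons a w ih =>
    refine ⟨ih (by simp at hw; omega) hs.1, hs.2.1, hs.2.2.1, ?_⟩
    intro hh
    apply hs.2.2.2
    rcases hh with hh | hh
    · exact Or.inl hh
    · exact Or.inr ⟨hh, a :: w, hw, rfl⟩

lemma HL_of_link (hφ : ∀ a x, φ a (φ a x) = x) (hφ2 : ∀ a x, φ a x ≠ x) (hφ3 : ∀ a b x, φ a x = φ b x → a = b)
    {b : ℕ} (hr : r ∈ CR φ R l1 r)
    (hl : 2 * (2 * b + 1) + 4 ≤ l1) 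
    (hden : ¬ DenseA φ (4 * (2 * b + 1))) (hlink : Link φ ν b R l1 r)
    (S0 : ∀ y ∈ S, Tame φ l1 y) (S1 : ∀ y ∈ S, ∀ ρ : List (Fin k × Fin 3), ρ.length ≤ 3 → act φ ρ y ∉ CR φ R l1 r)
    (S2 : ∀ y ∈ S, ∀ ρ, Rd ρ → 2 ≤ ρ.length → ρ.length ≤ 3 → act φ ρ y ∉ S)
    (mp : Fin N → Fin N)
    (S3 : ∀ y ∈ S, ∀ y' ∈ S, y ≠ y' → ∀ w : List (Fin k × Fin 3), w.length ≤ 2 * (2 * b + 1) → act φ w y = y' → y' = mp y)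
    (i : Fin k) (v : Fin N) (hv : v ∉ Core φ R l1 r i) (hvr : v ≠ r) :
    ∃ w, w.length ≤ 2 * b + 1 ∧ St φ (AL φ (maxF φ (2 * b + 1)) i (CR φ R l1 r ∪ S)) w v ∧
      ν i (act φ w v) ∈ Core φ R l1 r i := by
  classical
  set S' : Set (Fin N) := {y | y ∈ S ∧ ∃ u : List (Fin k × Fin 3), u.length ≤ 2 * b + 1 ∧ act φ u v = y} with hS'
  have hsub : ∀ y ∈ S', y ∈ S := fun y hy => hy.1
  have T0 : ∀ y ∈ S', Tame φ l1 y := fun y hy => S0 y hy.1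
  have T1 : ∀ y ∈ S', ∀ ρ : List (Fin k × Fin 3), ρ.length ≤ 3 → act φ ρ y ∉ CR φ R l1 r := fun y hy => S1 y hy.1
  have T2 : ∀ y ∈ S', ∀ ρ, Rd ρ → 2 ≤ ρ.length → ρ.length ≤ 3 → act φ ρ y ∉ S' :=
    fun y hy ρ h1 h2 h3 h4 => S2 y hy.1 ρ h1 h2 h3 h4.1
  have hpair : ∃ y1 y2, CR φ R l1 r ∪ S' = CR φ R l1 r ∪ {y1, y2} := by
    by_cases hne : S'.Nonempty
    · obtain ⟨y1, hy1⟩ := hne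
      have hall : ∀ y ∈ S', y = y1 ∨ y = mp y1 := by
        intro y hy
        by_cases he : y = y1
        · exact Or.inl he
        · right
          obtain ⟨u1, l1', e1⟩ := hy1.2
          obtain ⟨u, l, e⟩ := hy.2
          refine S3 y1 hy1.1 y hy.1 (fun h => he h.symm) (u ++ u1.reverse) (by simp; omega) ?_
          rw [act_append, ← e1, act_reverse_act φ hφ, e]
      by_cases hm : mp y1 ∈ S'
      · refine ⟨y1, mp y1, ?_⟩
        congr 1
        ext y
        simp only [Set.mem_insert_iff, Set.mem_singleton_iff]
        constructor
        · exact hall y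
        · rintro (rfl | rfl)
          · exact hy1
          · exact hm
      · refine ⟨y1, y1, ?_⟩
        congr 1
        ext y
        simp only [Set.mem_insert_iff, Set.mem_singleton_iff, or_self]
        constructor
        · intro hy
          rcases hall y hy with h | h
          · exact h
          · exact absurd (h ▸ hy) hm
        · rintro rfl
          exact hy1
    · refine ⟨r, r, ?_⟩
      rw [Set.not_nonempty_iff_eq_empty] at hne
      rw [hne]
      ext y
      simp only [Set.union_empty, Set.mem_union, Set.mem_insert_iff, Set.mem_singleton_iff, or_self]
      constructor
      · exact Or.inl
      · rintro (h | rfl)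
        · exact h
        · exact hr
  have hF := maxF_girth φ (2 * b + 1)
  have hm := maxF_max φ (2 * b + 1)
  obtain ⟨s, hs⟩ := hang_H3 hφ hl hF hm hden T0 T1 T2 i v hv hvr
  have hg := grow_card hφ hF (hang_H1 hφ hl hF hm hden T0 T1 T2 i) (hang_H2 hφ hφ2 hφ3 hl hF hm hden T0 T1 T2 i) v s hs
  obtain ⟨y1, y2, hy⟩ := hpair
  rw [hy] at hg
  obtain ⟨x, hx, hx2⟩ := hlink i v y1 y2 hg
  rw [← hy, XX, mem_filter] at hx
  obtain ⟨-, w, w1, w2, w3⟩ := hx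
  refine ⟨w, w1.le, St_upgrade w w1.le w2, by rwa [w3]⟩
end HL

section Strong
variable {k N d : ℕ} {ψ : Fin d → Fin N → Fin N}

theorem strong_final (hψ : IsInv ψ) (col : Fin k × Fin 3 → Fin d) (hcol : Function.Injective col)
    (nu : Fin k → Fin d) {b R l1 : ℕ} {r : Fin N} (hb : 1 ≤ b) (hl : 2 * (2 * b + 1) + 4 ≤ l1)
    (hr : r ∈ CR (fun a => ψ (col a)) R l1 r)
    (hden : ¬ DenseA (fun a => ψ (col a)) (4 * (2 * b + 1)))
    (hlink : Link (fun a => ψ (col a)) (fun i => ψ (nu i)) b R l1 r)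
    (M : SimpleGraph (Fin N)) (hML : M ≤ ⨆ i, gr ψ hψ i)
    (hMm : ∀ v w x : Fin N, M.Adj v w → M.Adj v x → w = x)
    (G0 : ∀ y ∈ M.support, Tame ψ l1 y)
    (G1 : ∀ y ∈ M.support, ∀ ρ : List (Fin d), ρ.length ≤ 3 → act ψ ρ y ∉ CR (fun a => ψ (col a)) R l1 r)
    (G2 : ∀ y ∈ M.support, ∀ y' ∈ M.support, y ≠ y' → ∀ w : List (Fin d), w.length ≤ 2 * (2 * b + 1) →
      act ψ w y = y' → M.Adj y y') :
    HasStrongISTs (⨆ i, gr ψ hψ i) M r k := by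
  classical
  set φ : Fin k × Fin 3 → Fin N → Fin N := fun a => ψ (col a) with hφdef
  have hψ1 : ∀ c x, ψ c (ψ c x) = x := fun c x => hψ.1 c x
  have hφ : ∀ a x, φ a (φ a x) = x := fun a x => hψ.1 _ _
  have hφ2 : ∀ a x, φ a x ≠ x := fun a x => hψ.2.1 _ _
  have hφ3 : ∀ a b x, φ a x = φ b x → a = b := fun a b x h => hcol (hψ.2.2 _ _ _ h)
  have hMc : ∀ y y', M.Adj y y' → ∃ c, ψ c y = y' := by
    intro y y' h
    have := hML h
    rw [SimpleGraph.iSup_adj] at this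
    exact this
  have hadj : ∀ c x, (⨆ i, gr ψ hψ i).Adj x (ψ c x) := by
    intro c x
    rw [SimpleGraph.iSup_adj]
    exact ⟨c, rfl⟩
  have am : ∀ w x, act φ w x = act ψ (w.map col) x := fun w x => (act_map col ψ w x).symm
  have S0 : ∀ y ∈ M.support, Tame φ l1 y := by
    intro y hy w hw he
    rw [am] at he
    have := G0 y hy _ (by simpa using hw) he
    rw [red_map col hcol] at this
    simpa using this
  have S1 : ∀ y ∈ M.support, ∀ ρ : List (Fin k × Fin 3), ρ.length ≤ 3 → act φ ρ y ∉ CR φ R l1 r := by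
    intro y hy ρ hρ
    rw [am]
    exact G1 y hy _ (by simpa using hρ)
  have S2 : ∀ y ∈ M.support, ∀ ρ, Rd ρ → 2 ≤ ρ.length → ρ.length ≤ 3 → act φ ρ y ∉ M.support := by
    intro y hy ρ h1 h2 h3 h4
    by_cases he : y = act φ ρ y
    · have := S0 y hy ρ (by omega) he.symm
      rw [red_of_rd h1] at this
      rw [this] at h2
      simp at h2
    · have h5 := G2 y hy _ h4 he (ρ.map col) (by simp; omega) (am ρ y).symm
      obtain ⟨c, hc⟩ := hMc _ _ h5
      have h6 := G0 y hy ([c].reverse ++ ρ.map col) (by simp; omega) (by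
        rw [act_append, ← am, ← hc]; simp [hψ1])
      have h7 := red_eq_of_cancel h6
      rw [red_map col hcol, red_of_rd h1] at h7
      have := congrArg List.length h7
      have h8 := length_red_le [c]
      simp at this h8
      omega
  let mp : Fin N → Fin N := fun y => if h : ∃ y', M.Adj y y' then h.choose else y
  have S3 : ∀ y ∈ M.support, ∀ y' ∈ M.support, y ≠ y' → ∀ w : List (Fin k × Fin 3),
      w.length ≤ 2 * (2 * b + 1) → act φ w y = y' → y' = mp y := by
    intro y hy y' hy' hne w hw he
    have h1 := G2 y hy y' hy' hne (w.map col) (by simpa using hw) (by rw [← am]; exact he)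
    have h2 : ∃ y', M.Adj y y' := ⟨_, h1⟩
    have h3 : mp y = h2.choose := dif_pos h2
    rw [h3]
    exact hMm y _ _ h1 h2.choose_spec
  refine strong_of_HL (F := maxF φ (2 * b + 1)) (R := R) (l1 := l1) (S := M.support) (ν := fun i => ψ (nu i)) hφ hr
    (maxF_girth φ (2 * b + 1)) ?_ _ M rfl
    (fun i x => hadj _ _) (fun a x => hadj _ _) (fun y hy => S1 y hy [] (by simp)) ?_
  · intro i v hv hvr
    exact HL_of_link hφ hφ2 hφ3 hr hl hden hlink S0 S1 S2 mp S3 i v hv hvr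
  · intro i j hij u hu v hv huv w w' hw hw' rw1 rw2 l2 l3 s1 s2 he
    have e1 : act ψ ((w.map col).reverse ++ w'.map col) v = u := by
      rw [act_append, ← am, ← he, am, act_reverse_act ψ hψ1]
    have h5 := G2 v hv u hu huv.symm _ (by simp; omega) e1
    obtain ⟨c, hc⟩ := hMc _ _ h5
    have hc' : ψ c u = v := by rw [← hc, hψ1]
    have h6 := G0 v hv ((w'.map col).reverse ++ (w.map col ++ [c])) (by simp; omega) (by
      rw [act_append, act_append]
      simp only [act_cons, act_nil]
      rw [hc, ← am, he, am, act_reverse_act ψ hψ1])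
    have h7 := red_eq_of_cancel h6
    rw [red_map col hcol w', red_of_rd rw2] at h7
    obtain ⟨w0, a, rfl⟩ := List.eq_nil_or_concat w |>.resolve_left hw
    obtain ⟨w0', a', rfl⟩ := List.eq_nil_or_concat w' |>.resolve_left hw'
    simp only [List.concat_eq_append] at *
    rw [St_append] at s1 s2
    have g1 : φ a u ∉ M.support := fun hh => s1.1.2.2.2 (Or.inr hh)
    have g2 : φ a' v ∉ M.support := fun hh => s2.1.2.2.2 (Or.inr hh)
    have hac : col a ≠ c := by
      rintro rfl
      apply g1
      change ψ (col a) u ∈ _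
      rw [hc']; exact hv
    have hrd : Rd ((w0 ++ [a]).map col ++ [c]) := by
      have h8 : Rd ((w0 ++ [a]).map col) := by
        unfold Rd
        rw [List.isChain_map]
        exact rw1.imp (fun x y hxy hh => hxy (hcol hh))
      unfold Rd at *
      rw [List.isChain_append]
      refine ⟨h8, by simp, ?_⟩
      intro x hx y hy
      simp at hx hy
      subst hx hy
      exact hac
    rw [red_of_rd hrd, List.map_append (l₁ := w0')] at h7
    have h9 := (List.append_inj' h7 rfl).2
    simp at h9
    apply g2
    change ψ (col a') v ∈ _
    rw [← h9, hc]; exact hu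
end Strong
end STI


namespace STI
open Finset

section Words
variable {α : Type*} [Fintype α] [DecidableEq α]

/-- words of length at most n -/
def wle (α : Type*) [Fintype α] [DecidableEq α] (n : ℕ) : Finset (List α) :=
  (range (n + 1)).biUnion (fun j => (univ : Finset (Fin j → α)).image List.ofFn)

lemma mem_wle {n : ℕ} {w : List α} (h : w.length ≤ n) : w ∈ wle α n := by
  rw [wle, mem_biUnion]
  refine ⟨w.length, by simp; omega, ?_⟩
  rw [mem_image]
  exact ⟨fun i => w.get i, mem_univ _, List.ofFn_get w⟩

lemma len_wle {n : ℕ} {w : List α} (h : w ∈ wle α n) : w.length ≤ n := by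
  rw [wle, mem_biUnion] at h
  obtain ⟨j, h1, h2⟩ := h
  rw [mem_image] at h2
  obtain ⟨f, _, rfl⟩ := h2
  simp at h1 ⊢
  omega

lemma card_wle (n q : ℕ) (hq : 2 ≤ q) (hα : Fintype.card α ≤ q) : (wle α n).card ≤ 2 * q ^ n := by
  have h1 : (wle α n).card ≤ ∑ j ∈ range (n + 1), q ^ j := by
    refine card_biUnion_le.trans (sum_le_sum ?_)
    intro j _
    refine card_image_le.trans ?_
    simp only [card_univ, Fintype.card_fun, Fintype.card_fin]
    exact Nat.pow_le_pow_left hα _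
  refine h1.trans ?_
  clear h1
  induction n with
  | zero => simp
  | succ n ih =>
    rw [sum_range_succ]
    have : 2 * q ^ n ≤ q ^ (n + 1) := by rw [pow_succ, mul_comm (q ^ n)]; exact Nat.mul_le_mul_right _ hq
    omega
end Words

section Prob
variable {d N : ℕ}

open Classical in
lemma pr_markov {ι : Type*} (s : Finset ι) (E : ι → (Fin d → Fin N → Fin N) → Prop) (m : ℝ) :
    m * pr (fun ψ => m ≤ ((s.filter (fun i => E i ψ)).card : ℝ)) ≤ ∑ i ∈ s, pr (E i) := by
  unfold pr
  rw [← Finset.sum_div, mul_div_assoc']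
  gcongr
  have h1 : ∀ i, ((ev (E i)).card : ℝ) = ∑ ψ ∈ Om d N, if E i ψ then (1 : ℝ) else 0 := by
    intro i
    rw [Finset.sum_boole]
    congr 1
  simp_rw [h1]
  rw [sum_comm]
  have h2 : ∀ ψ, (∑ i ∈ s, if E i ψ then (1 : ℝ) else 0) = ((s.filter (fun i => E i ψ)).card : ℝ) := by
    intro ψ
    rw [Finset.sum_boole]
  simp_rw [h2]
  have h3 : ∑ ψ ∈ ev (fun ψ => m ≤ ((s.filter (fun i => E i ψ)).card : ℝ)), m ≤
      ∑ ψ ∈ ev (fun ψ => m ≤ ((s.filter (fun i => E i ψ)).card : ℝ)), ((s.filter (fun i => E i ψ)).card : ℝ) := by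
    apply sum_le_sum
    intro ψ hψ
    exact (mem_ev.1 hψ).2
  rw [sum_const, nsmul_eq_mul, mul_comm] at h3
  refine h3.trans ?_
  apply sum_le_sum_of_subset_of_nonneg
  · intro ψ hψ
    exact filter_subset _ _ hψ
  · intros; positivity

variable {k : ℕ}

lemma pr_word' (col : Fin k × Fin 3 → Fin d) (hcol : Function.Injective col) (w : List (Fin k × Fin 3))
    (hw : red w ≠ []) (Q : ℕ) (hQ : w.length + 1 ≤ Q) (r : Fin N) (hN : 4 * d + 4 * Q + 4 ≤ N) :
    pr (fun ψ : Fin d → Fin N → Fin N => act (fun a => ψ (col a)) w r = r) ≤ 2 * Q ^ 2 / N := by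
  have hN0 : (0 : ℝ) < N := by
    have : 0 < N := by omega
    exact_mod_cast this
  have h := pr_word (N := N) (w.map col) (by rw [red_map col hcol]; simpa using hw) r (N / 2) (by positivity) (by
    have h2 : (4 * d + 4 * Q + 4 : ℝ) ≤ N := by exact_mod_cast hN
    have h3 : (w.length + 1 : ℝ) ≤ Q := by exact_mod_cast hQ
    simp only [List.length_map]
    linarith)
  simp only [act_map, List.length_map] at h
  refine h.trans ?_
  rw [div_div_eq_mul_div]
  have h3 : (w.length + 1 : ℝ) ≤ Q := by exact_mod_cast hQ
  have h4 : (w.length : ℝ) ≤ Q := by linarith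
  apply div_le_div_of_nonneg_right _ hN0.le
  nlinarith [Nat.cast_nonneg (α := ℝ) w.length]

/-- the bound on the probability of a bad word -/
noncomputable def beta (d N R l1 : ℕ) : ℝ := (4 * d ^ 4 * 2 ^ R + 2 * d ^ l1) * (2 * (2 * R + l1 + 4) ^ 2 / N)

lemma beta_nonneg (d N R l1 : ℕ) : 0 ≤ beta d N R l1 := by unfold beta; positivity

lemma pr_bad (col : Fin k × Fin 3 → Fin d) (hcol : Function.Injective col) (hk : 3 * k ≤ d) (hd : 2 ≤ d) (R l1 : ℕ)
    (r : Fin N) (hN : 4 * d + 4 * (2 * R + l1 + 4) + 4 ≤ N) (σ : List (Fin k × Fin 3)) (hσ : σ.length ≤ R) :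
    pr (fun ψ : Fin d → Fin N → Fin N => bad (fun a => ψ (col a)) R l1 r σ) ≤ beta d N R l1 := by
  classical
  set Q := 2 * R + l1 + 4 with hQ
  have hw0 : (0 : ℝ) ≤ 2 * (Q : ℝ) ^ 2 / N := by positivity
  have hcα : Fintype.card (Fin k × Fin 3) ≤ d := by simp; omega
  unfold bad
  refine (pr_or _ _).trans ?_
  have e1 : pr (fun ψ : Fin d → Fin N → Fin N => ∃ ρ : List (Fin k × Fin 3), ρ.length ≤ 3 ∧ ∃ j' bs', List.length bs' ≤ R ∧
    red ((enc j' bs').reverse ++ (ρ ++ σ)) ≠ [] ∧ act (fun a => ψ (col a)) ((enc j' bs').reverse ++ (ρ ++ σ)) r = r)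
     ≤ (4 * d ^ 4 * 2 ^ R) * (2 * (Q : ℝ) ^ 2 / N) := by
    refine (pr_mono' (E' := fun ψ => ∃ p ∈ (wle (Fin k × Fin 3) 3) ×ˢ ((univ : Finset (Fin k)) ×ˢ wle Bool R),
      red ((enc p.2.1 p.2.2).reverse ++ (p.1 ++ σ)) ≠ [] ∧
        act (fun a => ψ (col a)) ((enc p.2.1 p.2.2).reverse ++ (p.1 ++ σ)) r = r) ?_).trans ?_
    · rintro ψ _ ⟨ρ, h1, j', bs', h2, h3⟩
      refine ⟨(ρ, j', bs'), ?_, h3⟩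
      rw [mem_product, mem_product]
      exact ⟨mem_wle h1, mem_univ _, mem_wle h2⟩
    · refine (pr_exists _ _).trans ?_
      refine (sum_le_card_nsmul _ _ (2 * (Q : ℝ) ^ 2 / N) ?_).trans ?_
      · rintro ⟨ρ, j', bs'⟩ hp
        rw [mem_product, mem_product] at hp
        have l1 := len_wle hp.1
        have l2 := len_wle hp.2.2
        simp only at l1 l2
        by_cases hred : red ((enc j' bs').reverse ++ (ρ ++ σ)) ≠ []
        · refine (pr_mono' ?_).trans (pr_word' col hcol ((enc j' bs').reverse ++ (ρ ++ σ)) hred Q ?_ r hN)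
          · exact fun ψ _ h => h.2
          · simp only [List.length_append, List.length_reverse, enc_length]; omega
        · rw [pr_false]
          · exact hw0
          · exact fun ψ _ h => hred h.1
      · rw [nsmul_eq_mul]
        apply mul_le_mul_of_nonneg_right _ hw0
        rw [card_product, card_product]
        have c1 := card_wle (α := Fin k × Fin 3) 3 d hd hcα
        have c2 := card_wle (α := Bool) R 2 le_rfl (by simp)
        have c3 : (univ : Finset (Fin k)).card ≤ d := by simp; omega
        have : (wle (Fin k × Fin 3) 3).card * ((univ : Finset (Fin k)).card * (wle Bool R).card) ≤ (2 * d ^ 3) * (d * (2 * 2 ^ R)) :=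
          Nat.mul_le_mul c1 (Nat.mul_le_mul c3 c2)
        calc (((wle (Fin k × Fin 3) 3).card * ((univ : Finset (Fin k)).card * (wle Bool R).card) : ℕ) : ℝ) ≤ (((2 * d ^ 3) * (d * (2 * 2 ^ R)) : ℕ) : ℝ) := by exact_mod_cast this
          _ = _ := by push_cast; ring
  have e2 : pr (fun ψ : Fin d → Fin N → Fin N => ∃ κ : List (Fin k × Fin 3), κ.length ≤ l1 ∧ red (σ.reverse ++ (κ ++ σ)) ≠ [] ∧
    act (fun a => ψ (col a)) (σ.reverse ++ (κ ++ σ)) r = r) ≤ (2 * d ^ l1) * (2 * (Q : ℝ) ^ 2 / N) := by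
    refine (pr_mono' (E' := fun ψ => ∃ κ ∈ (wle (Fin k × Fin 3) l1), red (σ.reverse ++ (κ ++ σ)) ≠ [] ∧
    act (fun a => ψ (col a)) (σ.reverse ++ (κ ++ σ)) r = r) ?_).trans ?_
    · rintro ψ _ ⟨κ, h1, h3⟩
      exact ⟨κ, mem_wle h1, h3⟩
    · refine (pr_exists _ _).trans ?_
      refine (sum_le_card_nsmul _ _ (2 * (Q : ℝ) ^ 2 / N) ?_).trans ?_
      · intro κ hp
        have l1 := len_wle hp
        by_cases hred : red (σ.reverse ++ (κ ++ σ)) ≠ []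
        · refine (pr_mono' ?_).trans (pr_word' col hcol _ hred Q ?_ r hN)
          · exact fun ψ _ h => h.2
          · simp only [List.length_append, List.length_reverse]; omega
        · rw [pr_false]
          · exact hw0
          · exact fun ψ _ h => hred h.1
      · rw [nsmul_eq_mul]
        apply mul_le_mul_of_nonneg_right _ hw0
        have c1 := card_wle (α := Fin k × Fin 3) l1 d hd hcα
        exact_mod_cast c1
  unfold beta
  rw [add_mul]
  have : ((2 * R + l1 + 4 : ℕ) : ℝ) = 2 * R + l1 + 4 := by push_cast; ring
  rw [hQ, this] at e1 e2
  exact add_le_add e1 e2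

open Classical in
noncomputable def coreF (φ : Fin k × Fin 3 → Fin N → Fin N) (R l1 : ℕ) (r : Fin N) (j : Fin k) : Finset (Fin N) :=
  univ.filter (fun x => x ∈ Core φ R l1 r j)

lemma mem_coreF {φ : Fin k × Fin 3 → Fin N → Fin N} {R l1 : ℕ} {r : Fin N} {j : Fin k} {x : Fin N} :
    x ∈ coreF φ R l1 r j ↔ x ∈ Core φ R l1 r j := by
  unfold coreF; simp

open Classical in
lemma core_size {φ : Fin k × Fin 3 → Fin N → Fin N} (hφ : ∀ a x, φ a (φ a x) = x) {R l1 : ℕ} (hR : 1 ≤ R) (r : Fin N) (j : Fin k) :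
    2 ^ R ≤ (coreF φ R l1 r j).card + ((univ : Finset (Fin R → Bool)).filter
      (fun f => ∃ bs', bs' <:+ List.ofFn f ∧ bad φ R l1 r (enc j bs'))).card := by
  have h1 : ((univ : Finset (Fin R → Bool)).filter
      (fun f => ¬ ∃ bs', bs' <:+ List.ofFn f ∧ bad φ R l1 r (enc j bs'))).card ≤ (coreF φ R l1 r j).card := by
    have hgd : ∀ f : Fin R → Bool, (¬ ∃ bs', bs' <:+ List.ofFn f ∧ bad φ R l1 r (enc j bs')) → gd φ R l1 r j (List.ofFn f) := by
      intro f hf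
      refine ⟨by simp, fun bs' h1 h2 => hf ⟨bs', h1, h2⟩⟩
    apply card_le_card_of_injOn (fun f => act φ (enc j (List.ofFn f)) r)
    · intro f hf
      rw [mem_coe, mem_filter] at hf
      rw [mem_coe, mem_coreF]
      refine ⟨List.ofFn f, ?_, hgd f hf.2, rfl⟩
      intro h
      have := congrArg List.length h
      simp at this
      omega
    · intro f hf f' hf' he
      rw [mem_coe, mem_filter] at hf hf'
      have := core_uniq hφ (hgd f hf.2) (hgd f' hf'.2) (ρ := []) (by simp) (by simpa using he)
      rw [List.nil_append, red_of_rd (enc_rd _ _)] at this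
      exact List.ofFn_injective (enc_inj this)
  have h2 := card_filter_add_card_filter_not (s := (univ : Finset (Fin R → Bool)))
    (fun f => ∃ bs', bs' <:+ List.ofFn f ∧ bad φ R l1 r (enc j bs'))
  have h3 : (univ : Finset (Fin R → Bool)).card = 2 ^ R := by simp
  omega

lemma pr_core (col : Fin k × Fin 3 → Fin d) (hcol : Function.Injective col) (hk : 3 * k ≤ d) (hd : 2 ≤ d) (R l1 : ℕ)
    (hR : 1 ≤ R) (r : Fin N) (hN : 4 * d + 4 * (2 * R + l1 + 4) + 4 ≤ N) :
    pr (fun ψ : Fin d → Fin N → Fin N => ∃ j : Fin k, (coreF (fun a => ψ (col a)) R l1 r j).card < 2 ^ (R - 1)) ≤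
      2 * d * (R + 1) * beta d N R l1 := by
  classical
  have hb := beta_nonneg d N R l1
  have hj : ∀ j : Fin k, pr (fun ψ : Fin d → Fin N → Fin N => (coreF (fun a => ψ (col a)) R l1 r j).card < 2 ^ (R - 1)) ≤
      2 * (R + 1) * beta d N R l1 := by
    intro j
    have hm := pr_markov (univ : Finset (Fin R → Bool)) (fun f (ψ : Fin d → Fin N → Fin N) =>
      ∃ bs', bs' <:+ List.ofFn f ∧ bad (fun a => ψ (col a)) R l1 r (enc j bs')) (2 ^ (R - 1))
    have hs : ∑ f : Fin R → Bool, pr (fun (ψ : Fin d → Fin N → Fin N) =>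
      ∃ bs', bs' <:+ List.ofFn f ∧ bad (fun a => ψ (col a)) R l1 r (enc j bs')) ≤ 2 ^ R * ((R + 1) * beta d N R l1) := by
      refine (sum_le_card_nsmul _ _ ((R + 1) * beta d N R l1) ?_).trans ?_
      · intro f _
        refine (pr_mono' (E' := fun ψ => ∃ m ∈ range (R + 1), bad (fun a => ψ (col a)) R l1 r (enc j ((List.ofFn f).drop m))) ?_).trans ?_
        · rintro ψ _ ⟨bs', h1, h2⟩
          have h3 := List.suffix_iff_eq_drop.1 h1
          refine ⟨(List.ofFn f).length - bs'.length, ?_, ?_⟩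
          · simp
          · rw [← h3]; exact h2
        · refine (pr_exists _ _).trans ?_
          refine (sum_le_card_nsmul _ _ (beta d N R l1) ?_).trans ?_
          · intro m _
            apply pr_bad col hcol hk hd R l1 r hN
            rw [enc_length]; simp
          · rw [nsmul_eq_mul]; simp
      · rw [nsmul_eq_mul]; simp
    have h2 : pr (fun ψ : Fin d → Fin N → Fin N => (coreF (fun a => ψ (col a)) R l1 r j).card < 2 ^ (R - 1)) ≤
       pr (fun ψ : Fin d → Fin N → Fin N => (2 : ℝ) ^ (R - 1) ≤ (((univ : Finset (Fin R → Bool)).filter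
      (fun f => ∃ bs', bs' <:+ List.ofFn f ∧ bad (fun a => ψ (col a)) R l1 r (enc j bs'))).card : ℝ)) := by
      apply pr_mono'
      intro ψ hψ h
      have h3 := core_size (φ := fun a => ψ (col a)) (fun a x => hψ.1 _ _) (l1 := l1) hR r j
      have h4 : 2 ^ R = 2 * 2 ^ (R - 1) := by rw [← pow_succ']; congr 1; omega
      have h5 : 2 ^ (R - 1) ≤ ((univ : Finset (Fin R → Bool)).filter
      (fun f => ∃ bs', bs' <:+ List.ofFn f ∧ bad (fun a => ψ (col a)) R l1 r (enc j bs'))).card := by omega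
      exact_mod_cast h5
    have h4 : (2 : ℝ) ^ R = 2 * 2 ^ (R - 1) := by rw [← pow_succ']; congr 1; omega
    rw [h4] at hs
    have h5 : (0 : ℝ) < 2 ^ (R - 1) := by positivity
    have h6 := hm.trans hs
    refine h2.trans ?_
    have h7 : (2 : ℝ) * 2 ^ (R - 1) * ((R + 1) * beta d N R l1) = 2 ^ (R - 1) * (2 * (R + 1) * beta d N R l1) := by ring
    rw [h7] at h6
    exact le_of_mul_le_mul_left h6 h5
  refine (pr_mono' (E' := fun ψ => ∃ j ∈ (univ : Finset (Fin k)), (coreF (fun a => ψ (col a)) R l1 r j).card < 2 ^ (R - 1)) ?_).trans ?_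
  · rintro ψ _ ⟨j, hj⟩
    exact ⟨j, mem_univ _, hj⟩
  · refine (pr_exists _ _).trans ((sum_le_card_nsmul _ _ _ (fun j _ => hj j)).trans ?_)
    rw [nsmul_eq_mul]
    have : ((univ : Finset (Fin k)).card : ℝ) ≤ d := by
      have : (univ : Finset (Fin k)).card ≤ d := by simp; omega
      exact_mod_cast this
    calc _ ≤ (d : ℝ) * (2 * (R + 1) * beta d N R l1) := by gcongr
      _ = _ := by ring
end Prob
end STI


namespace STI
open Finset

section Prob
variable {d N k : ℕ}

lemma pr_untame (hd : 2 ≤ d) (l1 : ℕ) (hN : 4 * d + 4 * l1 + 8 ≤ N) (x : Fin N) :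
    pr (fun ψ : Fin d → Fin N → Fin N => ¬ Tame ψ l1 x) ≤ 2 * d ^ l1 * (2 * (l1 + 1) ^ 2 / N) := by
  have hN0 : (0 : ℝ) < N := by
    have : 0 < N := by omega
    exact_mod_cast this
  have hw0 : (0 : ℝ) ≤ 2 * (l1 + 1) ^ 2 / N := by positivity
  refine (pr_mono' (E' := fun ψ => ∃ w ∈ wle (Fin d) l1, red w ≠ [] ∧ act ψ w x = x) ?_).trans ?_
  · intro ψ _ h
    unfold Tame at h
    push Not at h
    obtain ⟨w, h1, h2, h3⟩ := h
    exact ⟨w, mem_wle h1, h3, h2⟩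
  · refine (pr_exists _ _).trans ?_
    refine (sum_le_card_nsmul _ _ (2 * (l1 + 1 : ℝ) ^ 2 / N) ?_).trans ?_
    · intro w hw
      have hl := len_wle hw
      have hl' : (w.length : ℝ) ≤ l1 := by exact_mod_cast hl
      by_cases hred : red w ≠ []
      · have h2 : (4 * d + 4 * l1 + 8 : ℝ) ≤ N := by exact_mod_cast hN
        refine (pr_mono' ?_).trans ((pr_word w hred x (N / 2) (by positivity) (by linarith)).trans ?_)
        · exact fun ψ _ h => h.2
        · rw [div_div_eq_mul_div]
          apply div_le_div_of_nonneg_right _ hN0.le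
          nlinarith [Nat.cast_nonneg (α := ℝ) w.length]
      · rw [pr_false]
        · exact hw0
        · exact fun ψ _ h => hred h.1
    · rw [nsmul_eq_mul]
      apply mul_le_mul_of_nonneg_right _ hw0
      have c1 := card_wle (α := Fin d) l1 d hd (by simp)
      exact_mod_cast c1

lemma dense_of_denseA {ψ : Fin d → Fin N → Fin N} (hψ : IsInv ψ) (col : Fin k × Fin 3 → Fin d)
    (hcol : Function.Injective col) {H : ℕ} (h : DenseA (fun a => ψ (col a)) H) : Dense H ψ := by
  classical
  obtain ⟨W, B, h1, h2, h3, h4⟩ := h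
  have hinj : Function.Injective (fun p : (Fin k × Fin 3) × Sym2 (Fin N) => (col p.1, p.2)) := by
    intro p q hpq
    exact Prod.ext (hcol (Prod.mk.inj hpq).1) (Prod.mk.inj hpq).2
  refine ⟨W.card, by simp; omega, W, by simp, B.image (fun p => (col p.1, p.2)), ?_, ?_⟩
  · rw [mem_powersetCard, card_image_of_injective _ hinj]
    refine ⟨?_, h2⟩
    intro p hp
    rw [mem_image] at hp
    obtain ⟨q, hq, rfl⟩ := hp
    rw [mem_product]
    exact ⟨mem_univ _, h3 q hq⟩
  · intro p hp x hx
    rw [mem_image] at hp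
    obtain ⟨q, hq, rfl⟩ := hp
    obtain ⟨a, z, rfl⟩ := h4 q hq
    simp only [ed, Sym2.mem_iff] at hx ⊢
    rcases hx with rfl | rfl
    · rfl
    · rw [hψ.1, Sym2.eq_swap]

lemma pr_linkfail (col : Fin k × Fin 3 → Fin d) (nu : Fin k → Fin d) (hnu : ∀ i a, col a ≠ nu i) (hk : k ≤ d)
    (b R l1 : ℕ) (hb : 1 ≤ b) (r : Fin N) (h1 : 4 * d + 4 * 2 ^ (b - 1) + 4 ≤ 2 ^ (R - 1)) (h2 : 2 ^ (R - 1) ≤ N) :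
    pr (fun ψ : Fin d → Fin N → Fin N => (∀ j : Fin k, 2 ^ (R - 1) ≤ (coreF (fun a => ψ (col a)) R l1 r j).card) ∧
      ¬ Link (fun a => ψ (col a)) (fun i => ψ (nu i)) b R l1 r) ≤
      d * N ^ 3 * Real.exp (- (2 ^ (b - 1) * (2 ^ (R - 1) / (2 * N)))) := by
  classical
  set q := 2 ^ (b - 1) with hq
  set y0 := 2 ^ (R - 1) with hy0
  have hy0p : 0 < y0 := by positivity
  have hN0 : (0 : ℝ) < N := by
    have : 0 < N := by omega
    exact_mod_cast this
  have h1' : (4 * d + 4 * q + 4 : ℝ) ≤ y0 := by exact_mod_cast h1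
  have h2' : (y0 : ℝ) ≤ N := by exact_mod_cast h2
  have h2q : 2 * q = 2 ^ b := by rw [hq, ← pow_succ']; congr 1; omega
  have hd0 : (0 : ℝ) ≤ d := Nat.cast_nonneg _
  have hq0 : (0 : ℝ) ≤ q := Nat.cast_nonneg _
  have hD0 : (0 : ℝ) < N - y0 / 2 := by linarith
  set e0 : ℝ := Real.exp (- (2 ^ (b - 1) * (2 ^ (R - 1) / (2 * N)))) with he0
  have hpow : (((N : ℝ) - y0) / (N - y0 / 2)) ^ q ≤ e0 := by
    have h3 : ((N : ℝ) - y0) / (N - y0 / 2) ≤ Real.exp (- ((y0 : ℝ) / (2 * N))) := by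
      refine le_trans ?_ (Real.add_one_le_exp _)
      rw [div_le_iff₀ hD0]
      have : (-((y0 : ℝ) / (2 * N)) + 1) * (N - y0 / 2) = N - y0 + (y0 : ℝ) ^ 2 / (4 * N) := by
        field_simp
        ring
      rw [this]
      have : 0 ≤ (y0 : ℝ) ^ 2 / (4 * N) := by positivity
      linarith
    calc _ ≤ (Real.exp (- ((y0 : ℝ) / (2 * N)))) ^ q := by
          apply pow_le_pow_left₀ _ h3
          exact div_nonneg (by linarith) hD0.le
      _ = e0 := by
          rw [← Real.exp_nat_mul, he0, hq, hy0]
          congr 1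
          push_cast
          ring
  refine (pr_mono' (E' := fun ψ => ∃ p ∈ (univ : Finset (Fin k × Fin N × Fin N × Fin N)),
    2 * q ≤ (XX (fun a => ψ (col a)) (maxF (fun a => ψ (col a)) (2 * b + 1)) p.1
      (CR (fun a => ψ (col a)) R l1 r ∪ {p.2.2.1, p.2.2.2}) (2 * b + 1) p.2.1).card ∧
    y0 ≤ (coreF (fun a => ψ (col a)) R l1 r p.1).card ∧
    ∀ x ∈ XX (fun a => ψ (col a)) (maxF (fun a => ψ (col a)) (2 * b + 1)) p.1
      (CR (fun a => ψ (col a)) R l1 r ∪ {p.2.2.1, p.2.2.2}) (2 * b + 1) p.2.1, ψ (nu p.1) x ∉ coreF (fun a => ψ (col a)) R l1 r p.1) ?_).trans ?_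
  · rintro ψ _ ⟨h3, h4⟩
    unfold Link at h4
    push Not at h4
    obtain ⟨i, v, y1, y2, h5, h6⟩ := h4
    refine ⟨(i, v, y1, y2), mem_univ _, by rw [h2q]; exact h5, h3 i, ?_⟩
    intro x hx
    rw [mem_coreF]
    exact h6 x hx
  · refine (pr_exists _ _).trans ((sum_le_card_nsmul _ _ e0 ?_).trans ?_)
    · rintro ⟨i, v, y1, y2⟩ _
      have hind : ∀ ψ ψ' : Fin d → Fin N → Fin N, (∀ c', c' ≠ nu i → ψ' c' = ψ c') → (fun a => ψ' (col a)) = (fun a => ψ (col a)) := by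
        intro ψ ψ' h
        funext a
        exact h _ (hnu i a)
      refine le_trans ?_ hpow
      refine pr_link (fun ψ => XX (fun a => ψ (col a)) (maxF (fun a => ψ (col a)) (2 * b + 1)) i
        (CR (fun a => ψ (col a)) R l1 r ∪ {y1, y2}) (2 * b + 1) v) (fun ψ => coreF (fun a => ψ (col a)) R l1 r i) (nu i)
        ?_ ?_ q y0 h2 (N - y0 / 2) hD0 (by linarith)
      · intro ψ ψ' h
        simp only [hind ψ ψ' h]
      · intro ψ ψ' h
        simp only [hind ψ ψ' h]
    · rw [nsmul_eq_mul]
      have : ((univ : Finset (Fin k × Fin N × Fin N × Fin N)).card : ℝ) ≤ d * N ^ 3 := by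
        have : (univ : Finset (Fin k × Fin N × Fin N × Fin N)).card ≤ d * N ^ 3 := by
          simp only [card_univ, Fintype.card_prod, Fintype.card_fin]
          calc k * (N * (N * N)) ≤ d * (N * (N * N)) := Nat.mul_le_mul_right _ hk
            _ = _ := by ring
        exact_mod_cast this
      apply mul_le_mul_of_nonneg_right this
      exact (Real.exp_pos _).le
end Prob
end STI


namespace STI
open Finset

section Count
variable {β : Type*} [DecidableEq β]

lemma card_contain (E A : Finset β) (m : ℕ) (hA : A ⊆ E) :
    ((powersetCard m E).filter (fun T => A ⊆ T)).card ≤ (E.card - A.card).choose (m - A.card) := by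
  have h : ((powersetCard m E).filter (fun T => A ⊆ T)).card ≤ (powersetCard (m - A.card) (E \ A)).card := by
    apply card_le_card_of_injOn (fun T => T \ A)
    · intro T hT
      rw [mem_coe, mem_filter, mem_powersetCard] at hT
      rw [mem_coe, mem_powersetCard, card_sdiff_of_subset hT.2, hT.1.2]
      exact ⟨sdiff_subset_sdiff hT.1.1 le_rfl, rfl⟩
    · intro T hT T' hT' he
      rw [mem_coe, mem_filter] at hT hT'
      simp only at he
      rw [← sdiff_union_of_subset hT.2, he, sdiff_union_of_subset hT'.2]
  rwa [card_powersetCard, card_sdiff_of_subset hA] at h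

lemma choose_one (N m : ℕ) (hm : 1 ≤ m) : N * (N * m - 1).choose (m - 1) ≤ (N * m).choose m := by
  rcases Nat.eq_zero_or_pos N with rfl | hN
  · simp
  have h1 : 1 ≤ N * m := Nat.mul_pos hN hm
  obtain ⟨s, hs⟩ : ∃ s, N * m = s + 1 := ⟨N * m - 1, by omega⟩
  obtain ⟨t, rfl⟩ : ∃ t, m = t + 1 := ⟨m - 1, by omega⟩
  have h2 := Nat.add_one_mul_choose_eq s t
  rw [← hs] at h2
  have h4 : (t + 1) * (N * s.choose t) = (t + 1) * ((N * (t + 1)).choose (t + 1)) := by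
    rw [mul_comm (t + 1) ((N * (t + 1)).choose (t + 1)), ← h2]; ring
  have h5 := Nat.eq_of_mul_eq_mul_left (Nat.succ_pos t) h4
  rw [hs] at h5 ⊢
  simp only [Nat.add_sub_cancel]
  exact h5.le

lemma choose_two (N m : ℕ) (hN : 1 ≤ N) (hm : 2 ≤ m) : N ^ 2 * (N * m - 2).choose (m - 2) ≤ (N * m).choose m := by
  refine le_trans ?_ (choose_one N m (by omega))
  rw [pow_two, mul_assoc]
  apply Nat.mul_le_mul_left
  have h1 : 2 ≤ N * m := by nlinarith
  obtain ⟨s, hs⟩ : ∃ s, N * m = s + 2 := ⟨N * m - 2, by omega⟩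
  obtain ⟨t, rfl⟩ : ∃ t, m = t + 2 := ⟨m - 2, by omega⟩
  rw [hs]
  simp only [Nat.add_sub_cancel, show s + 2 - 1 = s + 1 from rfl, show t + 2 - 1 = t + 1 from rfl]
  have h2 := Nat.add_one_mul_choose_eq s t
  have h3 : N * (t + 1) ≤ s + 1 := by nlinarith
  have h4 : (t + 1) * (N * s.choose t) ≤ (t + 1) * ((s + 1).choose (t + 1)) := by
    calc (t + 1) * (N * s.choose t) = (N * (t + 1)) * s.choose t := by ring
      _ ≤ (s + 1) * s.choose t := Nat.mul_le_mul_right _ h3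
      _ = _ := by rw [h2]; ring
  exact Nat.le_of_mul_le_mul_left h4 (Nat.succ_pos t)

/-- abstract union bound -/
lemma count_good {ι κ : Type*} (E : Finset β) (N m : ℕ) (hN : 1 ≤ N) (hm : 2 ≤ m) (hE : E.card = N * m)
    (I : Finset ι) (f : ι → β) (hf : ∀ i ∈ I, f i ∈ E)
    (J : Finset κ) (g g' : κ → β) (hg : ∀ j ∈ J, g j ∈ E) (hg' : ∀ j ∈ J, g' j ∈ E)
    (P : Finset β → Prop) [DecidablePred P]
    (hP : ∀ T ∈ powersetCard m E, ¬ P T → (∃ i ∈ I, f i ∈ T) ∨ ∃ j ∈ J, g j ≠ g' j ∧ g j ∈ T ∧ g' j ∈ T) :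
    ((N * m).choose m : ℝ) * (1 - I.card / N - J.card / N ^ 2) ≤ ((powersetCard m E).filter P).card := by
  classical
  have hN0 : (0 : ℝ) < N := by exact_mod_cast hN
  set C : ℝ := ((N * m).choose m : ℝ) with hC
  have h1 : ∀ i ∈ I, (((powersetCard m E).filter (fun T => f i ∈ T)).card : ℝ) ≤ C / N := by
    intro i hi
    rw [le_div_iff₀ hN0]
    have h2 := card_contain E {f i} m (by simpa using hf i hi)
    simp only [singleton_subset_iff, card_singleton, hE] at h2
    have h3 := choose_one N m (by omega)
    have h4 : ((powersetCard m E).filter (fun T => f i ∈ T)).card * N ≤ (N * m).choose m := by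
      calc _ ≤ (N * m - 1).choose (m - 1) * N := Nat.mul_le_mul_right _ h2
        _ ≤ _ := by rw [mul_comm]; exact h3
    rw [hC]
    exact_mod_cast h4
  have h2 : ∀ j ∈ J, (((powersetCard m E).filter (fun T => g j ≠ g' j ∧ g j ∈ T ∧ g' j ∈ T)).card : ℝ) ≤ C / N ^ 2 := by
    intro j hj
    rw [le_div_iff₀ (by positivity)]
    by_cases hne : g j = g' j
    · simp [hne, hC]
    have h2 := card_contain E {g j, g' j} m (by
      intro e he
      simp only [mem_insert, mem_singleton] at he
      rcases he with rfl | rfl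
      · exact hg j hj
      · exact hg' j hj)
    rw [card_pair hne, hE] at h2
    have h5 : ((powersetCard m E).filter (fun T => g j ≠ g' j ∧ g j ∈ T ∧ g' j ∈ T)).card ≤
      ((powersetCard m E).filter (fun T => {g j, g' j} ⊆ T)).card := by
      apply card_le_card
      intro T hT
      rw [mem_filter] at hT ⊢
      refine ⟨hT.1, ?_⟩
      intro e he
      simp only [mem_insert, mem_singleton] at he
      rcases he with rfl | rfl
      · exact hT.2.2.1
      · exact hT.2.2.2
    have h4 : ((powersetCard m E).filter (fun T => g j ≠ g' j ∧ g j ∈ T ∧ g' j ∈ T)).card * N ^ 2 ≤ (N * m).choose m := by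
      calc _ ≤ (N * m - 2).choose (m - 2) * N ^ 2 := Nat.mul_le_mul_right _ (h5.trans h2)
        _ ≤ _ := by rw [mul_comm]; exact choose_two N m hN hm
    rw [hC]
    exact_mod_cast h4
  have h3 : (powersetCard m E) ⊆ (powersetCard m E).filter P ∪
      (I.biUnion (fun i => (powersetCard m E).filter (fun T => f i ∈ T)) ∪
       J.biUnion (fun j => (powersetCard m E).filter (fun T => g j ≠ g' j ∧ g j ∈ T ∧ g' j ∈ T))) := by
    intro T hT
    by_cases hp : P T
    · exact mem_union_left _ (mem_filter.2 ⟨hT, hp⟩)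
    · apply mem_union_right
      rcases hP T hT hp with ⟨i, hi, h⟩ | ⟨j, hj, h⟩
      · exact mem_union_left _ (mem_biUnion.2 ⟨i, hi, mem_filter.2 ⟨hT, h⟩⟩)
      · exact mem_union_right _ (mem_biUnion.2 ⟨j, hj, mem_filter.2 ⟨hT, h⟩⟩)
  have h4 := card_le_card h3
  rw [card_powersetCard, hE] at h4
  have h5 := h4.trans ((card_union_le _ _).trans (Nat.add_le_add_left ((card_union_le _ _).trans
    (Nat.add_le_add card_biUnion_le card_biUnion_le)) _))
  have h6 : C ≤ (((powersetCard m E).filter P).card : ℝ) + ((∑ i ∈ I, (((powersetCard m E).filter (fun T => f i ∈ T)).card : ℝ)) +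
    ∑ j ∈ J, (((powersetCard m E).filter (fun T => g j ≠ g' j ∧ g j ∈ T ∧ g' j ∈ T)).card : ℝ)) := by
    rw [hC]; exact_mod_cast h5
  have h7 := sum_le_card_nsmul _ _ _ h1
  have h8 := sum_le_card_nsmul _ _ _ h2
  rw [nsmul_eq_mul] at h7 h8
  have h9 : C * (1 - I.card / N - J.card / N ^ 2) = C - I.card * (C / N) - J.card * (C / N ^ 2) := by ring
  rw [h9]
  linarith

lemma choose_lower (n m : ℕ) (hn : 3 ≤ n) (hm : 1 ≤ m) :
    ((n : ℝ) * m) ^ m / m.factorial * (1 - 2 * m / n) ≤ (((n - 1) * m).choose m : ℝ) := by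
  have hn0 : (0 : ℝ) < n := by have : 0 < n := by omega
                               exact_mod_cast this
  have h1 := Nat.pow_sub_le_descFactorial ((n - 1) * m) m
  have h2 := Nat.descFactorial_eq_factorial_mul_choose ((n - 1) * m) m
  rw [div_mul_eq_mul_div, div_le_iff₀ (by positivity)]
  have h3 : ((n - 2) * m) ^ m ≤ ((n - 1) * m).choose m * m.factorial := by
    rw [mul_comm (((n - 1) * m).choose m), ← h2]
    refine le_trans (Nat.pow_le_pow_left ?_ _) h1
    have : (n - 1) * m = (n - 2) * m + m := by
      obtain ⟨t, rfl⟩ : ∃ t, n = t + 2 := ⟨n - 2, by omega⟩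
      simp only [Nat.add_sub_cancel, show t + 2 - 1 = t + 1 from rfl]; ring
    omega
  have h4 : (((n : ℝ) - 2) * m) ^ m ≤ (((n - 1) * m).choose m : ℝ) * m.factorial := by
    have : ((((n - 2) * m) ^ m : ℕ) : ℝ) ≤ ((((n - 1) * m).choose m * m.factorial : ℕ) : ℝ) := by exact_mod_cast h3
    rw [Nat.cast_pow, Nat.cast_mul, Nat.cast_mul, Nat.cast_sub (by omega)] at this
    exact_mod_cast this
  refine le_trans ?_ h4
  have h5 : ((n : ℝ) - 2) * m = (n * m) * (1 + (-(2 / n))) := by field_simp; ring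
  rw [h5, mul_pow (n * m : ℝ)]
  apply mul_le_mul_of_nonneg_left _ (by positivity)
  have h6 := one_add_mul_le_pow (a := -(2 / (n : ℝ))) (by
    have : (2 : ℝ) / n ≤ 2 := by
      rw [div_le_iff₀ hn0]
      have : (3 : ℝ) ≤ n := by exact_mod_cast hn
      linarith
    linarith) m
  refine le_trans (le_of_eq ?_) h6
  ring
end Count
end STI


namespace STI
open Finset

section Edges
variable {d N : ℕ} {ψ : Fin d → Fin N → Fin N}

def EF (ψ : Fin d → Fin N → Fin N) : Finset (Sym2 (Fin N)) :=
  (univ : Finset (Fin d × Fin N)).image (fun p => s(p.2, ψ p.1 p.2))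

lemma mem_EF (c : Fin d) (x : Fin N) : s(x, ψ c x) ∈ EF ψ := by
  unfold EF
  rw [mem_image]
  exact ⟨(c, x), mem_univ _, rfl⟩

lemma edge_at (hψ : IsInv ψ) {e : Sym2 (Fin N)} (he : e ∈ EF ψ) {u : Fin N} (hu : u ∈ e) : ∃ c, e = s(u, ψ c u) := by
  unfold EF at he
  rw [mem_image] at he
  obtain ⟨⟨c, x⟩, _, rfl⟩ := he
  rw [Sym2.mem_iff] at hu
  rcases hu with rfl | rfl
  · exact ⟨c, rfl⟩
  · exact ⟨c, by simp only; rw [hψ.1, Sym2.eq_swap]⟩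

lemma card_EF (hψ : IsInv ψ) : 2 * (EF ψ).card = d * N := by
  have h1 : ∀ e ∈ EF ψ, ((univ : Finset (Fin d × Fin N)).filter (fun p => s(p.2, ψ p.1 p.2) = e)).card = 2 := by
    intro e he
    unfold EF at he
    rw [mem_image] at he
    obtain ⟨⟨c, x⟩, _, rfl⟩ := he
    have : (univ : Finset (Fin d × Fin N)).filter (fun p => s(p.2, ψ p.1 p.2) = s(x, ψ c x)) = {(c, x), (c, ψ c x)} := by
      ext ⟨c', x'⟩
      simp only [mem_filter, mem_univ, true_and, mem_insert, mem_singleton, Prod.mk.injEq, Sym2.eq_iff]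
      constructor
      · rintro (⟨h1, h2⟩ | ⟨h1, h2⟩)
        · subst h1
          exact Or.inl ⟨hψ.2.2 _ _ _ h2, rfl⟩
        · right
          refine ⟨?_, h1⟩
          apply hψ.2.2 _ _ x'
          rw [h2, h1, hψ.1]
      · rintro (⟨rfl, rfl⟩ | ⟨rfl, rfl⟩)
        · exact Or.inl ⟨rfl, rfl⟩
        · exact Or.inr ⟨rfl, hψ.1 _ _⟩
    simp only
    rw [this, card_pair]
    intro h
    exact hψ.2.1 c x (Prod.mk.inj h).2.symm
  have h2 := card_eq_sum_card_fiberwise (s := (univ : Finset (Fin d × Fin N))) (t := EF ψ)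
    (f := fun p => s(p.2, ψ p.1 p.2)) (fun p _ => mem_EF _ _)
  rw [sum_congr rfl h1] at h2
  simp only [card_univ, Fintype.card_prod, Fintype.card_fin, sum_const, smul_eq_mul] at h2
  omega

lemma adj_iff_EF (hψ : IsInv ψ) {x y : Fin N} : (⨆ i, gr ψ hψ i).Adj x y ↔ s(x, y) ∈ EF ψ := by
  rw [SimpleGraph.iSup_adj]
  constructor
  · rintro ⟨c, hc⟩
    have hc : ψ c x = y := hc
    rw [← hc]; exact mem_EF _ _
  · intro h
    obtain ⟨c, hc⟩ := edge_at hψ h (Sym2.mem_mk_left x y)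
    refine ⟨c, ?_⟩
    change ψ c x = y
    have := Sym2.congr_right.1 hc
    exact this.symm

variable {k : ℕ}

open Classical in
theorem count_M (hψ : IsInv ψ) (m : ℕ) (hm : 2 ≤ m) (hdm : d = 2 * m) (col : Fin k × Fin 3 → Fin d) (hcol : Function.Injective col)
    (nu : Fin k → Fin d) {b R l1 : ℕ} {r : Fin N} (hb : 1 ≤ b) (hl : 2 * (2 * b + 1) + 4 ≤ l1)
    (hr : r ∈ CR (fun a => ψ (col a)) R l1 r)
    (hden : ¬ DenseA (fun a => ψ (col a)) (4 * (2 * b + 1)))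
    (hlink : Link (fun a => ψ (col a)) (fun i => ψ (nu i)) b R l1 r)
    (badV : Finset (Fin N)) (hbad : ∀ x, (¬ Tame ψ l1 x ∨ ∃ ρ : List (Fin d), ρ.length ≤ 3 ∧ act ψ ρ x ∈ CR (fun a => ψ (col a)) R l1 r) → x ∈ badV) :
    ((N * m).choose m : ℝ) * (1 - d * badV.card / N - 2 * d ^ (4 * b + 4) / N) ≤
      (Nat.card {M : SimpleGraph (Fin N) // IsInducedMatching (⨆ i, gr ψ hψ i) M d ∧
        HasStrongISTs (⨆ i, gr ψ hψ i) M r k} : ℝ) := by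
  have hN : 1 ≤ N := Fin.pos r
  have hN0 : (0 : ℝ) < N := by exact_mod_cast hN
  have hE : (EF ψ).card = N * m := by
    have := card_EF hψ
    have h3 : d * N = (2 * m) * N := congrArg (· * N) hdm
    have h4 : (2 * m) * N = 2 * (N * m) := by ring
    omega
  set H := 2 * (2 * b + 1) with hH
  let P : Finset (Sym2 (Fin N)) → Prop := fun T => (∀ e ∈ T, ∀ x ∈ e, x ∉ badV) ∧
    ∀ e ∈ T, ∀ e' ∈ T, e ≠ e' → ∀ u ∈ e, ∀ v ∈ e', ∀ w : List (Fin d), w.length ≤ H → act ψ w u ≠ v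
  have hcount := count_good (EF ψ) N m hN hm hE ((univ : Finset (Fin d)) ×ˢ badV) (fun p => s(p.2, ψ p.1 p.2))
    (fun p _ => mem_EF _ _) ((univ : Finset (Fin N)) ×ˢ ((univ : Finset (Fin d)) ×ˢ (wle (Fin d) H ×ˢ (univ : Finset (Fin d)))))
    (fun p => s(p.1, ψ p.2.1 p.1)) (fun p => s(act ψ p.2.2.1 p.1, ψ p.2.2.2 (act ψ p.2.2.1 p.1)))
    (fun p _ => mem_EF _ _) (fun p _ => mem_EF _ _) P (by
      intro T hT hP
      rw [mem_powersetCard] at hT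
      by_cases h1 : ∀ e ∈ T, ∀ x ∈ e, x ∉ badV
      · right
        have h2 : ¬ ∀ e ∈ T, ∀ e' ∈ T, e ≠ e' → ∀ u ∈ e, ∀ v ∈ e', ∀ w : List (Fin d), w.length ≤ H → act ψ w u ≠ v :=
          fun h2 => hP ⟨h1, h2⟩
        push Not at h2
        obtain ⟨e, he, e', he', hne, u, hu, v, hv, w, hw, hwv⟩ := h2
        obtain ⟨c, hc⟩ := edge_at hψ (hT.1 he) hu
        obtain ⟨c', hc'⟩ := edge_at hψ (hT.1 he') hv
        refine ⟨(u, c, w, c'), ?_, ?_⟩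
        · simp only [mem_product, mem_univ, true_and, and_true]
          exact mem_wle hw
        · simp only [hwv, ← hc, ← hc']
          exact ⟨hne, he, he'⟩
      · left
        push Not at h1
        obtain ⟨e, he, x, hx, hxb⟩ := h1
        obtain ⟨c, hc⟩ := edge_at hψ (hT.1 he) hx
        refine ⟨(c, x), by simp [hxb], ?_⟩
        simp only [← hc]
        exact he)
  have hcard : (((powersetCard m (EF ψ)).filter P).card : ℝ) ≤ (Nat.card {M : SimpleGraph (Fin N) // IsInducedMatching (⨆ i, gr ψ hψ i) M d ∧
        HasStrongISTs (⨆ i, gr ψ hψ i) M r k} : ℝ) := by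
    have hnd : ∀ T ∈ powersetCard m (EF ψ), ∀ e ∈ T, ¬ e.IsDiag := by
      intro T hT e he
      rw [mem_powersetCard] at hT
      have := hT.1 he
      unfold EF at this
      rw [mem_image] at this
      obtain ⟨⟨c, x⟩, _, rfl⟩ := this
      rw [Sym2.mk_isDiag_iff]
      exact fun h => hψ.2.1 c x h.symm
    have hes : ∀ T ∈ powersetCard m (EF ψ), (SimpleGraph.fromEdgeSet (T : Set (Sym2 (Fin N)))).edgeSet = T := by
      intro T hT
      rw [SimpleGraph.edgeSet_fromEdgeSet]
      ext e
      simp only [Set.mem_diff, mem_coe]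
      constructor
      · exact fun h => h.1
      · exact fun h => ⟨h, fun h2 => hnd T hT e h (by simpa using h2)⟩
    have hgood : ∀ T ∈ (powersetCard m (EF ψ)).filter P, IsInducedMatching (⨆ i, gr ψ hψ i) (SimpleGraph.fromEdgeSet (T : Set (Sym2 (Fin N)))) d ∧
        HasStrongISTs (⨆ i, gr ψ hψ i) (SimpleGraph.fromEdgeSet (T : Set (Sym2 (Fin N)))) r k := by
      intro T hT
      rw [mem_filter] at hT
      obtain ⟨hT1, hP1, hP2⟩ := hT
      have hes' := hes T hT1
      rw [mem_powersetCard] at hT1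
      set M := SimpleGraph.fromEdgeSet (T : Set (Sym2 (Fin N))) with hM
      have hMadj : ∀ x y, M.Adj x y ↔ s(x, y) ∈ T := by
        intro x y
        rw [← SimpleGraph.mem_edgeSet, hes', mem_coe]
      have hML : M ≤ ⨆ i, gr ψ hψ i := by
        intro x y h
        rw [adj_iff_EF]
        exact hT1.1 ((hMadj x y).1 h)
      have hMm : ∀ v w x : Fin N, M.Adj v w → M.Adj v x → w = x := by
        intro v w x h1 h2
        rw [hMadj] at h1 h2
        by_contra hne
        refine hP2 _ h1 _ h2 ?_ v (Sym2.mem_mk_left _ _) v (Sym2.mem_mk_left _ _) [] (by simp) rfl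
        intro h
        exact hne (Sym2.congr_right.1 h)
      have hsup : ∀ y ∈ M.support, ∃ e ∈ T, y ∈ e := by
        rintro y ⟨z, hz⟩
        exact ⟨_, (hMadj y z).1 hz, Sym2.mem_mk_left _ _⟩
      have hnb : ∀ y ∈ M.support, y ∉ badV := by
        intro y hy
        obtain ⟨e, he, hye⟩ := hsup y hy
        exact hP1 e he y hye
      have G2 : ∀ y ∈ M.support, ∀ y' ∈ M.support, y ≠ y' → ∀ w : List (Fin d), w.length ≤ 2 * (2 * b + 1) →
          act ψ w y = y' → M.Adj y y' := by
        intro y hy y' hy' hne w hw he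
        obtain ⟨e, he1, he2⟩ := hsup y hy
        obtain ⟨e', he1', he2'⟩ := hsup y' hy'
        by_cases hee : e = e'
        · subst hee
          rw [hMadj]
          have : e = s(y, y') := ((Sym2.mem_and_mem_iff hne).1 ⟨he2, he2'⟩)
          rw [← this]; exact he1
        · exact absurd he (hP2 e he1 e' he1' hee y he2 y' he2' w hw)
      refine ⟨⟨hML, hMm, ?_, ?_⟩, ?_⟩
      · rw [hes']
        simp only [SetLike.coe_sort_coe, Nat.card_eq_fintype_card, Fintype.card_coe]
        omega
      · intro u v hu hv huv
        rw [SimpleGraph.iSup_adj] at huv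
        obtain ⟨c, hc⟩ := huv
        exact G2 u hu v hv (fun h => (gr ψ hψ c).loopless.irrefl v (h ▸ hc)) [c] (by simp; omega) hc
      · apply strong_final hψ col hcol nu hb hl hr hden hlink M hML hMm
        · intro y hy
          by_contra h
          exact hnb y hy (hbad y (Or.inl h))
        · intro y hy ρ hρ h
          exact hnb y hy (hbad y (Or.inr ⟨ρ, hρ, h⟩))
        · exact G2
    have hinj := Nat.card_le_card_of_injective (α := ((powersetCard m (EF ψ)).filter P : Finset _))
      (β := {M : SimpleGraph (Fin N) // IsInducedMatching (⨆ i, gr ψ hψ i) M d ∧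
        HasStrongISTs (⨆ i, gr ψ hψ i) M r k}) (fun T => ⟨SimpleGraph.fromEdgeSet ((T : Finset (Sym2 (Fin N))) : Set (Sym2 (Fin N))), hgood T.1 T.2⟩) (by
        rintro ⟨T, hT⟩ ⟨T', hT'⟩ h
        have h1 := congrArg (fun M => M.1.edgeSet) h
        simp only at h1
        rw [hes T (mem_filter.1 hT).1, hes T' (mem_filter.1 hT').1] at h1
        exact Subtype.ext (Finset.coe_injective h1))
    rw [Nat.card_eq_fintype_card, Fintype.card_coe] at hinj
    exact_mod_cast hinj
  refine le_trans ?_ (hcount.trans hcard)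
  apply mul_le_mul_of_nonneg_left _ (Nat.cast_nonneg _)
  have i1 : (((univ : Finset (Fin d)) ×ˢ badV).card : ℝ) = d * badV.card := by
    rw [card_product]; simp
  have i2 : (((univ : Finset (Fin N)) ×ˢ ((univ : Finset (Fin d)) ×ˢ (wle (Fin d) H ×ˢ (univ : Finset (Fin d))))).card : ℝ) ≤ N * (2 * d ^ (4 * b + 4)) := by
    have c1 := card_wle (α := Fin d) H d (by omega) (by simp)
    have : ((univ : Finset (Fin N)) ×ˢ ((univ : Finset (Fin d)) ×ˢ (wle (Fin d) H ×ˢ (univ : Finset (Fin d))))).card ≤ N * (2 * d ^ (4 * b + 4)) := by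
      simp only [card_product, card_univ, Fintype.card_fin]
      calc N * (d * ((wle (Fin d) H).card * d)) ≤ N * (d * ((2 * d ^ H) * d)) := by gcongr
        _ = N * (2 * d ^ (H + 2)) := by ring
        _ = _ := by rw [hH]; ring_nf
    exact_mod_cast this
  rw [i1]
  have i3 : (((univ : Finset (Fin N)) ×ˢ ((univ : Finset (Fin d)) ×ˢ (wle (Fin d) H ×ˢ (univ : Finset (Fin d))))).card : ℝ) / N ^ 2 ≤ 2 * d ^ (4 * b + 4) / N := by
    rw [div_le_div_iff₀ (by positivity) hN0]
    calc _ ≤ (N : ℝ) * (2 * d ^ (4 * b + 4)) * N := by gcongr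
      _ = _ := by ring
  linarith
end Edges
end STI


namespace STI
open Finset

section Final
variable {d N k : ℕ}

open Classical in
lemma card_badV (hd : 4 ≤ d) (hk : k ≤ d) (ψ : Fin d → Fin N → Fin N) (hψ : IsInv ψ) (col : Fin k × Fin 3 → Fin d) (R l1 : ℕ) (r : Fin N) :
    ∃ B : Finset (Fin N), (∀ x, (∃ ρ : List (Fin d), ρ.length ≤ 3 ∧ act ψ ρ x ∈ CR (fun a => ψ (col a)) R l1 r) → x ∈ B) ∧
      B.card ≤ 4 * d ^ 4 * 2 ^ R := by
  refine ⟨((wle (Fin d) 3) ×ˢ ((univ : Finset (Fin k)) ×ˢ wle Bool R)).image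
    (fun p => act ψ p.1 (act (fun a => ψ (col a)) (enc p.2.1 p.2.2) r)), ?_, ?_⟩
  · rintro x ⟨ρ, h1, j, bs, h2, h3⟩
    rw [mem_image]
    refine ⟨(ρ.reverse, j, bs), ?_, ?_⟩
    · simp only [mem_product, mem_univ, true_and]
      exact ⟨mem_wle (by simpa using h1), mem_wle h2.1⟩
    · simp only
      rw [← h3]
      exact act_reverse_act ψ hψ.1 ρ x
  · refine card_image_le.trans ?_
    rw [card_product, card_product, card_univ, Fintype.card_fin]
    have h1 := card_wle (α := Fin d) 3 d (by omega) (by simp)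
    have h2 := card_wle (α := Bool) R 2 (by omega) (by simp)
    calc _ ≤ (2 * d ^ 3) * (d * (2 * 2 ^ R)) := by gcongr
      _ = _ := by ring

/-- failure event at root `r` -/
def RFail (col : Fin k × Fin 3 → Fin d) (nu : Fin k → Fin d) (b R l1 : ℕ) (r : Fin N) (ψ : Fin d → Fin N → Fin N) : Prop :=
  (∃ j : Fin k, (coreF (fun a => ψ (col a)) R l1 r j).card < 2 ^ (R - 1)) ∨
  ((∀ j : Fin k, 2 ^ (R - 1) ≤ (coreF (fun a => ψ (col a)) R l1 r j).card) ∧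
      ¬ Link (fun a => ψ (col a)) (fun i => ψ (nu i)) b R l1 r)

/-- `x` lies close to a short cycle -/
def Unt (l1 : ℕ) (x : Fin N) (ψ : Fin d → Fin N → Fin N) : Prop := ¬ Tame ψ l1 x

noncomputable def pR (d N b R l1 : ℕ) : ℝ :=
  2 * d * (R + 1) * beta d N R l1 + d * N ^ 3 * Real.exp (- (2 ^ (b - 1) * (2 ^ (R - 1) / (2 * N))))

noncomputable def dlt (d N b R : ℕ) (ζ : ℝ) : ℝ := d * (ζ + 4 * d ^ 4 * 2 ^ R) / N + 2 * d ^ (4 * b + 4) / N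

open Classical in
theorem finite_bound (m : ℕ) (hm : 2 ≤ m) (hdm : d = 2 * m) (M : ℕ) (hNM : N = M + M) (hM : d ≤ M)
    (b R l1 : ℕ) (hb : 1 ≤ b) (hR : 1 ≤ R) (hl : 2 * (2 * b + 1) + 4 ≤ l1)
    (h1 : 4 * d + 4 * 2 ^ (b - 1) + 4 ≤ 2 ^ (R - 1)) (h2 : 2 ^ (R - 1) ≤ N)
    (hN : 4 * d + 4 * (2 * R + l1 + 4) + 4 ≤ N) (hN2 : 4 * d + 4 * (4 * (2 * b + 1) + 1) + 4 ≤ N)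
    (ζ θ : ℝ) (hζ : 0 < ζ) (hθ : 0 < θ) (c : ℝ) (hc : c ≤ ((N * m).choose m : ℝ) * (1 - dlt d N b R ζ)) :
    1 - ((4 * (2 * b + 1) + 1) * (2 * d * (4 * (2 * b + 1) + 1) ^ 2) ^ (4 * (2 * b + 1) + 1) / N
      + 4 * d ^ l1 * (l1 + 1) ^ 2 / ζ + N * pR d N b R l1 / θ) ≤
    tupleProb N d (fun Mt => (N : ℝ) - θ ≤ (Nat.card {r : Fin N // c ≤ (Nat.card {G : SimpleGraph (Fin N) //
                  IsInducedMatching (⨆ i, Mt i) G d ∧ HasStrongISTs (⨆ i, Mt i) G r (d / 4)} : ℝ)} : ℝ)) := by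
  have hd : 4 ≤ d := by omega
  have hN0 : 0 < N := by omega
  have hN0' : (0 : ℝ) < N := by exact_mod_cast hN0
  have hex : ∃ ψ : Fin d → Fin N → Fin N, IsInv ψ := by
    subst hNM; exact exists_isInv M (by omega) hM
  let k := d / 4
  have hk4 : 4 * k ≤ d := Nat.mul_div_le d 4
  have hk1 : 1 ≤ k := by change 1 ≤ d / 4; omega
  let col : Fin k × Fin 3 → Fin d := fun p => ⟨4 * p.1.1 + p.2.1, by have := p.1.2; have := p.2.2; omega⟩
  let nu : Fin k → Fin d := fun i => ⟨4 * i.1 + 3, by have := i.2; omega⟩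
  have hcol : Function.Injective col := by
    rintro ⟨i, t⟩ ⟨i', t'⟩ h
    have h' : 4 * i.1 + t.1 = 4 * i'.1 + t'.1 := congrArg Fin.val h
    have := t.2
    have := t'.2
    exact Prod.ext (Fin.ext (by simp only; omega)) (Fin.ext (by simp only; omega))
  have hnu : ∀ i a, col a ≠ nu i := by
    rintro i ⟨i', t⟩ h
    have h' : 4 * i'.1 + t.1 = 4 * i.1 + 3 := congrArg Fin.val h
    have := t.2
    omega
  let E1 : (Fin d → Fin N → Fin N) → Prop := Dense (4 * (2 * b + 1))
  let E2 : (Fin d → Fin N → Fin N) → Prop := fun ψ =>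
    ζ ≤ (((univ : Finset (Fin N)).filter (fun x => Unt l1 x ψ)).card : ℝ)
  let E3 : (Fin d → Fin N → Fin N) → Prop := fun ψ =>
    θ ≤ (((univ : Finset (Fin N)).filter (fun r => RFail col nu b R l1 r ψ)).card : ℝ)
  have p1 : pr E1 ≤ (4 * (2 * b + 1) + 1) * (2 * d * (4 * (2 * b + 1) + 1) ^ 2) ^ (4 * (2 * b + 1) + 1) / N := by
    have := pr_dense (d := d) (4 * (2 * b + 1)) hN0 hN2
    push_cast at this
    exact this
  have p2 : pr E2 ≤ 4 * d ^ l1 * (l1 + 1) ^ 2 / ζ := by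
    rw [le_div_iff₀ hζ, mul_comm]
    refine (pr_markov (univ : Finset (Fin N)) (fun x ψ => Unt l1 x ψ) ζ).trans ?_
    refine (sum_le_sum (fun x _ => pr_untame (d := d) (by omega) l1 (by omega) x)).trans ?_
    rw [sum_const, card_univ, Fintype.card_fin, nsmul_eq_mul]
    apply le_of_eq
    field_simp
    ring
  have p3 : pr E3 ≤ N * pR d N b R l1 / θ := by
    rw [le_div_iff₀ hθ, mul_comm]
    refine (pr_markov (univ : Finset (Fin N)) (fun r ψ => RFail col nu b R l1 r ψ) θ).trans ?_
    have : ∀ r : Fin N, pr (fun ψ => RFail col nu b R l1 r ψ) ≤ pR d N b R l1 := by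
      intro r
      refine (pr_or _ _).trans ?_
      exact add_le_add (pr_core col hcol (by omega) (by omega) R l1 hR r hN)
        (pr_linkfail col nu hnu (by omega) b R l1 hb r h1 h2)
    refine (sum_le_sum (fun x _ => this x)).trans ?_
    rw [sum_const, card_univ, Fintype.card_fin, nsmul_eq_mul]
  rw [tupleProb_eq, pr_not _ hex]
  have key : pr (fun ψ : Fin d → Fin N → Fin N => ¬ ∃ hψ : IsInv ψ, (N : ℝ) - θ ≤ (Nat.card {r : Fin N // c ≤ (Nat.card {G : SimpleGraph (Fin N) //
                  IsInducedMatching (⨆ i, gr ψ hψ i) G d ∧ HasStrongISTs (⨆ i, gr ψ hψ i) G r (d / 4)} : ℝ)} : ℝ))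
      ≤ pr E1 + pr E2 + pr E3 := by
    refine (pr_mono' (E' := fun ψ => (E1 ψ ∨ E2 ψ) ∨ E3 ψ) ?_).trans ((pr_or _ _).trans (add_le_add (pr_or _ _) le_rfl))
    intro ψ hψ hfail
    by_contra hcon
    push Not at hcon
    obtain ⟨⟨g1, g2⟩, g3⟩ := hcon
    apply hfail
    refine ⟨hψ, ?_⟩
    have g3' : (((univ : Finset (Fin N)).filter (fun r => RFail col nu b R l1 r ψ)).card : ℝ) < θ := lt_of_not_ge g3
    have g2' : (((univ : Finset (Fin N)).filter (fun x => Unt l1 x ψ)).card : ℝ) < ζ := lt_of_not_ge g2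
    have hgood : ∀ r : Fin N, ¬ RFail col nu b R l1 r ψ → c ≤ (Nat.card {G : SimpleGraph (Fin N) //
                  IsInducedMatching (⨆ i, gr ψ hψ i) G d ∧ HasStrongISTs (⨆ i, gr ψ hψ i) G r (d / 4)} : ℝ) := by
      intro r hr
      unfold RFail at hr
      push Not at hr
      obtain ⟨hr1, hr2⟩ := hr
      have hlink := hr2 hr1
      obtain ⟨B, hB1, hB2⟩ := card_badV hd (by omega : k ≤ d) ψ hψ col R l1 r
      have hne : ∃ x, x ∈ coreF (fun a => ψ (col a)) R l1 r ⟨0, hk1⟩ := by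
        have := hr1 ⟨0, hk1⟩
        have h0 : 0 < 2 ^ (R - 1) := by positivity
        exact card_pos.1 (by omega)
      obtain ⟨x, hx⟩ := hne
      have hrm := r_mem_CR (mem_coreF.1 hx)
      have := count_M hψ m hm hdm col hcol nu hb hl hrm (fun h => g1 (dense_of_denseA hψ col hcol h)) hlink
        (((univ : Finset (Fin N)).filter (fun x => Unt l1 x ψ)) ∪ B) (by
          rintro x (hx | hx)
          · exact mem_union_left _ (by rw [mem_filter]; exact ⟨mem_univ _, hx⟩)
          · exact mem_union_right _ (hB1 x hx))
      refine hc.trans (le_trans ?_ this)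
      refine mul_le_mul_of_nonneg_left ?_ (Nat.cast_nonneg _)
      unfold dlt
      have hcard : ((((univ : Finset (Fin N)).filter (fun x => Unt l1 x ψ)) ∪ B).card : ℝ) ≤ ζ + 4 * d ^ 4 * 2 ^ R := by
        have h3 : ((((univ : Finset (Fin N)).filter (fun x => Unt l1 x ψ)) ∪ B).card : ℝ) ≤
          (((univ : Finset (Fin N)).filter (fun x => Unt l1 x ψ)).card : ℝ) + B.card := by
          exact_mod_cast card_union_le _ _
        have h4 : (B.card : ℝ) ≤ 4 * d ^ 4 * 2 ^ R := by exact_mod_cast hB2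
        linarith
      have : (d : ℝ) * ((((univ : Finset (Fin N)).filter (fun x => Unt l1 x ψ)) ∪ B).card : ℝ) / N ≤ d * (ζ + 4 * d ^ 4 * 2 ^ R) / N := by
        gcongr
      linarith
    rw [Nat.card_eq_fintype_card, Fintype.card_subtype]
    have hsum := card_filter_add_card_filter_not (s := (univ : Finset (Fin N))) (fun r => RFail col nu b R l1 r ψ)
    rw [card_univ, Fintype.card_fin] at hsum
    have hle : ((univ : Finset (Fin N)).filter (fun r => ¬ RFail col nu b R l1 r ψ)).card ≤ ((univ : Finset (Fin N)).filter (fun r : Fin N => c ≤ (Nat.card {G : SimpleGraph (Fin N) //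
                  IsInducedMatching (⨆ i, gr ψ hψ i) G d ∧ HasStrongISTs (⨆ i, gr ψ hψ i) G r (d / 4)} : ℝ))).card := by
      apply card_le_card
      intro r hr
      rw [mem_filter] at hr ⊢
      exact ⟨hr.1, hgood r hr.2⟩
    have hle' : (((univ : Finset (Fin N)).filter (fun r => ¬ RFail col nu b R l1 r ψ)).card : ℝ) ≤ ((univ : Finset (Fin N)).filter (fun r : Fin N => c ≤ (Nat.card {G : SimpleGraph (Fin N) //
                  IsInducedMatching (⨆ i, gr ψ hψ i) G d ∧ HasStrongISTs (⨆ i, gr ψ hψ i) G r (d / 4)} : ℝ))).card := by exact_mod_cast hle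
    have hsum' : (((univ : Finset (Fin N)).filter (fun r => RFail col nu b R l1 r ψ)).card : ℝ) + ((univ : Finset (Fin N)).filter (fun r => ¬ RFail col nu b R l1 r ψ)).card = N := by exact_mod_cast hsum
    linarith
  linarith

end Final
end STI


namespace STI

section Est
variable {μ lam d N : ℕ} {D : ℝ}

lemma powX (hD1 : 100 ≤ D) (hN : D ^ (2000 * μ + 1) ≤ N) {e : ℕ} (he : e ≤ 2000 * μ) : D ^ e / N ≤ 1 / D := by
  have hD0 : 0 < D := by linarith
  have h1 : D ^ e * D ≤ D ^ (2000 * μ + 1) := by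
    rw [← pow_succ]; exact pow_le_pow_right₀ (by linarith) (by omega)
  have hN0 : (0 : ℝ) < N := lt_of_lt_of_le (by positivity) hN
  rw [div_le_div_iff₀ hN0 hD0]
  linarith

lemma est_dense (hμ : 1 ≤ μ) (hD1 : 100 ≤ D) (hDμ : 200 * (μ : ℝ) + 100 ≤ D) (hN : D ^ (2000 * μ + 1) ≤ N) (hd : (d : ℝ) ≤ D ^ 2)
    (b : ℕ) (hb : b = 23 * μ + 1) :
    ((4 * (2 * b + 1) + 1) * (2 * d * (4 * (2 * b + 1) + 1) ^ 2) ^ (4 * (2 * b + 1) + 1) / N : ℝ) ≤ 1 / D := by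
  have h1 : (4 * (2 * b + 1) + 1 : ℝ) ≤ D := by rw [hb]; push_cast; linarith
  refine le_trans ?_ (powX hD1 hN (e := 5 * (4 * (2 * b + 1) + 1) + 1) (by omega))
  gcongr
  have h2 : (2 * d * (4 * (2 * b + 1) + 1) ^ 2 : ℝ) ≤ D ^ 5 := by
    calc (2 * d * (4 * (2 * b + 1) + 1) ^ 2 : ℝ) ≤ D * D ^ 2 * D ^ 2 := by gcongr; linarith
      _ = D ^ 5 := by ring
  calc _ ≤ D * (D ^ 5) ^ (4 * (2 * b + 1) + 1) := by gcongr
    _ = _ := by rw [← pow_mul, pow_succ]; ring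

lemma est_untame (hμ : 1 ≤ μ) (hD1 : 100 ≤ D) (hDμ : 200 * (μ : ℝ) + 100 ≤ D) (hd : (d : ℝ) ≤ D ^ 2)
    (l1 : ℕ) (hl : l1 = 92 * μ + 10) :
    (4 * d ^ l1 * (l1 + 1) ^ 2 / D ^ (1000 * μ) : ℝ) ≤ 1 / D := by
  have hD0 : 0 < D := by linarith
  have h1 : (l1 + 1 : ℝ) ≤ D := by rw [hl]; push_cast; linarith
  rw [div_le_div_iff₀ (by positivity) hD0]
  calc (4 * d ^ l1 * (l1 + 1) ^ 2 * D : ℝ) ≤ D * (D ^ 2) ^ l1 * D ^ 2 * D := by gcongr; linarith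
    _ = D ^ (2 * l1 + 4) := by rw [← pow_mul]; ring
    _ ≤ D ^ (1000 * μ) := pow_le_pow_right₀ (by linarith) (by omega)
    _ = _ := by ring

lemma est_dlt (hμ : 1 ≤ μ) (hD1 : 100 ≤ D) (hN : D ^ (2000 * μ + 1) ≤ N) (hd : (d : ℝ) ≤ D ^ 2)
    (b R : ℕ) (hb : b = 23 * μ + 1) (hR : (2 : ℝ) ^ R * D ^ 20 ≤ 4 * N) :
    dlt d N b R (D ^ (1000 * μ)) ≤ 3 / D := by
  have hD0 : 0 < D := by linarith
  have hN0 : (0 : ℝ) < N := lt_of_lt_of_le (by positivity) hN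
  have e1 : d * D ^ (1000 * μ) / N ≤ 1 / D := by
    refine le_trans ?_ (powX hD1 hN (e := 1000 * μ + 2) (by omega))
    gcongr
    calc d * D ^ (1000 * μ) ≤ D ^ 2 * D ^ (1000 * μ) := by gcongr
      _ = _ := by ring
  have e2 : (2 * d ^ (4 * b + 4) / N : ℝ) ≤ 1 / D := by
    refine le_trans ?_ (powX hD1 hN (e := 2 * (4 * b + 4) + 1) (by omega))
    gcongr
    calc (2 * d ^ (4 * b + 4) : ℝ) ≤ D * (D ^ 2) ^ (4 * b + 4) := by gcongr; linarith
      _ = _ := by rw [← pow_mul, pow_succ]; ring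
  have e3 : (d * (4 * d ^ 4 * 2 ^ R) / N : ℝ) ≤ 1 / D := by
    rw [div_le_div_iff₀ hN0 hD0]
    have h1 : (d * (4 * d ^ 4 * 2 ^ R) * D : ℝ) ≤ D ^ 2 * (4 * (D ^ 2) ^ 4 * 2 ^ R) * D := by gcongr
    have h2 : (D ^ 2 * (4 * (D ^ 2) ^ 4 * 2 ^ R) * D) * D ^ 9 = 4 * (2 ^ R * D ^ 20) := by ring
    have h3 : (16 : ℝ) ≤ D ^ 9 := by
      calc (16 : ℝ) ≤ D := by linarith
        _ = D ^ 1 := by ring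
        _ ≤ D ^ 9 := pow_le_pow_right₀ (by linarith) (by norm_num)
    have h4 : (D ^ 2 * (4 * (D ^ 2) ^ 4 * 2 ^ R) * D) * D ^ 9 ≤ N * D ^ 9 := by
      rw [h2]
      calc 4 * (2 ^ R * D ^ 20) ≤ 4 * (4 * N) := by gcongr
        _ = N * 16 := by ring
        _ ≤ N * D ^ 9 := by gcongr
    have := le_of_mul_le_mul_right h4 (by positivity)
    linarith
  unfold dlt
  rw [mul_add, add_div]
  have : 3 / D = 1 / D + 1 / D + 1 / D := by ring
  linarith

lemma est_beta (hμ : 1 ≤ μ) (hD1 : 100 ≤ D) (hDμ : 200 * (μ : ℝ) + 100 ≤ D) (hN : D ^ (2000 * μ + 1) ≤ N) (hd : (d : ℝ) ≤ D ^ 2)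
    (R l1 : ℕ) (hl : l1 = 92 * μ + 10) (hR : (2 : ℝ) ^ R * D ^ 20 ≤ 4 * N) (hRD : (R : ℝ) + 1 ≤ D) :
    2 * d * (R + 1) * beta d N R l1 ≤ 2 / D := by
  have hD0 : 0 < D := by linarith
  have hN0 : (0 : ℝ) < N := lt_of_lt_of_le (by positivity) hN
  have h1 : (l1 + 4 : ℝ) ≤ D := by rw [hl]; push_cast; linarith
  have hq : (2 * (2 * R + l1 + 4) ^ 2 : ℝ) ≤ D ^ 3 := by
    calc (2 * (2 * R + l1 + 4) ^ 2 : ℝ) ≤ 2 * (3 * D) ^ 2 := by gcongr; linarith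
      _ = 18 * D ^ 2 := by ring
      _ ≤ D * D ^ 2 := by gcongr; linarith
      _ = _ := by ring
  have hb : beta d N R l1 ≤ (4 * (D ^ 2) ^ 4 * 2 ^ R + 2 * (D ^ 2) ^ l1) * (D ^ 3 / N) := by
    unfold beta; gcongr
  have e1 : (2 * D ^ 2 * D * ((4 * (D ^ 2) ^ 4 * 2 ^ R) * (D ^ 3 / N)) : ℝ) ≤ 1 / D := by
    have : (2 * D ^ 2 * D * ((4 * (D ^ 2) ^ 4 * 2 ^ R) * (D ^ 3 / N)) : ℝ) = (8 * D ^ 14 * 2 ^ R) / N := by field_simp; ring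
    rw [this, div_le_div_iff₀ hN0 hD0]
    have h3 : (32 : ℝ) ≤ D ^ 5 := by
      calc (32 : ℝ) ≤ D := by linarith
        _ = D ^ 1 := by ring
        _ ≤ D ^ 5 := pow_le_pow_right₀ (by linarith) (by norm_num)
    have h4 : (8 * D ^ 14 * 2 ^ R * D) * D ^ 5 ≤ 1 * N * D ^ 5 := by
      calc (8 * D ^ 14 * 2 ^ R * D) * D ^ 5 = 8 * (2 ^ R * D ^ 20) := by ring
        _ ≤ 8 * (4 * (N : ℝ)) := by gcongr
        _ = 1 * (N : ℝ) * 32 := by ring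
        _ ≤ _ := by gcongr
    exact le_of_mul_le_mul_right h4 (by positivity)
  have e2 : (2 * D ^ 2 * D * ((2 * (D ^ 2) ^ l1) * (D ^ 3 / N)) : ℝ) ≤ 1 / D := by
    refine le_trans ?_ (powX hD1 hN (e := 2 * l1 + 7) (by omega))
    have : (2 * D ^ 2 * D * ((2 * (D ^ 2) ^ l1) * (D ^ 3 / N)) : ℝ) = 4 * D ^ (2 * l1 + 6) / N := by
      rw [← pow_mul]; field_simp; ring
    rw [this]
    gcongr
    calc 4 * D ^ (2 * l1 + 6) ≤ D * D ^ (2 * l1 + 6) := by gcongr; linarith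
      _ = _ := by ring
  calc 2 * d * (R + 1) * beta d N R l1 ≤ 2 * D ^ 2 * D * ((4 * (D ^ 2) ^ 4 * 2 ^ R + 2 * (D ^ 2) ^ l1) * (D ^ 3 / N)) := by
        gcongr
        exact beta_nonneg _ _ _ _
    _ = 2 * D ^ 2 * D * ((4 * (D ^ 2) ^ 4 * 2 ^ R) * (D ^ 3 / N)) + 2 * D ^ 2 * D * ((2 * (D ^ 2) ^ l1) * (D ^ 3 / N)) := by ring
    _ ≤ 1 / D + 1 / D := add_le_add e1 e2
    _ = _ := by ring

lemma est_exp (hD1 : 100 ≤ D) (hN0 : (0 : ℝ) < N) (hd : (d : ℝ) ≤ D ^ 2) (hNe : (N : ℝ) ≤ Real.exp D)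
    (q Q : ℝ) (hq : q = D ^ 23) (hQ : N ≤ 2 * Q * D ^ 20) :
    d * N ^ 3 * Real.exp (- (q * (Q / (2 * N)))) ≤ 1 / D := by
  have hD0 : 0 < D := by linarith
  have hDe : D ≤ Real.exp D := by have := Real.add_one_le_exp D; linarith
  have h1 : D ^ 3 / 4 ≤ q * (Q / (2 * N)) := by
    rw [hq]
    have : D ^ 23 * (Q / (2 * N)) = D ^ 3 * (2 * Q * D ^ 20) / (4 * N) := by field_simp; ring
    rw [this, div_le_div_iff₀ (by norm_num) (by positivity)]
    have := mul_le_mul_of_nonneg_left hQ (by positivity : 0 ≤ D ^ 3)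
    linarith
  have h2 : Real.exp (- (q * (Q / (2 * N)))) ≤ Real.exp (- (6 * D)) := by
    apply Real.exp_le_exp.2
    have : 24 * D ≤ D ^ 3 := by
      calc 24 * D ≤ (D * D) * D := by gcongr; nlinarith
        _ = _ := by ring
    linarith
  calc d * N ^ 3 * Real.exp (- (q * (Q / (2 * N)))) ≤ (Real.exp D) ^ 2 * (Real.exp D) ^ 3 * Real.exp (- (6 * D)) := by
        gcongr
        exact hd.trans (by gcongr)
    _ = Real.exp (- D) := by
        rw [← Real.exp_nat_mul, ← Real.exp_nat_mul, ← Real.exp_add, ← Real.exp_add]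
        congr 1; push_cast; ring
    _ ≤ 1 / D := by
        rw [Real.exp_neg, inv_eq_one_div]
        gcongr

end Est
end STI


namespace STI

open Classical in
theorem param_bound {n d μ lam : ℕ} (hodd : Odd n) (hde : Even d) (hd4 : 4 ≤ d)
    (hμ : 1 ≤ μ) (hDμ : 200 * μ + 100 ≤ 2 ^ μ) (hlam : lam + 1 ≤ 2 ^ μ) (hn1 : n < 2 ^ lam) (hn2 : 2 ^ lam ≤ 4 * (n - 1))
    (hd : d ≤ (2 ^ μ) ^ 2) (hN : (2 ^ μ) ^ (2000 * μ + 1) ≤ n - 1) (ε : ℝ) (hε₀ : 0 < ε) (hε₁ : ε < 1) (hε : 4 / ε ≤ 2 ^ μ) :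
    1 - (2 + 6 / ε) / 2 ^ μ ≤ tupleProb (n - 1) d
        (fun Mt => (1 - ε) * n ≤
          (Nat.card {r : Fin (n - 1) //
            (1 - ε) * (((n : ℝ) * d / 2) ^ (d / 2) / (Nat.factorial (d / 2) : ℝ))
              ≤ (Nat.card {M : SimpleGraph (Fin (n - 1)) //
                  IsInducedMatching (⨆ i, Mt i) M d ∧
                  HasStrongISTs (⨆ i, Mt i) M r (d / 4)} : ℝ)} : ℝ)) := by
  obtain ⟨M, hM⟩ := hodd
  obtain ⟨m, hm⟩ := hde
  obtain ⟨N, hNn⟩ : ∃ N, N = n - 1 := ⟨_, rfl⟩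
  have hnN : n = N + 1 := by omega
  rw [← hNn] at hn2 hN ⊢
  set D : ℝ := 2 ^ μ with hDdef
  have hDnat : ((2 ^ μ : ℕ) : ℝ) = D := by push_cast; rfl
  have hDμ' : 200 * (μ : ℝ) + 100 ≤ D := by rw [← hDnat]; exact_mod_cast hDμ
  have hD1 : 100 ≤ D := by have : (0 : ℝ) ≤ μ := Nat.cast_nonneg _
                           linarith
  have hD0 : 0 < D := by linarith
  have hN' : D ^ (2000 * μ + 1) ≤ N := by rw [← hDnat]; exact_mod_cast hN
  have hd' : (d : ℝ) ≤ D ^ 2 := by rw [← hDnat]; exact_mod_cast hd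
  have hN0' : (0 : ℝ) < N := lt_of_lt_of_le (by positivity) hN'
  -- crude nat bound
  have hpow : ∀ e, e ≤ 2000 * μ + 1 → (2 ^ μ) ^ e ≤ N := fun e he =>
    (Nat.pow_le_pow_right (by positivity) he).trans hN
  have hNlam : N ≤ 2 ^ lam := by omega
  have h45 : 50 * μ ≤ lam := by
    have h1 : 2 ^ (μ * 50) ≤ 2 ^ lam := by
      rw [pow_mul]; exact (hpow 50 (by omega)).trans hNlam
    have := (Nat.pow_le_pow_iff_right (by norm_num : 1 < 2)).1 h1
    omega
  obtain ⟨R, hR⟩ : ∃ R, lam = R + 20 * μ := ⟨lam - 20 * μ, by omega⟩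
  have hR1 : 30 * μ ≤ R := by omega
  have h2R : (2 : ℝ) ^ R * D ^ 20 = 2 ^ lam := by
    rw [hDdef, hR, ← pow_mul, ← pow_add]; congr 1; ring
  have hRD : (2 : ℝ) ^ R * D ^ 20 ≤ 4 * N := by rw [h2R]; exact_mod_cast hn2
  have hRl : (R : ℝ) + 1 ≤ D := by
    rw [← hDnat]
    have : R + 1 ≤ 2 ^ μ := by omega
    exact_mod_cast this
  have hD100 : 100 ≤ 2 ^ μ := by omega
  have hsmall : ∀ x, x ≤ (2 ^ μ) ^ 3 → x ≤ N := fun x hx => hx.trans (hpow 3 (by omega))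
  have hsq : 100 * (2 ^ μ) ^ 2 ≤ (2 ^ μ) ^ 3 := by
    rw [pow_succ (2 ^ μ) 2, mul_comm]; exact Nat.mul_le_mul_left _ hD100
  have hsq' : 100 * 2 ^ μ ≤ (2 ^ μ) ^ 2 := by
    rw [pow_two]; exact Nat.mul_le_mul_right _ hD100
  have hdltle := est_dlt (d := d) hμ hD1 hN' hd' (23 * μ + 1) R rfl hRD
  have hc : (1 - ε) * (((n : ℝ) * d / 2) ^ (d / 2) / (Nat.factorial (d / 2) : ℝ)) ≤
      ((N * m).choose m : ℝ) * (1 - dlt d N (23 * μ + 1) R (D ^ (1000 * μ))) := by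
    have hdm2 : d / 2 = m := by omega
    have hdm3 : (n : ℝ) * d / 2 = n * m := by
      have : (d : ℝ) = 2 * m := by rw [hm]; push_cast; ring
      rw [this]; ring
    rw [hdm2, hdm3]
    have hch := choose_lower n m (by omega) (by omega)
    rw [← hNn] at hch
    have hmn : (2 * m / n : ℝ) ≤ 1 / D := by
      have h1 : (2 * m : ℝ) = d := by rw [hm]; push_cast; ring
      rw [h1, hnN]
      refine le_trans ?_ (powX hD1 hN' (e := 2) (by omega))
      gcongr
      push_cast; linarith
    have h4 : 4 / D ≤ ε := by
      rw [div_le_iff₀ hD0]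
      rw [div_le_iff₀ hε₀] at hε
      linarith
    have hd0 : (0 : ℝ) ≤ 1 - 3 / D := by
      have : 3 / D ≤ 4 / D := by gcongr; norm_num
      linarith
    have hd1 : (0 : ℝ) ≤ 1 - 1 / D := by
      have : 1 / D ≤ 4 / D := by gcongr; norm_num
      linarith
    set F : ℝ := ((n : ℝ) * m) ^ m / m.factorial with hF
    have hF0 : 0 ≤ F := by positivity
    calc (1 - ε) * F ≤ (1 - 4 / D) * F := by gcongr
      _ ≤ ((1 - 1 / D) * (1 - 3 / D)) * F := by
          gcongr
          have : 0 ≤ 1 / D * (3 / D) := by positivity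
          have h5 : 4 / D = 1 / D + 3 / D := by ring
          nlinarith
      _ = (F * (1 - 1 / D)) * (1 - 3 / D) := by ring
      _ ≤ (F * (1 - 2 * m / n)) * (1 - 3 / D) := by gcongr
      _ ≤ ((N * m).choose m : ℝ) * (1 - 3 / D) := by gcongr
      _ ≤ _ := by gcongr
  have hNM : N = M + M := by omega
  have hdN : 2 * d ≤ N := hsmall _ (by omega)
  have hb1 : 23 * μ + 1 - 1 = 23 * μ := by omega
  have hfb := finite_bound (d := d) (N := N) m (by omega) (by omega) M hNM (by omega) (23 * μ + 1) R (92 * μ + 10) (by omega) (by omega)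
    (by omega) (by
      rw [hb1]
      have h1 : (2 ^ μ) ^ 24 ≤ 2 ^ (R - 1) := by
        rw [← pow_mul]; exact Nat.pow_le_pow_right (by norm_num) (by omega)
      have h2 : 2 ^ (23 * μ) = (2 ^ μ) ^ 23 := by rw [← pow_mul]; congr 1; ring
      rw [h2]
      have h3 : 100 * (2 ^ μ) ^ 23 ≤ (2 ^ μ) ^ 24 := by
        rw [pow_succ (2 ^ μ) 23, mul_comm]; exact Nat.mul_le_mul_left _ hD100
      have h4 : (2 ^ μ) ^ 2 ≤ (2 ^ μ) ^ 23 := Nat.pow_le_pow_right (by positivity) (by norm_num)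
      omega) (by
      have h1 : 2 ^ (R - 1) * 4 ≤ 2 ^ lam := by
        calc 2 ^ (R - 1) * 4 = 2 ^ (R - 1 + 2) := by rw [pow_add]; norm_num
          _ ≤ 2 ^ lam := Nat.pow_le_pow_right (by norm_num) (by omega)
      omega) (hsmall _ (by omega)) (hsmall _ (by omega)) (D ^ (1000 * μ)) (ε / 2 * N) (by positivity) (by positivity) _ hc
  have p1 := est_dense (d := d) hμ hD1 hDμ' hN' hd' (23 * μ + 1) rfl
  have p2 := est_untame (d := d) hμ hD1 hDμ' hd' (92 * μ + 10) rfl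
  have p3 : pR d N (23 * μ + 1) R (92 * μ + 10) ≤ 3 / D := by
    have e1 := est_beta (d := d) hμ hD1 hDμ' hN' hd' R (92 * μ + 10) rfl hRD hRl
    have hNe : (N : ℝ) ≤ Real.exp D := by
      have h1 : (N : ℝ) ≤ 2 ^ lam := by exact_mod_cast hNlam
      have h2 : (2 : ℝ) ≤ Real.exp 1 := by have := Real.add_one_le_exp (1 : ℝ); linarith
      have h3 : (lam : ℝ) ≤ D := by
        rw [← hDnat]
        have : lam ≤ 2 ^ μ := by omega
        exact_mod_cast this
      calc (N : ℝ) ≤ 2 ^ lam := h1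
        _ ≤ (Real.exp 1) ^ lam := by gcongr
        _ = Real.exp lam := by rw [← Real.exp_nat_mul]; simp
        _ ≤ Real.exp D := Real.exp_le_exp.2 h3
    have e2 := est_exp (d := d) hD1 hN0' hd' hNe (2 ^ (23 * μ + 1 - 1)) (2 ^ (R - 1))
      (by rw [hb1, hDdef, ← pow_mul]; congr 1; ring) (by
        have h1 : (2 : ℝ) * 2 ^ (R - 1) = 2 ^ R := by
          rw [← pow_succ']; congr 1; omega
        rw [h1, h2R]; exact_mod_cast hNlam)
    unfold pR
    have : 3 / D = 2 / D + 1 / D := by ring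
    linarith
  have p3' : N * pR d N (23 * μ + 1) R (92 * μ + 10) / (ε / 2 * N) ≤ 6 / ε / D := by
    have : N * pR d N (23 * μ + 1) R (92 * μ + 10) / (ε / 2 * N) = pR d N (23 * μ + 1) R (92 * μ + 10) * (2 / ε) := by
      field_simp
    rw [this]
    calc _ ≤ 3 / D * (2 / ε) := by gcongr
      _ = _ := by field_simp; ring
  have hmain := le_trans (show 1 - (2 + 6 / ε) / D ≤ _ by
    have : (2 + 6 / ε) / D = 1 / D + 1 / D + 6 / ε / D := by ring
    rw [this]
    exact sub_le_sub_left (add_le_add (add_le_add p1 p2) p3') 1) hfb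
  refine hmain.trans ?_
  rw [tupleProb_eq, tupleProb_eq]
  apply pr_mono'
  rintro ψ hψ ⟨h1, h2⟩
  refine ⟨h1, le_trans ?_ h2⟩
  have hnR : (n : ℝ) = N + 1 := by rw [hnN]; push_cast; ring
  rw [hnR]
  have h4 : 4 ≤ ε * N := by
    rw [div_le_iff₀ hε₀] at hε
    have : D ≤ N := by
      calc D = D ^ 1 := by ring
        _ ≤ D ^ (2000 * μ + 1) := pow_le_pow_right₀ (by linarith) (by omega)
        _ ≤ N := hN'
    have := mul_le_mul_of_nonneg_left this hε₀.le
    linarith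
  linarith
end STI


namespace STI
open Filter

noncomputable def lamF (n : ℕ) : ℕ := Nat.log 2 n + 1
noncomputable def muF (n : ℕ) : ℕ := Nat.clog 2 (lamF n + 1)

lemma tendsto_lamF : Tendsto lamF atTop atTop := by
  refine tendsto_atTop_mono (f := fun n => Nat.log 2 n) (fun n => Nat.le_succ _) ?_
  refine tendsto_atTop.2 (fun b => ?_)
  filter_upwards [eventually_ge_atTop (2 ^ b)] with n hn
  have h0 : 0 < 2 ^ b := by positivity
  exact (Nat.le_log_iff_pow_le (by norm_num) (by omega)).2 hn

lemma tendsto_muF : Tendsto muF atTop atTop := by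
  have h : Tendsto (fun l : ℕ => Nat.clog 2 (l + 1)) atTop atTop := by
    refine tendsto_atTop.2 (fun b => ?_)
    filter_upwards [eventually_ge_atTop (2 ^ b)] with n hn
    have h1 : n + 1 ≤ 2 ^ Nat.clog 2 (n + 1) := Nat.le_pow_clog (by norm_num) _
    exact (Nat.pow_le_pow_iff_right (by norm_num : 1 < 2)).1 (by omega)
  exact h.comp tendsto_lamF

lemma ev_mu (C : ℝ) : ∀ᶠ μ : ℕ in atTop, 1 ≤ μ ∧ 200 * μ + 100 ≤ 2 ^ μ ∧ μ * (2000 * μ + 1) + 10 ≤ 2 ^ (μ - 1) ∧ C ≤ 2 ^ μ := by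
  have hb : ∀ k, 32 ≤ k → (k + 1) * (2000 * (k + 1) + 1) + 10 ≤ 2 ^ k := by
    intro k hk
    induction k, hk using Nat.le_induction with
    | base => norm_num
    | succ k hk ih => rw [pow_succ]; nlinarith
  have hC : ∀ᶠ μ : ℕ in atTop, C ≤ (2 : ℝ) ^ μ :=
    (tendsto_pow_atTop_atTop_of_one_lt (by norm_num : (1 : ℝ) < 2)).eventually_ge_atTop C
  filter_upwards [hC, eventually_ge_atTop 33] with μ h1 h2
  obtain ⟨k, rfl⟩ : ∃ k, μ = k + 1 := ⟨μ - 1, by omega⟩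
  have := hb k (by omega)
  refine ⟨by omega, ?_, by simpa using this, h1⟩
  rw [pow_succ]
  nlinarith

end STI

theorem stmt13 (d : ℕ → ℕ) (hde : ∀ n, Even (d n))
    (hd : ∀ᶠ n : ℕ in Filter.atTop, 4 ≤ d n ∧ (d n : ℝ) ≤ (Real.log n) ^ 2)
    (ε : ℝ) (hε₀ : 0 < ε) (hε₁ : ε < 1) :
    Filter.Tendsto
      (fun n : ℕ => tupleProb (n - 1) (d n)
        (fun Mt => (1 - ε) * n ≤
          (Nat.card {r : Fin (n - 1) //
            (1 - ε) * (((n : ℝ) * d n / 2) ^ (d n / 2) / (Nat.factorial (d n / 2) : ℝ))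
              ≤ (Nat.card {M : SimpleGraph (Fin (n - 1)) //
                  IsInducedMatching (⨆ i, Mt i) M (d n) ∧
                  HasStrongISTs (⨆ i, Mt i) M r (d n / 4)} : ℝ)} : ℝ)))
      (Filter.atTop ⊓ Filter.principal {n : ℕ | Odd n}) (nhds 1) := by
  have hlow : Filter.Tendsto (fun n : ℕ => 1 - (2 + 6 / ε) / (2 : ℝ) ^ STI.muF n)
      (Filter.atTop ⊓ Filter.principal {n : ℕ | Odd n}) (nhds 1) := by
    refine Filter.Tendsto.mono_left ?_ inf_le_left
    have h1 : Filter.Tendsto (fun n : ℕ => (2 : ℝ) ^ STI.muF n) Filter.atTop Filter.atTop :=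
      (tendsto_pow_atTop_atTop_of_one_lt (by norm_num : (1 : ℝ) < 2)).comp STI.tendsto_muF
    have h2 := (h1.const_div_atTop (2 + 6 / ε)).const_sub 1
    simpa using h2
  refine tendsto_of_tendsto_of_tendsto_of_le_of_le' hlow tendsto_const_nhds ?_ ?_
  · rw [Filter.eventually_inf_principal]
    filter_upwards [hd, STI.tendsto_muF.eventually (STI.ev_mu (4 / ε)), Filter.eventually_ge_atTop 4] with n hdn hμ hn4 hodd
    obtain ⟨hd4, hdl⟩ := hdn
    obtain ⟨m1, m2, m3, m4⟩ := hμ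
    have hlam1 : STI.lamF n + 1 ≤ 2 ^ STI.muF n := Nat.le_pow_clog (by norm_num) _
    have hlam2 : 2 ^ (STI.muF n - 1) < STI.lamF n + 1 := by
      have := Nat.pow_pred_clog_lt_self (b := 2) (by norm_num) (x := STI.lamF n + 1) (by unfold STI.lamF; omega)
      exact this
    have hn1 : n < 2 ^ STI.lamF n := Nat.lt_pow_succ_log_self (by norm_num) _
    have hn2' : 2 ^ (STI.lamF n - 1) ≤ n := by
      have := Nat.pow_log_le_self 2 (x := n) (by omega)
      simpa [STI.lamF] using this
    generalize STI.lamF n = lam at *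
    generalize STI.muF n = μ at *
    have hn2 : 2 ^ lam ≤ 4 * (n - 1) := by
      have : 2 ^ lam = 2 * 2 ^ (lam - 1) := by rw [← pow_succ']; congr 1; omega
      omega
    refine STI.param_bound hodd (hde n) hd4 m1 m2 hlam1 hn1 hn2 ?_ ?_ ε hε₀ hε₁ m4
    · have hlog : Real.log n ≤ lam := by
        have h1 : (n : ℝ) ≤ 2 ^ lam := by exact_mod_cast hn1.le
        have h2 : (2 : ℝ) ≤ Real.exp 1 := by have := Real.add_one_le_exp (1 : ℝ); linarith
        have h0 : (0 : ℝ) < n := by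
          have : 0 < n := by omega
          exact_mod_cast this
        rw [Real.log_le_iff_le_exp h0]
        calc (n : ℝ) ≤ 2 ^ lam := h1
          _ ≤ (Real.exp 1) ^ lam := by gcongr
          _ = Real.exp lam := by rw [← Real.exp_nat_mul]; simp
      have h0 : 0 ≤ Real.log n := Real.log_natCast_nonneg n
      have h3 : (lam : ℝ) ≤ ((2 ^ μ : ℕ) : ℝ) := by
        have : lam ≤ 2 ^ μ := by omega
        exact_mod_cast this
      have : (d n : ℝ) ≤ (((2 ^ μ) ^ 2 : ℕ) : ℝ) := by
        rw [Nat.cast_pow]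
        refine hdl.trans ?_
        gcongr
        linarith
      exact_mod_cast this
    · have h1 : (2 ^ μ) ^ (2000 * μ + 1) ≤ 2 ^ (lam - 2) := by
        rw [← pow_mul]; exact Nat.pow_le_pow_right (by norm_num) (by omega)
      have h2 : 2 ^ lam = 4 * 2 ^ (lam - 2) := by
        calc 2 ^ lam = 2 ^ (lam - 2 + 2) := by congr 1; omega
          _ = _ := by rw [pow_add]; ring
      omega
  · refine Filter.Eventually.of_forall (fun n => ?_)
    rw [STI.tupleProb_eq]
    exact STI.pr_le_one _
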